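/- arXiv:2207.09681 — 5 statements merged into one kernel-verified Lean document; each statement's English description precedes it below -/
import Mathlib

section
/- Let n ≥ 46656. Among all simple graphs on n vertices containing no 3 pairwise edge-disjoint cycles (i.e., with φ ≤ 2), the graph K1∇(F₂ ∪ (n−6)K₁), obtained by joining a new vertex to the disjoint union of the friendship graph F₂ and n−6 isolated vertices, is the unique graph (up to isomorphism) maximizing the spectral radius of the adjacency matrix. -/
open scoped Classical

namespace PaperEDC

/-- `G` contains `m` pairwise edge-disjoint cycles. -/
def HasEDC {V : Type*} (G : SimpleGraph V) (m : ℕ) : Prop :=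
  ∃ c : Fin m → Σ v : V, G.Walk v v,
    (∀ i, (c i).2.IsCycle) ∧
    ∀ i j, i ≠ j → ∀ e ∈ (c i).2.edges, e ∉ (c j).2.edges

/-- `φ(G)`: the maximum number of pairwise edge-disjoint cycles in `G`. -/
noncomputable def phi {V : Type*} (G : SimpleGraph V) : ℕ := sSup {m | HasEDC G m}

/-- `K₁ ∇ H`: the join of a single new vertex with `H`. -/
def joinK1 {V : Type*} (H : SimpleGraph V) : SimpleGraph (Option V) :=
  SimpleGraph.fromRel fun a b => a = none ∨ ∃ u v, a = some u ∧ b = some v ∧ H.Adj u v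

/-- `t(G)`: the number of triangles of `G`. -/
noncomputable def triCount {V : Type*} (G : SimpleGraph V) : ℕ :=
  Nat.card {s : Finset V // G.IsNClique 3 s}

/-- A triangle-cactus: a connected graph in which every edge lies on a cycle and every
cycle is a triangle. -/
def IsTriangleCactus {V : Type*} (G : SimpleGraph V) : Prop :=
  G.Connected ∧
  (∀ e ∈ G.edgeSet, ∃ (v : V) (w : G.Walk v v), w.IsCycle ∧ e ∈ w.edges) ∧
  ∀ (v : V) (w : G.Walk v v), w.IsCycle → w.length = 3

/-- `e(G)`: the number of edges of `G`. -/
noncomputable def ecard {V : Type*} (G : SimpleGraph V) : ℕ := Nat.card G.edgeSet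

/-- `ρ(G)`: the spectral radius (largest adjacency eigenvalue) of `G`. -/
noncomputable def specRad {V : Type*} [Fintype V] (G : SimpleGraph V) : ℝ :=
  sSup {x : ℝ | ∃ f : V → ℝ, f ≠ 0 ∧ ∀ v : V, ∑ u : V, (if G.Adj v u then f u else 0) = x * f v}

/-- The disjoint union `F₂ ∪ (m-5)K₁`: the friendship graph `F₂` (two triangles sharing
exactly one vertex, the vertex `0`) on the first five vertices of `Fin m` together with
`m - 5` isolated vertices. -/
def f2PlusIsolated (m : ℕ) : SimpleGraph (Fin m) :=
  SimpleGraph.fromRel fun i j =>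
    (i.val = 0 ∧ 1 ≤ j.val ∧ j.val ≤ 4) ∨ (i.val = 1 ∧ j.val = 2) ∨ (i.val = 3 ∧ j.val = 4)

/-- inductive edge-disjoint non-acyclic pieces -/
def ED {V : Type*} : ℕ → SimpleGraph V → Prop
  | 0, _ => True
  | k + 1, G => ∃ K, K ≤ G ∧ ¬ K.IsAcyclic ∧ ED k (G \ K)

theorem ED.mono {V : Type*} {k : ℕ} : ∀ {G G' : SimpleGraph V}, G ≤ G' → ED k G → ED k G' := by
  induction k with
  | zero => intros; trivial
  | succ k ih =>
    rintro G G' h ⟨K, hK, hn, hE⟩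
    exact ⟨K, hK.trans h, hn, ih (sdiff_le_sdiff_right h) hE⟩

theorem HasEDC.of_edges {V : Type*} {G G' : SimpleGraph V} {m : ℕ}
    (h : ∀ (v : V) (w : G'.Walk v v), w.IsCycle → ∀ e ∈ w.edges, e ∈ G.edgeSet)
    (hE : HasEDC G' m) : HasEDC G m := by
  obtain ⟨c, hc, hd⟩ := hE
  refine ⟨fun i => ⟨(c i).1, (c i).2.transfer G (h _ _ (hc i))⟩, fun i => ?_, fun i j hij e he => ?_⟩
  · exact (hc i).transfer _
  · simp only [SimpleGraph.Walk.edges_transfer] at he ⊢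
    exact hd i j hij e he

theorem HasEDC.mono {V : Type*} {G G' : SimpleGraph V} {m : ℕ} (h : G' ≤ G)
    (hE : HasEDC G' m) : HasEDC G m := by
  refine HasEDC.of_edges (fun v w _ e he => ?_) hE
  exact SimpleGraph.edgeSet_mono h (w.edges_subset_edgeSet he)

theorem edges_tr {V : Type*} {G G' : SimpleGraph V} {u v : V} (p : G'.Walk u v)
    (h : ∀ e ∈ p.edges, e ∈ G.edgeSet) (e : Sym2 V) (he : e ∈ (p.transfer G h).edges) :
    e ∈ p.edges := by
  rwa [SimpleGraph.Walk.edges_transfer] at he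

theorem ED.hasEDC {V : Type*} {k : ℕ} : ∀ {G : SimpleGraph V}, ED k G → HasEDC G k := by
  induction k with
  | zero => intro G _; exact ⟨fun i => i.elim0, fun i => i.elim0, fun i => i.elim0⟩
  | succ k ih =>
    rintro G ⟨K, hK, hn, hE⟩
    obtain ⟨c, hc, hd⟩ := ih hE
    rw [SimpleGraph.IsAcyclic] at hn
    push Not at hn
    obtain ⟨v, w, hw⟩ := hn
    have h1 : ∀ e ∈ w.edges, e ∈ G.edgeSet := fun e he =>
      SimpleGraph.edgeSet_mono hK (w.edges_subset_edgeSet he)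
    have h2 : ∀ i, ∀ e ∈ (c i).2.edges, e ∈ G.edgeSet := fun i e he =>
      SimpleGraph.edgeSet_mono sdiff_le ((c i).2.edges_subset_edgeSet he)
    have h3 : ∀ i, ∀ e ∈ (c i).2.edges, e ∉ w.edges := fun i e he he' => by
      have a1 := (c i).2.edges_subset_edgeSet he
      have a2 := w.edges_subset_edgeSet he'
      rw [SimpleGraph.edgeSet_sdiff] at a1
      exact a1.2 a2
    refine ⟨Fin.cons ⟨v, w.transfer G h1⟩ (fun i => ⟨(c i).1, (c i).2.transfer G (h2 i)⟩),
      fun i => ?_, fun i j hij => ?_⟩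
    · refine Fin.cases ?_ (fun i => ?_) i
      · exact hw.transfer h1
      · exact (hc i).transfer (h2 i)
    · revert hij
      refine Fin.cases ?_ (fun i => ?_) i <;> refine Fin.cases ?_ (fun j => ?_) j
      · intro h; exact absurd rfl h
      · intro _ e he he'
        exact h3 j e (edges_tr _ (h2 j) e he') (edges_tr _ h1 e he)
      · intro _ e he he'
        exact h3 i e (edges_tr _ (h2 i) e he) (edges_tr _ h1 e he')
      · intro hij e he he'
        exact hd i j (fun h => hij (by rw [h])) e (edges_tr _ (h2 i) e he) (edges_tr _ (h2 j) e he')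

theorem HasEDC.card_le {V : Type*} [Fintype V] {G : SimpleGraph V} {m : ℕ}
    (h : HasEDC G m) : m ≤ Fintype.card (Sym2 V) := by
  obtain ⟨c, hc, hd⟩ := h
  have : ∀ i, ∃ e, e ∈ (c i).2.edges := fun i => by
    have h1 := (hc i).three_le_length
    rw [← SimpleGraph.Walk.length_edges] at h1
    exact List.exists_mem_of_length_pos (by omega)
  choose f hf using this
  have hinj : Function.Injective f := by
    intro i j hij
    by_contra hne
    exact hd i j hne (f i) (hf i) (hij ▸ hf j)
  simpa using Fintype.card_le_of_injective f hinj

theorem not_hasEDC_of_phi {V : Type*} [Fintype V] {G : SimpleGraph V} (h : phi G ≤ 2) :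
    ¬ HasEDC G 3 := by
  intro h3
  have : 3 ≤ phi G := le_csSup ⟨_, fun m hm => HasEDC.card_le hm⟩ h3
  omega

theorem HasEDC.anti {V : Type*} {G : SimpleGraph V} {m k : ℕ} (hk : k ≤ m)
    (h : HasEDC G m) : HasEDC G k := by
  obtain ⟨c, hc, hd⟩ := h
  refine ⟨fun i => c (Fin.castLE hk i), fun i => hc _, fun i j hij => hd _ _ ?_⟩
  intro h; exact hij (Fin.castLE_injective hk h)

theorem phi_le_of_not {V : Type*} {G : SimpleGraph V} (h : ¬ HasEDC G 3) : phi G ≤ 2 := by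
  have h0 : HasEDC G 0 := ⟨fun i => i.elim0, fun i => i.elim0, fun i => i.elim0⟩
  refine csSup_le ⟨0, h0⟩ fun m hm => ?_
  by_contra hlt
  exact h (HasEDC.anti (by omega) hm)

/-- suppression inverse: subdividing the edge `ab` by `v`. -/
theorem lift_not_acyclic {V : Type*} {M : SimpleGraph V} {a b v : V} (hva : v ≠ a) (hvb : v ≠ b)
    (hab : a ≠ b)
    (hv : ∀ w, ¬ M.Adj v w) (hM : ¬ M.IsAcyclic) :
    ¬ ((M \ SimpleGraph.edge a b) ⊔ SimpleGraph.edge a v ⊔ SimpleGraph.edge v b).IsAcyclic := by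
  intro hac
  have h1 : (M \ SimpleGraph.edge a b).IsAcyclic :=
    hac.anti (le_sup_left.trans le_sup_left)
  by_cases hr : (M \ SimpleGraph.edge a b).Reachable a b
  · rw [SimpleGraph.isAcyclic_iff_forall_adj_isBridge] at hac
    have hadjv : ((M \ SimpleGraph.edge a b) ⊔ SimpleGraph.edge a v ⊔ SimpleGraph.edge v b).Adj a v := by
      simp [SimpleGraph.edge_adj, hva.symm]
    have hb := hac hadjv
    rw [SimpleGraph.isBridge_iff] at hb
    apply hb
    have hle : (M \ SimpleGraph.edge a b) ≤ ((M \ SimpleGraph.edge a b) ⊔ SimpleGraph.edge a v ⊔ SimpleGraph.edge v b) \ SimpleGraph.fromEdgeSet {s(a, v)} := by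
      intro x y hxy
      have h2 : x ≠ v := by rintro rfl; exact hv _ hxy.1
      have h3 : y ≠ v := by rintro rfl; exact hv _ hxy.1.symm
      refine ⟨Or.inl (Or.inl hxy), ?_⟩
      simp [h2, h3]
    refine (hr.mono hle).trans (SimpleGraph.Adj.reachable ?_)
    refine ⟨Or.inr ?_, ?_⟩
    · simp [SimpleGraph.edge_adj, hvb.symm]
    · simp [hab.symm, hvb.symm]
  · have := SimpleGraph.IsAcyclic.sup_edge_of_not_reachable hr h1
    apply hM
    refine this.anti ?_
    intro x y hxy
    by_cases h : (SimpleGraph.edge a b).Adj x y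
    · exact Or.inr h
    · exact Or.inl ⟨hxy, h⟩

theorem ED.lift {V : Type*} {a b v : V} (hva : v ≠ a) (hvb : v ≠ b) (hab : a ≠ b) {k : ℕ} :
    ∀ {M : SimpleGraph V}, (∀ w, ¬ M.Adj v w) → ED k M → M.Adj a b →
    ED k ((M \ SimpleGraph.edge a b) ⊔ SimpleGraph.edge a v ⊔ SimpleGraph.edge v b) := by
  induction k with
  | zero => intros; trivial
  | succ k ih =>
    rintro M hv ⟨K, hK, hn, hE⟩ hadj
    have hvK : ∀ w, ¬ K.Adj v w := fun w h => hv w (hK h)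
    by_cases hKab : K.Adj a b
    · refine ⟨(K \ SimpleGraph.edge a b) ⊔ SimpleGraph.edge a v ⊔ SimpleGraph.edge v b, ?_,
        lift_not_acyclic hva hvb hab hvK hn, ?_⟩
      · gcongr
      · refine hE.mono ?_
        intro x y hxy
        have h2 : x ≠ v := by rintro rfl; exact hv _ hxy.1
        have h3 : y ≠ v := by rintro rfl; exact hv _ hxy.1.symm
        have hne : ¬ (SimpleGraph.edge a b).Adj x y := by
          rw [SimpleGraph.edge_adj]
          rintro ⟨⟨rfl, rfl⟩ | ⟨rfl, rfl⟩, _⟩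
          · exact hxy.2 hKab
          · exact hxy.2 hKab.symm
        refine ⟨Or.inl (Or.inl ⟨hxy.1, hne⟩), ?_⟩
        rintro ((h | h) | h)
        · exact hxy.2 h.1
        · rw [SimpleGraph.edge_adj] at h; tauto
        · rw [SimpleGraph.edge_adj] at h; tauto
    · have hle : K ≤ M \ SimpleGraph.edge a b := by
        intro x y hxy
        refine ⟨hK hxy, ?_⟩
        rw [SimpleGraph.edge_adj]
        rintro ⟨⟨rfl, rfl⟩ | ⟨rfl, rfl⟩, _⟩
        · exact hKab hxy
        · exact hKab hxy.symm
      refine ⟨K, hle.trans (le_sup_left.trans le_sup_left), hn, ?_⟩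
      refine (ih (M := M \ K) (fun w h => hv w h.1) hE ⟨hadj, hKab⟩).mono ?_
      rintro x y ((h | h) | h)
      · exact ⟨Or.inl (Or.inl ⟨h.1.1, h.2⟩), h.1.2⟩
      · refine ⟨Or.inl (Or.inr h), fun hk => ?_⟩
        rw [SimpleGraph.edge_adj] at h
        rcases h with ⟨⟨rfl, rfl⟩ | ⟨rfl, rfl⟩, _⟩
        · exact hvK _ hk.symm
        · exact hvK _ hk
      · refine ⟨Or.inr h, fun hk => ?_⟩
        rw [SimpleGraph.edge_adj] at h
        rcases h with ⟨⟨rfl, rfl⟩ | ⟨rfl, rfl⟩, _⟩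
        · exact hvK _ hk
        · exact hvK _ hk.symm

open SimpleGraph in
theorem uniq_path {V : Type*} [Fintype V] {G : SimpleGraph V}
    (hA : ∀ K ≤ G, K.edgeSet.ncard ≤ 12 → K.IsAcyclic) {x y : V} (p q : G.Walk x y)
    (hp : p.IsPath) (hq : q.IsPath) (hpl : p.length ≤ 6) (hql : q.length ≤ 6) : p = q := by
  let E : Finset (Sym2 V) := p.edges.toFinset ∪ q.edges.toFinset
  have hE : E.card ≤ 12 := by
    refine (Finset.card_union_le _ _).trans ?_
    have h1 := p.edges.toFinset_card_le
    have h2 := q.edges.toFinset_card_le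
    rw [Walk.length_edges] at h1 h2
    omega
  let K : SimpleGraph V := fromEdgeSet (E : Set (Sym2 V))
  have hEG : (E : Set (Sym2 V)) ⊆ G.edgeSet := by
    intro e he
    simp only [E, Finset.coe_union, List.coe_toFinset, Set.mem_union, Set.mem_ofPred_eq] at he
    rcases he with h | h
    · exact p.edges_subset_edgeSet h
    · exact q.edges_subset_edgeSet h
  have hKE : K.edgeSet = (E : Set (Sym2 V)) := by
    rw [edgeSet_fromEdgeSet]
    ext e
    simp only [Set.mem_sdiff]
    constructor
    · exact fun h => h.1
    · intro h
      exact ⟨h, G.not_isDiag_of_mem_edgeSet (hEG h)⟩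
  have hK : K ≤ G := by
    rw [← edgeSet_subset_edgeSet, hKE]; exact hEG
  have hac := hA K hK (by rw [hKE, Set.ncard_coe_finset]; exact hE)
  have h1 : ∀ e ∈ p.edges, e ∈ K.edgeSet := fun e he => by
    rw [hKE]; simp [E, he]
  have h2 : ∀ e ∈ q.edges, e ∈ K.edgeSet := fun e he => by
    rw [hKE]; simp [E, he]
  have := hac.path_unique ⟨p.transfer K h1, hp.transfer h1⟩ ⟨q.transfer K h2, hq.transfer h2⟩
  have h3 := congrArg (fun z : K.Path x y => (z : K.Walk x y).support) this
  simp only [Walk.support_transfer] at h3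
  exact Walk.ext_support h3

open SimpleGraph in
theorem moore {V : Type*} [Fintype V] (G : SimpleGraph V) (S : Finset V)
    (hS : ∀ a b, G.Adj a b → a ∈ S) (r : V) (hr : r ∈ S) (hdeg : ∀ v ∈ S, 3 ≤ G.degree v)
    (hcard : S.card < 64) : ∃ K ≤ G, ¬ K.IsAcyclic ∧ K.edgeSet.ncard ≤ 12 := by
  by_contra hcon
  have hA : ∀ K ≤ G, K.edgeSet.ncard ≤ 12 → K.IsAcyclic := by
    intro K hK hn
    by_contra h
    exact hcon ⟨K, hK, h, hn⟩
  let s : ℕ → Finset V := fun i => Finset.univ.filter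
    (fun v => ∃ p : G.Walk r v, p.IsPath ∧ p.length = i)
  have hsS : ∀ i, s i ⊆ S := by
    intro i v hv
    simp only [s, Finset.mem_filter, Finset.mem_univ, true_and] at hv
    obtain ⟨p, -, -⟩ := hv
    by_cases h : p.Nil
    · exact h.eq ▸ hr
    · exact hS _ _ (p.adj_penultimate h).symm
  have hstep : ∀ i, i + 1 ≤ 6 → 2 * (s i).card ≤ (s (i + 1)).card := by
    intro i hi
    have hmem : ∀ v, v ∈ s i → ∃ p : G.Walk r v, p.IsPath ∧ p.length = i := by
      intro v hv
      simpa only [s, Finset.mem_filter, Finset.mem_univ, true_and] using hv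
    choose! pen hpen using (fun v hv => (⟨(hmem v hv).choose.penultimate,
      (hmem v hv).choose, (hmem v hv).choose_spec.1, (hmem v hv).choose_spec.2, rfl⟩ :
      ∃ w : V, ∃ p : G.Walk r v, p.IsPath ∧ p.length = i ∧ p.penultimate = w) :
      ∀ v, v ∈ s i → ∃ w : V, ∃ p : G.Walk r v, p.IsPath ∧ p.length = i ∧ p.penultimate = w)
    let N : V → Finset V := fun v => (G.neighborFinset v).erase (pen v)
    have hpath : ∀ v ∈ s i, ∀ w ∈ N v, ∃ p : G.Walk r w, p.IsPath ∧ p.length = i + 1 ∧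
        p.penultimate = v := by
      intro v hv w hw
      obtain ⟨p, hp, hl, hpe⟩ := hpen v hv
      simp only [N, Finset.mem_erase, mem_neighborFinset] at hw
      obtain ⟨hne, hadj⟩ := hw
      have hns : w ∉ p.support := by
        intro hin
        have e1 : p.dropUntil w hin = Walk.cons hadj.symm Walk.nil := by
          refine uniq_path hA _ _ (hp.dropUntil hin) ?_ ?_ ?_
          · simp [hadj.ne']
          · exact (p.length_dropUntil_le_length hin).trans (by omega)
          · simp
        have e2 := p.take_spec hin
        rw [e1, ← Walk.concat_eq_append] at e2
        have e3 := congrArg Walk.penultimate e2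
        rw [Walk.penultimate_concat] at e3
        exact hne (e3.trans hpe)
      exact ⟨p.concat hadj, hp.concat hns hadj, by simp [hl], by simp⟩
    have hdisj : ((s i : Finset V) : Set V).PairwiseDisjoint N := by
      intro v hv v' hv' hne
      rw [Function.onFun, Finset.disjoint_left]
      intro w hw hw'
      obtain ⟨p, hp, hl, hpe⟩ := hpath v hv w hw
      obtain ⟨q, hq, hl', hqe⟩ := hpath v' hv' w hw'
      have := uniq_path hA p q hp hq (by omega) (by omega)
      rw [this] at hpe
      exact hne (hpe.symm.trans hqe)
    have hsub : (s i).biUnion N ⊆ s (i + 1) := by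
      intro w hw
      rw [Finset.mem_biUnion] at hw
      obtain ⟨v, hv, hw⟩ := hw
      obtain ⟨p, hp, hl, hpe⟩ := hpath v hv w hw
      simp only [s, Finset.mem_filter, Finset.mem_univ, true_and]
      exact ⟨p, hp, hl⟩
    have hc := Finset.card_le_card hsub
    rw [Finset.card_biUnion hdisj] at hc
    have hN : ∀ v ∈ s i, 2 ≤ (N v).card := by
      intro v hv
      have h1 := hdeg v (hsS i hv)
      have h2 := Finset.pred_card_le_card_erase (s := G.neighborFinset v) (a := pen v)
      rw [card_neighborFinset_eq_degree] at h2
      simp only [N]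
      omega
    have h3 := Finset.card_nsmul_le_sum (s i) (fun v => (N v).card) 2 hN
    rw [smul_eq_mul] at h3
    omega
  have h0 : 1 ≤ (s 0).card := by
    refine Finset.card_pos.mpr ⟨r, ?_⟩
    simp only [s, Finset.mem_filter, Finset.mem_univ, true_and]
    exact ⟨Walk.nil, Walk.IsPath.nil, rfl⟩
  have h1 := hstep 0 (by norm_num)
  have h2 := hstep 1 (by norm_num)
  have h3 := hstep 2 (by norm_num)
  have h4 := hstep 3 (by norm_num)
  have h5 := hstep 4 (by norm_num)
  have h6 := hstep 5 (by norm_num)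
  have h7 := Finset.card_le_card (hsS 6)
  simp only [Nat.reduceAdd] at *
  omega

open SimpleGraph in
theorem ncard_sdiff_ge {V : Type*} [Fintype V] (G K : SimpleGraph V) :
    G.edgeSet.ncard ≤ (G \ K).edgeSet.ncard + K.edgeSet.ncard := by
  have h : G.edgeSet ⊆ (G \ K).edgeSet ∪ K.edgeSet := by
    rw [edgeSet_sdiff]
    intro e he
    by_cases h : e ∈ K.edgeSet
    · exact Or.inr h
    · exact Or.inl ⟨he, h⟩
  exact (Set.ncard_le_ncard h (Set.toFinite _)).trans (Set.ncard_union_le _ _)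

open SimpleGraph in
theorem ncard_delInc {V : Type*} [Fintype V] (G : SimpleGraph V) (v : V) :
    G.edgeSet.ncard = (G.deleteIncidenceSet v).edgeSet.ncard + G.degree v := by
  have h1 : (G.incidenceSet v).ncard = G.degree v := by
    rw [← card_incidenceSet_eq_degree, Set.ncard_eq_toFinset_card', Set.toFinset_card]
  rw [edgeSet_deleteIncidenceSet, ← h1]
  exact (Set.ncard_sdiff_add_ncard_of_subset (G.incidenceSet_subset v) (Set.toFinite _)).symm

open SimpleGraph in
theorem sum_deg_ncard {V : Type*} [Fintype V] (G : SimpleGraph V) :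
    ∑ v, G.degree v = 2 * G.edgeSet.ncard := by
  rw [G.sum_degrees_eq_twice_card_edges, Set.ncard_eq_toFinset_card']
  rfl

open SimpleGraph in
theorem ED_of_edges {V : Type*} [Fintype V] (k : ℕ) (hk : k ≤ 3) : ∀ (N : ℕ) (G : SimpleGraph V)
    (S : Finset V), G.edgeSet.ncard + S.card ≤ N → (∀ a b, G.Adj a b → a ∈ S) →
    S.card + 12 * k ≤ G.edgeSet.ncard + 11 → ED k G := by
  induction k with
  | zero => intros; trivial
  | succ k ihk =>
    replace ihk := fun (G : SimpleGraph V) (S : Finset V) => ihk (by omega) _ G S le_rfl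
    intro N
    induction N with
    | zero => intro G S h1 h2 h3; omega
    | succ N ihN =>
      intro G S hN hS he
      by_cases ha : S.card + 12 * k + 1 < G.edgeSet.ncard
      · obtain ⟨e, hemem⟩ : G.edgeSet.Nonempty := by
          rw [← Set.ncard_pos]; omega
        have h1 : (G.deleteEdges {e}).edgeSet.ncard + 1 = G.edgeSet.ncard := by
          rw [edgeSet_deleteEdges]
          exact Set.ncard_sdiff_singleton_add_one hemem
        refine (ihN (G.deleteEdges {e}) S (by omega) (fun a b h => hS a b ?_) (by omega)).mono
          (deleteEdges_le _)
        exact deleteEdges_le _ h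
      by_cases hb : ∃ v ∈ S, G.degree v ≤ 1
      · obtain ⟨v, hv, hd⟩ := hb
        have h1 := ncard_delInc G v
        have h2 := Finset.card_erase_add_one hv
        refine (ihN (G.deleteIncidenceSet v) (S.erase v) (by omega) (fun a b h => ?_)
          (by omega)).mono (deleteIncidenceSet_le _ _)
        rw [deleteIncidenceSet_adj] at h
        exact Finset.mem_erase.mpr ⟨h.2.1, hS a b h.1⟩
      by_cases hc : ∃ v ∈ S, G.degree v = 2
      · obtain ⟨v, hv, hd⟩ := hc
        have h1 := ncard_delInc G v
        have h2 := Finset.card_erase_add_one hv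
        rw [← card_neighborFinset_eq_degree, Finset.card_eq_two] at hd
        obtain ⟨a, b, hab, hnb⟩ := hd
        have hd : G.degree v = 2 := by
          rw [← card_neighborFinset_eq_degree, hnb, Finset.card_pair hab]
        have hadj : ∀ w, G.Adj v w ↔ w = a ∨ w = b := by
          intro w
          rw [← mem_neighborFinset, hnb]; simp
        have hva : G.Adj v a := (hadj a).2 (Or.inl rfl)
        have hvb : G.Adj v b := (hadj b).2 (Or.inr rfl)
        by_cases hGab : G.Adj a b
        · let K : SimpleGraph V := edge a b ⊔ edge a v ⊔ edge v b
          have hKab : K.Adj a b := Or.inl (Or.inl (by simp [edge_adj, hab]))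
          have hKav : K.Adj a v := Or.inl (Or.inr (by simp [edge_adj, hva.ne']))
          have hKbv : K.Adj b v := Or.inr (by simp [edge_adj, hvb.ne'])
          have hK : K ≤ G := by
            refine sup_le (sup_le ?_ ?_) ?_
            · exact (edge_le_iff G).2 (Or.inr hGab)
            · exact (edge_le_iff G).2 (Or.inr hva.symm)
            · exact (edge_le_iff G).2 (Or.inr hvb)
          have hna : ¬ K.IsAcyclic := by
            intro h
            exact h.cliqueFree (n := 3) le_rfl {a, b, v}
              (is3Clique_triple_iff.2 ⟨hKab, hKav, hKbv⟩)
          have hKc : K.edgeSet.ncard ≤ 3 := by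
            have hsub : K.edgeSet ⊆ (({s(a, b), s(a, v), s(v, b)} : Finset (Sym2 V)) : Set (Sym2 V)) := by
              intro e
              induction e with
              | _ x y =>
                intro h
                rw [mem_edgeSet] at h
                simp only [Finset.coe_insert, Finset.coe_singleton, Set.mem_insert_iff,
                  Set.mem_singleton_iff, Sym2.eq_iff]
                rcases h with (h | h) | h <;> rw [edge_adj] at h <;> tauto
            refine (Set.ncard_le_ncard hsub (Set.toFinite _)).trans ?_
            rw [Set.ncard_coe_finset]
            exact Finset.card_le_three
          have h4 := ncard_sdiff_ge G K
          refine ⟨K, hK, hna, ihk _ (S.erase v) (fun x y h => ?_) (by omega)⟩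
          refine Finset.mem_erase.mpr ⟨?_, hS x y h.1⟩
          rintro rfl
          rcases (hadj y).1 h.1 with rfl | rfl
          · exact h.2 hKav.symm
          · exact h.2 hKbv.symm
        · let M : SimpleGraph V := G.deleteIncidenceSet v ⊔ edge a b
          have hMadj : ∀ x y, M.Adj x y ↔ (G.Adj x y ∧ x ≠ v ∧ y ≠ v) ∨ (edge a b).Adj x y := by
            intro x y
            rw [← deleteIncidenceSet_adj]; rfl
          have hMv : ∀ w, ¬ M.Adj v w := by
            intro w h
            rw [hMadj, edge_adj] at h
            have := hva.ne
            have := hvb.ne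
            tauto
          have hMab : M.Adj a b := (hMadj a b).2 (Or.inr (by simp [edge_adj, hab]))
          have hMc : (G.deleteIncidenceSet v).edgeSet.ncard + 1 = M.edgeSet.ncard := by
            have : M.edgeSet = insert s(a, b) (G.deleteIncidenceSet v).edgeSet := by
              simp only [M, edgeSet_sup, edgeSet_edge_of_ne hab]
              exact Set.union_singleton
            rw [this, Set.ncard_insert_of_notMem]
            rw [mem_edgeSet, deleteIncidenceSet_adj]
            tauto
          have hE : ED (k + 1) M := by
            refine ihN M (S.erase v) (by omega) (fun x y h => ?_) (by omega)
            refine Finset.mem_erase.mpr ⟨?_, ?_⟩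
            · rintro rfl; exact hMv _ h
            · rw [hMadj, edge_adj] at h
              rcases h with h | ⟨⟨rfl, rfl⟩ | ⟨rfl, rfl⟩, _⟩
              · exact hS x y h.1
              · exact hS _ _ hva.symm
              · exact hS _ _ hvb.symm
          refine (ED.lift hva.ne hvb.ne hab hMv hE hMab).mono ?_
          refine sup_le (sup_le ?_ ?_) ?_
          · intro x y h
            rcases (hMadj x y).1 h.1 with h' | h'
            · exact h'.1
            · exact absurd h' h.2
          · exact (edge_le_iff G).2 (Or.inr hva.symm)
          · exact (edge_le_iff G).2 (Or.inr hvb)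
      · have hdeg : ∀ v ∈ S, 3 ≤ G.degree v := by
          intro v hv
          by_contra h
          have : ¬ G.degree v ≤ 1 := fun h' => hb ⟨v, hv, h'⟩
          exact hc ⟨v, hv, by omega⟩
        have h1 := sum_deg_ncard G
        have h2 := Finset.card_nsmul_le_sum S (fun v => G.degree v) 3 hdeg
        have h3 : ∑ v ∈ S, G.degree v ≤ ∑ v, G.degree v :=
          Finset.sum_le_sum_of_subset (Finset.subset_univ S)
        rw [smul_eq_mul] at h2
        obtain ⟨e, hemem⟩ : G.edgeSet.Nonempty := by
          rw [← Set.ncard_pos]; omega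
        obtain ⟨r, hr⟩ : ∃ r, r ∈ S := by
          induction e with
          | _ x y => exact ⟨x, hS x y hemem⟩
        obtain ⟨K, hK, hna, hKc⟩ := moore G S hS r hr hdeg (by omega)
        have h4 := ncard_sdiff_ge G K
        exact ⟨K, hK, hna, ihk _ S (fun x y h => hS x y h.1) (by omega)⟩

open SimpleGraph in
theorem edge_bound {V : Type*} [Fintype V] {G : SimpleGraph V} (hG : ¬ HasEDC G 3)
    (S : Finset V) :
    ∑ v ∈ S, ∑ w ∈ S, (if G.Adj v w then (1 : ℝ) else 0) ≤ 2 * ((S.card : ℝ) + 24) := by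
  obtain ⟨R, hRa⟩ : ∃ R : SimpleGraph V, ∀ a b, R.Adj a b ↔ G.Adj a b ∧ a ∈ S ∧ b ∈ S := ⟨
    { Adj := fun a b => G.Adj a b ∧ a ∈ S ∧ b ∈ S
      symm := ⟨fun a b h => ⟨h.1.symm, h.2.2, h.2.1⟩⟩
      loopless := ⟨fun a h => G.loopless.irrefl a h.1⟩ }, fun a b => Iff.rfl⟩
  have hR : R ≤ G := fun a b h => ((hRa a b).1 h).1
  have h1 : R.edgeSet.ncard ≤ S.card + 24 := by
    by_contra h
    exact hG ((ED_of_edges 3 le_rfl _ R S le_rfl (fun a b h => ((hRa a b).1 h).2.1) (by omega)).hasEDC.mono hR)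
  have h2 := sum_deg_ncard R
  have h3 : (∑ v, (R.degree v : ℝ)) = 2 * (R.edgeSet.ncard : ℝ) := by exact_mod_cast h2
  have h4 : ∑ v ∈ S, ∑ w ∈ S, (if G.Adj v w then (1 : ℝ) else 0) ≤ ∑ v, (R.degree v : ℝ) := by
    refine (Finset.sum_le_sum fun v hv => ?_).trans
      (Finset.sum_le_sum_of_subset_of_nonneg (Finset.subset_univ S) fun _ _ _ => by positivity)
    rw [← card_neighborFinset_eq_degree, neighborFinset_eq_filter, Finset.sum_boole]
    gcongr
    intro w hw
    simp only [Finset.mem_filter] at hw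
    simp only [Finset.mem_filter, Finset.mem_univ, true_and]
    exact (hRa v w).2 ⟨hw.2, hv, hw.1⟩
  have h5 : (R.edgeSet.ncard : ℝ) ≤ (S.card : ℝ) + 24 := by exact_mod_cast h1
  linarith

/-- action of the adjacency operator -/
noncomputable def adjOp {V : Type*} [Fintype V] (G : SimpleGraph V) (f : V → ℝ) (v : V) : ℝ :=
  ∑ u : V, (if G.Adj v u then f u else 0)

/-- the bilinear form of the adjacency operator -/
noncomputable def bil {V : Type*} [Fintype V] (G : SimpleGraph V) (f g : V → ℝ) : ℝ :=
  ∑ v : V, f v * adjOp G g v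

theorem bil_symm {V : Type*} [Fintype V] (G : SimpleGraph V) (f g : V → ℝ) :
    bil G f g = bil G g f := by
  simp only [bil, adjOp, Finset.mul_sum]
  rw [Finset.sum_comm]
  refine Finset.sum_congr rfl fun v _ => Finset.sum_congr rfl fun u _ => ?_
  by_cases h : G.Adj v u
  · simp [h, h.symm, mul_comm]
  · have h' : ¬ G.Adj u v := fun h' => h h'.symm
    simp [h, h']

theorem adjOp_add_smul {V : Type*} [Fintype V] (G : SimpleGraph V) (f g : V → ℝ) (t : ℝ) (v : V) :
    adjOp G (f + t • g) v = adjOp G f v + t * adjOp G g v := by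
  simp only [adjOp, Finset.mul_sum, ← Finset.sum_add_distrib]
  refine Finset.sum_congr rfl fun u _ => ?_
  split_ifs <;> simp

theorem bil_expand {V : Type*} [Fintype V] (G : SimpleGraph V) (f g : V → ℝ) (t : ℝ) :
    bil G (f + t • g) (f + t • g) = bil G f f + 2 * t * bil G g f + t ^ 2 * bil G g g := by
  have h := bil_symm G f g
  have : bil G (f + t • g) (f + t • g) = bil G f f + t * bil G g f + t * bil G f g
      + t ^ 2 * bil G g g := by
    simp only [bil, adjOp_add_smul, Finset.mul_sum, ← Finset.sum_add_distrib, Pi.add_apply,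
      Pi.smul_apply, smul_eq_mul]
    refine Finset.sum_congr rfl fun u _ => ?_
    ring
  rw [this, h]; ring

theorem bil_single {V : Type*} [Fintype V] (G : SimpleGraph V) (f : V → ℝ) (v : V) :
    bil G (Pi.single v 1) f = adjOp G f v := by
  simp only [bil]
  rw [Finset.sum_eq_single v] <;> simp +contextual [Pi.single_apply]

theorem eig_of_max {V : Type*} [Fintype V] (G : SimpleGraph V) (μ : ℝ)
    (hμ : ∀ f, bil G f f ≤ μ * ∑ v, f v ^ 2) (x : V → ℝ) (hx : bil G x x = μ * ∑ v, x v ^ 2)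
    (v : V) : adjOp G x v = μ * x v := by
  set y : V → ℝ := Pi.single v 1 with hy
  have hy2 : ∑ w, y w ^ 2 = 1 := by
    rw [Finset.sum_eq_single v] <;> simp +contextual [hy, Pi.single_apply]
  have hC : 0 ≤ μ - bil G y y := by
    have := hμ y
    rw [hy2] at this; linarith
  have hexp : ∀ t : ℝ, ∑ w, (x + t • y) w ^ 2 = ∑ w, x w ^ 2 + 2 * t * x v + t ^ 2 := by
    intro t
    have h1 : ∑ w, x w * y w = x v := by
      rw [Finset.sum_eq_single v] <;> simp +contextual [hy, Pi.single_apply]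
    have : ∑ w, (x + t • y) w ^ 2 = ∑ w, x w ^ 2 + 2 * t * ∑ w, x w * y w + t ^ 2 * ∑ w, y w ^ 2 := by
      simp only [Finset.mul_sum, ← Finset.sum_add_distrib, Pi.add_apply, Pi.smul_apply, smul_eq_mul]
      exact Finset.sum_congr rfl fun u _ => by ring
    rw [this, h1, hy2]; ring
  have key : ∀ t : ℝ, 2 * t * (adjOp G x v - μ * x v) ≤ t ^ 2 * (μ - bil G y y) := by
    intro t
    have h1 := hμ (x + t • y)
    rw [hexp, bil_expand, bil_single, hx] at h1
    linarith
  set d := adjOp G x v - μ * x v with hd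
  set C := μ - bil G y y
  have h2 := key (d / (C + 1))
  have hC1 : 0 < C + 1 := by linarith
  have h3 : 2 * (d / (C + 1)) * d = 2 * d ^ 2 / (C + 1) := by ring
  have h4 : (d / (C + 1)) ^ 2 * C = d ^ 2 * C / (C + 1) ^ 2 := by rw [div_pow]; ring
  rw [h3, h4, div_le_div_iff₀ hC1 (by positivity)] at h2
  have h5 : d ^ 2 * (C + 2) ≤ 0 := by
    by_contra h
    push Not at h
    nlinarith [mul_pos h hC1]
  have h6 : d ^ 2 = 0 := by nlinarith [sq_nonneg d]
  have h7 : d = 0 := by simpa using h6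
  linarith

theorem exists_max {V : Type*} [Fintype V] [Nonempty V] (G : SimpleGraph V) :
    ∃ (μ : ℝ) (x : V → ℝ), (∑ v, x v ^ 2 = 1) ∧ bil G x x = μ ∧
      ∀ f, bil G f f ≤ μ * ∑ v, f v ^ 2 := by
  have hcont : Continuous fun f : V → ℝ => bil G f f := by
    unfold bil adjOp
    refine continuous_finsetSum _ fun v _ => (continuous_apply v).mul
      (continuous_finsetSum _ fun u _ => ?_)
    split_ifs
    · exact continuous_apply u
    · exact continuous_const
  have hcont2 : Continuous fun f : V → ℝ => ∑ v, f v ^ 2 :=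
    continuous_finsetSum _ fun v _ => (continuous_apply v).pow 2
  have hcomp : IsCompact {f : V → ℝ | ∑ v, f v ^ 2 = 1} := by
    refine (isCompact_Icc (a := fun _ : V => (-1 : ℝ)) (b := fun _ => 1)).of_isClosed_subset
      (isClosed_eq hcont2 continuous_const) ?_
    intro f hf
    have h1 : ∀ v, f v ^ 2 ≤ 1 := fun v => by
      rw [← (show ∑ v, f v ^ 2 = 1 from hf)]
      exact Finset.single_le_sum (f := fun v => f v ^ 2) (fun _ _ => sq_nonneg _) (Finset.mem_univ v)
    exact ⟨fun v => (abs_le.1 ((sq_le_one_iff_abs_le_one _).1 (h1 v))).1,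
      fun v => (abs_le.1 ((sq_le_one_iff_abs_le_one _).1 (h1 v))).2⟩
  have hne : {f : V → ℝ | ∑ v, f v ^ 2 = 1}.Nonempty := by
    obtain ⟨v⟩ := ‹Nonempty V›
    refine ⟨Pi.single v 1, ?_⟩
    show ∑ w, (Pi.single v 1 : V → ℝ) w ^ 2 = 1
    rw [Finset.sum_eq_single v] <;> simp +contextual [Pi.single_apply]
  obtain ⟨x, hx, hmax⟩ := hcomp.exists_isMaxOn hne hcont.continuousOn
  refine ⟨bil G x x, x, hx, rfl, fun f => ?_⟩
  set s := ∑ v, f v ^ 2 with hs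
  have hs0 : 0 ≤ s := Finset.sum_nonneg fun _ _ => sq_nonneg _
  have hscale : ∀ c : ℝ, bil G (c • f) (c • f) = c ^ 2 * bil G f f := by
    intro c
    simp only [bil, adjOp, Finset.mul_sum, Pi.smul_apply, smul_eq_mul]
    refine Finset.sum_congr rfl fun v _ => Finset.sum_congr rfl fun u _ => ?_
    split_ifs <;> ring
  rcases hs0.eq_or_lt with h0 | hpos
  · have hf : ∀ v, f v = 0 := by
      intro v
      have h1 := (Finset.sum_eq_zero_iff_of_nonneg (fun v _ => sq_nonneg (f v))).1 h0.symm v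
        (Finset.mem_univ v)
      simpa using h1
    rw [← h0]
    simp [bil, hf]
  · set c := (Real.sqrt s)⁻¹ with hc
    have hcs : c ^ 2 * s = 1 := by
      rw [hc, inv_pow, Real.sq_sqrt hs0]; field_simp
    have hmem : c • f ∈ {f : V → ℝ | ∑ v, f v ^ 2 = 1} := by
      show ∑ v, (c • f) v ^ 2 = 1
      rw [← hcs, hs, Finset.mul_sum]
      exact Finset.sum_congr rfl fun v _ => by simp [mul_pow]
    have h1 : bil G (c • f) (c • f) ≤ bil G x x := hmax hmem
    rw [hscale] at h1
    calc bil G f f = (c ^ 2 * s) * bil G f f := by rw [hcs, one_mul]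
      _ = (c ^ 2 * bil G f f) * s := by ring
      _ ≤ bil G x x * s := by gcongr

theorem specRad_spec {V : Type*} [Fintype V] [Nonempty V] (G : SimpleGraph V) :
    (∀ f, bil G f f ≤ specRad G * ∑ v, f v ^ 2) ∧
    ∃ x : V → ℝ, x ≠ 0 ∧ (∀ v, 0 ≤ x v) ∧ ∀ v, adjOp G x v = specRad G * x v := by
  obtain ⟨μ, x, hx1, hxμ, hmax⟩ := exists_max G
  have hxe := eig_of_max G μ hmax x (by rw [hx1, mul_one, hxμ])
  have hx0 : x ≠ 0 := by
    rintro rfl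
    simp at hx1
  have hμ : specRad G = μ := by
    refine IsGreatest.csSup_eq ⟨⟨x, hx0, hxe⟩, ?_⟩
    rintro y ⟨f, hf0, hf⟩
    have h1 : bil G f f = y * ∑ v, f v ^ 2 := by
      rw [bil, Finset.mul_sum]
      refine Finset.sum_congr rfl fun v _ => ?_
      rw [show adjOp G f v = y * f v from hf v]; ring
    have h2 := hmax f
    rw [h1] at h2
    have h3 : 0 < ∑ v, f v ^ 2 := by
      obtain ⟨v, hv⟩ := Function.ne_iff.1 hf0
      exact Finset.sum_pos' (fun _ _ => sq_nonneg _) ⟨v, Finset.mem_univ v, by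
        have : f v ≠ 0 := hv
        positivity⟩
    exact le_of_mul_le_mul_right h2 h3
  rw [hμ]
  refine ⟨hmax, fun v => |x v|, ?_, fun v => abs_nonneg _, ?_⟩
  · intro h
    apply hx0
    ext v
    simpa using congrFun h v
  · refine eig_of_max G μ hmax _ (le_antisymm (hmax _) ?_)
    simp only [sq_abs]
    rw [hx1, mul_one, ← hxμ]
    refine Finset.sum_le_sum fun v _ => ?_
    simp only [adjOp, Finset.mul_sum]
    refine Finset.sum_le_sum fun u _ => ?_
    split_ifs
    · rw [← abs_mul]; exact le_abs_self _
    · simp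

theorem eig_iso {V W : Type*} [Fintype V] [Fintype W] {G : SimpleGraph V} {H : SimpleGraph W}
    (e : G ≃g H) (y : ℝ) (h : ∃ f : V → ℝ, f ≠ 0 ∧
      ∀ v : V, ∑ u : V, (if G.Adj v u then f u else 0) = y * f v) :
    (∃ f : W → ℝ, f ≠ 0 ∧ ∀ v : W, ∑ u : W, (if H.Adj v u then f u else 0) = y * f v) := by
  obtain ⟨f, hf0, hf⟩ := h
  refine ⟨f ∘ e.symm, ?_, fun w => ?_⟩
  · intro h
    apply hf0
    ext v
    simpa using congrFun h (e v)
  · have := hf (e.symm w)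
    rw [← Equiv.sum_comp e.symm.toEquiv] at this
    simp only [Function.comp]
    rw [← this]
    refine Finset.sum_congr rfl fun u _ => ?_
    have hiff : G.Adj (e.symm w) (e.symm u) ↔ H.Adj w u := e.symm.map_adj_iff
    show _ = if G.Adj (e.symm w) (e.symm u) then f (e.symm u) else 0
    by_cases h : H.Adj w u
    · rw [if_pos h, if_pos (hiff.2 h)]
    · rw [if_neg h, if_neg (fun h' => h (hiff.1 h'))]

theorem specRad_iso {V W : Type*} [Fintype V] [Fintype W] {G : SimpleGraph V} {H : SimpleGraph W}
    (e : G ≃g H) : specRad G = specRad H := by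
  unfold specRad
  congr 1
  ext y
  exact ⟨eig_iso e y, eig_iso e.symm y⟩

open SimpleGraph in
theorem rewire {V : Type*} [Fintype V] [Nonempty V] {G : SimpleGraph V} (hG : ¬ HasEDC G 3)
    (hmax : ∀ G' : SimpleGraph V, ¬ HasEDC G' 3 → specRad G' ≤ specRad G)
    (x : V → ℝ) (hx : ∀ v, 0 ≤ x v) (u : V) (hu : x u = 1)
    (he : ∀ v, adjOp G x v = specRad G * x v) (v : V) (hvu : v ≠ u) (hnadj : ¬ G.Adj u v) :
    1 < specRad G * x v := by
  by_contra hle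
  push Not at hle
  obtain ⟨G', hG'⟩ : ∃ G' : SimpleGraph V, G' = G.deleteIncidenceSet v ⊔ edge u v := ⟨_, rfl⟩
  have hadj : ∀ a b, G'.Adj a b ↔ (G.Adj a b ∧ a ≠ v ∧ b ≠ v) ∨ (a = u ∧ b = v) ∨
      (a = v ∧ b = u) := by
    intro a b
    rw [hG', sup_adj, deleteIncidenceSet_adj, edge_adj]
    constructor
    · tauto
    · rintro (h | ⟨rfl, rfl⟩ | ⟨rfl, rfl⟩)
      · exact Or.inl h
      · exact Or.inr ⟨Or.inl ⟨rfl, rfl⟩, hvu.symm⟩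
      · exact Or.inr ⟨Or.inr ⟨rfl, rfl⟩, hvu⟩
  have hno : ¬ HasEDC G' 3 := by
    intro h3
    refine hG (HasEDC.of_edges (fun a w hw e hemem => ?_) h3)
    have h1 := w.edges_subset_edgeSet hemem
    have hbr : G'.IsBridge s(u, v) := by
      rw [isBridge_iff]
      intro hr
      obtain ⟨p⟩ := hr.symm
      cases p with
      | nil => exact hvu rfl
      | cons h _ =>
        obtain ⟨h1, h2⟩ := h
        rw [hadj] at h1
        apply h2
        rw [fromEdgeSet_adj]
        rcases h1 with h1 | ⟨h1, _⟩ | ⟨_, rfl⟩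
        · exact absurd rfl h1.2.1
        · exact absurd h1 hvu
        · exact ⟨Sym2.eq_swap, hvu⟩
    have hmem : s(u, v) ∈ G'.edgeSet := by rw [mem_edgeSet, hadj]; tauto
    have hnot := (isBridge_iff_forall_cycle_notMem hmem).1 hbr w hw
    induction e with
    | _ a b =>
      rw [mem_edgeSet, hadj] at h1
      rcases h1 with h1 | ⟨rfl, rfl⟩ | ⟨rfl, rfl⟩
      · exact h1.1
      · exact absurd hemem hnot
      · rw [Sym2.eq_swap] at hemem
        exact absurd hemem hnot
  have hop : ∀ w, adjOp G' x w = adjOp G x w + (if w = v then 1 - specRad G * x v else 0) +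
      (if w = u then x v else 0) - (if G.Adj w v then x v else 0) := by
    intro w
    by_cases hwv : w = v
    · subst hwv
      rw [he, if_pos rfl, if_neg hvu, if_neg (G.loopless.irrefl w)]
      have : adjOp G' x w = 1 := by
        rw [adjOp, Finset.sum_eq_single u]
        · rw [if_pos ((hadj w u).2 (by tauto)), hu]
        · intro b _ hb
          rw [if_neg]
          rw [hadj]; tauto
        · simp
      rw [this]; ring
    · rw [if_neg hwv]
      have h1 : adjOp G' x w - adjOp G x w = ∑ b, (if b = v then
          (if w = u then x v else 0) - (if G.Adj w v then x v else 0) else 0) := by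
        simp only [adjOp, ← Finset.sum_sub_distrib]
        refine Finset.sum_congr rfl fun b _ => ?_
        by_cases hb : b = v
        · subst hb
          rw [if_pos rfl]
          congr 1
          by_cases hwu : w = u
          · rw [if_pos hwu, if_pos ((hadj w b).2 (by tauto))]
          · rw [if_neg hwu, if_neg]
            rw [hadj]; tauto
        · rw [if_neg hb]
          have : G'.Adj w b ↔ G.Adj w b := by rw [hadj]; tauto
          by_cases hwb : G.Adj w b
          · rw [if_pos hwb, if_pos (this.2 hwb), sub_self]
          · rw [if_neg hwb, if_neg (fun h => hwb (this.1 h)), sub_self]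
      rw [Finset.sum_ite_eq' Finset.univ v, if_pos (Finset.mem_univ v)] at h1
      linarith
  have hxv := hx v
  have hbil0 : bil G x x = specRad G * ∑ w, x w ^ 2 := by
    rw [bil, Finset.mul_sum]
    exact Finset.sum_congr rfl fun w _ => by rw [he]; ring
  have hbil : bil G' x x = bil G x x + 2 * (x v * (1 - specRad G * x v)) := by
    have h1 : bil G' x x = bil G x x + ∑ w, x w * (if w = v then 1 - specRad G * x v else 0) +
      ∑ w, x w * (if w = u then x v else 0) - ∑ w, x w * (if G.Adj w v then x v else 0) := by
      simp only [bil, ← Finset.sum_add_distrib, ← Finset.sum_sub_distrib]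
      exact Finset.sum_congr rfl fun w _ => by rw [hop]; ring
    have h2 : ∑ w, x w * (if w = v then 1 - specRad G * x v else 0) = x v * (1 - specRad G * x v) := by
      rw [Finset.sum_eq_single v] <;> simp +contextual
    have h3 : ∑ w, x w * (if w = u then x v else 0) = x v := by
      rw [Finset.sum_eq_single u] <;> simp +contextual [hu]
    have h4 : ∑ w, x w * (if G.Adj w v then x v else 0) = x v * (specRad G * x v) := by
      rw [← he, adjOp, Finset.mul_sum]
      refine Finset.sum_congr rfl fun w _ => ?_
      by_cases h : G.Adj v w
      · rw [if_pos h, if_pos h.symm, mul_comm]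
      · rw [if_neg h, if_neg (fun h' => h h'.symm), mul_zero, mul_zero]
    rw [h1, h2, h3, h4]; ring
  have hpos : 0 < ∑ w, x w ^ 2 :=
    Finset.sum_pos' (fun _ _ => sq_nonneg _) ⟨u, Finset.mem_univ u, by rw [hu]; norm_num⟩
  have h1 := (specRad_spec G').1 x
  have h2 := hmax G' hno
  have h3 : 0 ≤ x v * (1 - specRad G * x v) := mul_nonneg hxv (by linarith)
  have h4 : specRad G * ∑ w, x w ^ 2 ≤ specRad G' * ∑ w, x w ^ 2 := by
    rw [← hbil0]; linarith
  have h5 : specRad G' = specRad G := le_antisymm h2 (le_of_mul_le_mul_right h4 hpos)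
  have h6 : bil G' x x = specRad G' * ∑ w, x w ^ 2 := by
    refine le_antisymm h1 ?_
    rw [h5, ← hbil0]; linarith
  have h7 := eig_of_max G' _ (specRad_spec G').1 x h6
  have h8 := h7 u
  rw [hop, he, if_neg hvu.symm, if_pos rfl, if_neg hnadj, h5] at h8
  have hv0 : x v = 0 := by linarith
  have h9 := h7 v
  rw [hop, he, if_pos rfl, if_neg hvu, if_neg (G.loopless.irrefl v), hv0] at h9
  simp at h9

/-- 0/1 adjacency weight -/
noncomputable def aw {V : Type*} (G : SimpleGraph V) (v w : V) : ℝ := if G.Adj v w then 1 else 0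

theorem aw_nonneg {V : Type*} (G : SimpleGraph V) (v w : V) : 0 ≤ aw G v w := by
  unfold aw; split_ifs <;> norm_num

theorem aw_le_one {V : Type*} (G : SimpleGraph V) (v w : V) : aw G v w ≤ 1 := by
  unfold aw; split_ifs <;> norm_num

theorem aw_comm {V : Type*} (G : SimpleGraph V) (v w : V) : aw G v w = aw G w v := by
  simp [aw, G.adj_comm]

theorem aw_self {V : Type*} (G : SimpleGraph V) (v : V) : aw G v v = 0 := by
  simp [aw]

theorem adjOp_aw {V : Type*} [Fintype V] (G : SimpleGraph V) (f : V → ℝ) (v : V) :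
    adjOp G f v = ∑ w, aw G v w * f w := by
  simp [adjOp, aw]

theorem codeg {V : Type*} [Fintype V] {G : SimpleGraph V} (hG : ¬ HasEDC G 3) {u z : V}
    (huz : z ≠ u) : ∑ w, aw G u w * aw G z w ≤ 26 := by
  set C : Finset V := Finset.univ.filter (fun w => G.Adj u w ∧ G.Adj z w) with hC
  have h1 : ∑ w, aw G u w * aw G z w = C.card := by
    rw [hC, Finset.card_filter]
    push_cast
    refine Finset.sum_congr rfl fun w _ => ?_
    simp only [aw]
    by_cases h1 : G.Adj u w <;> by_cases h2 : G.Adj z w <;> simp [h1, h2]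
  have hzC : z ∉ C := by simp [hC]
  have huC : u ∉ insert z C := by simp [hC, huz.symm]
  have h2 := edge_bound hG (insert u (insert z C))
  rw [Finset.card_insert_of_notMem huC, Finset.card_insert_of_notMem hzC,
    Finset.sum_insert huC, Finset.sum_insert hzC] at h2
  have hmem : ∀ w ∈ C, G.Adj u w ∧ G.Adj z w := fun w hw => by simpa [hC] using hw
  have hnn : ∀ v w, (0 : ℝ) ≤ if G.Adj v w then (1 : ℝ) else 0 := fun v w => aw_nonneg G v w
  have hCsub : C ⊆ insert u (insert z C) := fun w hw => by simp [hw]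
  have r1 : (C.card : ℝ) ≤ ∑ w ∈ insert u (insert z C), (if G.Adj u w then (1 : ℝ) else 0) := by
    refine le_trans ?_ (Finset.sum_le_sum_of_subset_of_nonneg hCsub fun w _ _ => hnn u w)
    rw [Finset.sum_congr rfl (fun w hw => if_pos (hmem w hw).1)]
    simp
  have r2 : (C.card : ℝ) ≤ ∑ w ∈ insert u (insert z C), (if G.Adj z w then (1 : ℝ) else 0) := by
    refine le_trans ?_ (Finset.sum_le_sum_of_subset_of_nonneg hCsub fun w _ _ => hnn z w)
    rw [Finset.sum_congr rfl (fun w hw => if_pos (hmem w hw).2)]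
    simp
  have r3 : (C.card : ℝ) * 2 ≤ ∑ v ∈ C, ∑ w ∈ insert u (insert z C),
      (if G.Adj v w then (1 : ℝ) else 0) := by
    have : ∀ v ∈ C, (2 : ℝ) ≤ ∑ w ∈ insert u (insert z C), (if G.Adj v w then (1 : ℝ) else 0) := by
      intro v hv
      rw [Finset.sum_insert huC, Finset.sum_insert hzC, if_pos (hmem v hv).1.symm,
        if_pos (hmem v hv).2.symm]
      have := Finset.sum_nonneg (s := C) (fun w _ => hnn v w)
      linarith
    have h := Finset.card_nsmul_le_sum C _ 2 this
    simpa using h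
  rw [h1]
  push_cast at h2
  linarith

theorem dominate {V : Type*} [Fintype V] [Nonempty V] {G : SimpleGraph V} (hG : ¬ HasEDC G 3)
    (hmax : ∀ G' : SimpleGraph V, ¬ HasEDC G' 3 → specRad G' ≤ specRad G)
    (x : V → ℝ) (hx : ∀ v, 0 ≤ x v) (hx1 : ∀ v, x v ≤ 1) (u : V) (hu : x u = 1)
    (he : ∀ v, adjOp G x v = specRad G * x v) (hρ : 215 ≤ specRad G)
    (hn : (Fintype.card V : ℝ) ≤ specRad G ^ 2 + 1) (v : V) (hvu : v ≠ u) : G.Adj u v := by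
  set ρ := specRad G with hρd
  set n : ℝ := (Fintype.card V : ℝ) with hnd
  have eb : ∀ S : Finset V, ∑ v ∈ S, ∑ w ∈ S, aw G v w ≤ 2 * ((S.card : ℝ) + 24) := edge_bound hG
  set X := ∑ v, x v with hX
  have hXnn : 0 ≤ X := Finset.sum_nonneg fun v _ => hx v
  -- bound on X
  have hXb : ρ * X ≤ 16 / 15 * (n + 24) + 15 * X + 24 := by
    set B : Finset V := Finset.univ.filter (fun v => 1 / 15 ≤ x v) with hB
    have hBX : (B.card : ℝ) ≤ 15 * X := by
      have h1 : ∀ v ∈ B, (1 / 15 : ℝ) ≤ x v := fun v hv => by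
        simpa [hB] using hv
      have h2 := Finset.card_nsmul_le_sum B x (1 / 15) h1
      have h3 : ∑ v ∈ B, x v ≤ X :=
        Finset.sum_le_sum_of_subset_of_nonneg (Finset.subset_univ B) fun v _ _ => hx v
      rw [nsmul_eq_mul] at h2
      linarith
    have h1 : ρ * X = ∑ v, ∑ w, aw G v w * x w := by
      rw [hX, Finset.mul_sum]
      exact Finset.sum_congr rfl fun v _ => by rw [← he, adjOp_aw]
    have h2 : ρ * X = ∑ v, ∑ w, aw G v w * x v := by
      rw [h1, Finset.sum_comm]
      exact Finset.sum_congr rfl fun v _ => Finset.sum_congr rfl fun w _ => by rw [aw_comm]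
    have h3 : ρ * X + ρ * X ≤ ∑ v, ∑ w, (16 / 15 * aw G v w +
        (if v ∈ B then (if w ∈ B then aw G v w else 0) else 0)) := by
      nth_rewrite 1 [h1]
      rw [h2]
      simp only [← Finset.sum_add_distrib]
      refine Finset.sum_le_sum fun v _ => Finset.sum_le_sum fun w _ => ?_
      have ha := aw_nonneg G v w
      have hv1 := hx1 v
      have hw1 := hx1 w
      by_cases hv : v ∈ B
      · by_cases hw : w ∈ B
        · rw [if_pos hv, if_pos hw]; nlinarith
        · have : x w < 1 / 15 := by simpa [hB] using hw
          rw [if_pos hv, if_neg hw]; nlinarith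
      · have : x v < 1 / 15 := by simpa [hB] using hv
        rw [if_neg hv]; nlinarith
    have h4 : ∑ v, ∑ w, (16 / 15 * aw G v w +
        (if v ∈ B then (if w ∈ B then aw G v w else 0) else 0)) =
        16 / 15 * ∑ v, ∑ w, aw G v w + ∑ v ∈ B, ∑ w ∈ B, aw G v w := by
      simp only [Finset.sum_add_distrib, Finset.mul_sum]
      congr 1
      rw [← Finset.sum_filter_add_sum_filter_not Finset.univ (fun v => v ∈ B)]
      rw [Finset.sum_congr rfl (g := fun v => ∑ w ∈ B, aw G v w)]
      · rw [Finset.sum_eq_zero (s := Finset.univ.filter (fun v => v ∉ B))]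
        · simp
        · intro v hv
          simp only [Finset.mem_filter] at hv
          simp [hv.2]
      · intro v hv
        simp only [Finset.mem_filter] at hv
        simp only [hv.2, if_true]
        rw [← Finset.sum_filter]
        simp
    have h5 := eb Finset.univ
    have h6 := eb B
    rw [Finset.card_univ] at h5
    rw [h4] at h3
    linarith
  have hthird : ∀ z, z ≠ u → x z ≤ 1 / 3 := by
    intro z hz
    have h1 : ρ * 1 + ρ * x z ≤ X + 26 := by
      rw [← hu, ← he, ← he, adjOp_aw, adjOp_aw, ← Finset.sum_add_distrib]
      refine le_trans ?_ (add_le_add_right (codeg hG hz) X)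
      rw [hX, ← Finset.sum_add_distrib]
      refine Finset.sum_le_sum fun w _ => ?_
      have hw := hx w
      have hw1 := hx1 w
      simp only [aw]
      by_cases a1 : G.Adj u w <;> by_cases a2 : G.Adj z w <;> simp [a1, a2] <;> linarith
    by_contra hlt
    push Not at hlt
    have h2 : 4 / 3 * ρ - 26 ≤ X := by nlinarith
    have h3 : (ρ - 15) * X ≤ 16 / 15 * (ρ ^ 2 + 25) + 24 := by nlinarith
    have h4 : (ρ - 15) * (4 / 3 * ρ - 26) ≤ (ρ - 15) * X := by
      apply mul_le_mul_of_nonneg_left h2; linarith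
    nlinarith
  -- non-neighbours
  by_contra hnadj
  set S : Finset V := Finset.univ.filter (fun w => w ≠ u ∧ ¬ G.Adj u w) with hS
  have hvS : v ∈ S := by simp [hS, hvu, hnadj]
  set s : ℝ := (S.card : ℝ) with hs
  set U : Finset V := Finset.univ.erase u with hU
  have hdu : ∑ w, aw G u w = n - 1 - s := by
    have h1 : ∀ w, aw G u w = 1 - (if w = u then 1 else 0) - (if w ∈ S then 1 else 0) := by
      intro w
      by_cases hw : w = u
      · subst hw; simp [aw, hS]
      · by_cases ha : G.Adj u w <;> simp [aw, hS, hw, ha]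
    simp only [h1, Finset.sum_sub_distrib]
    simp [hnd, hs]
  have hsplit : ∀ f : V → ℝ, ∑ w, f w = f u + ∑ w ∈ U, f w := fun f =>
    (Finset.add_sum_erase Finset.univ f (Finset.mem_univ u)).symm
  have htot : ∑ v ∈ U, ∑ w ∈ U, aw G v w ≤ 2 * (s + 25) := by
    have h5 := eb Finset.univ
    rw [Finset.card_univ, hsplit, hdu] at h5
    have h6 : ∑ v ∈ U, ∑ w, aw G v w = ∑ v ∈ U, aw G v u + ∑ v ∈ U, ∑ w ∈ U, aw G v w := by
      rw [← Finset.sum_add_distrib]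
      exact Finset.sum_congr rfl fun v _ => hsplit _
    have h7 : ∑ v ∈ U, aw G v u = n - 1 - s := by
      rw [← hdu, hsplit, aw_self, zero_add]
      exact Finset.sum_congr rfl fun w _ => aw_comm _ _ _
    rw [h6, h7] at h5
    linarith
  have hd1 : ∀ z, z ≠ u → ∑ w ∈ U, aw G z w ≤ s + 25 := by
    intro z hz
    have hzU : z ∈ U := by simp [hU, hz]
    rw [← Finset.add_sum_erase U _ hzU] at htot
    have h1 : ∑ w ∈ U, aw G z w ≤ ∑ v ∈ U.erase z, ∑ w ∈ U, aw G v w := by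
      rw [← Finset.add_sum_erase U _ hzU, aw_self, zero_add]
      refine Finset.sum_le_sum fun w _ => ?_
      rw [aw_comm]
      exact Finset.single_le_sum (f := fun y => aw G w y) (fun y _ => aw_nonneg G w y) hzU
    linarith
  have hSU : S ⊆ U := fun w hw => by
    simp only [hS, Finset.mem_filter] at hw
    simp [hU, hw.2.1]
  have hSx : ∀ w ∈ S, ∀ M : ℝ, (∀ z, z ≠ u → x z ≤ M) → 1 < M * ∑ y ∈ U, aw G w y := by
    intro w hw M hM
    have hw' : w ≠ u ∧ ¬ G.Adj u w := by simpa [hS] using hw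
    have h1 := rewire hG hmax x hx u hu he w hw'.1 hw'.2
    rw [← hρd, ← he, adjOp_aw, hsplit] at h1
    have h2 : aw G w u = 0 := by
      simp only [aw]; rw [if_neg (fun h => hw'.2 h.symm)]
    rw [h2, zero_mul, zero_add] at h1
    refine h1.trans_le ?_
    rw [Finset.mul_sum]
    refine Finset.sum_le_sum fun y hy => ?_
    rw [mul_comm]
    exact mul_le_mul_of_nonneg_right (hM y (by simpa [hU] using hy)) (aw_nonneg _ _ _)
  have hs50 : s ≤ 50 := by
    have h1 : ∀ w ∈ S, (1 : ℝ) ≤ 1 / 3 * ∑ y ∈ U, aw G w y := fun w hw =>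
      (hSx w hw _ hthird).le
    have h2 := Finset.card_nsmul_le_sum S _ 1 h1
    rw [nsmul_eq_mul, mul_one, ← Finset.mul_sum] at h2
    have h3 : ∑ w ∈ S, ∑ y ∈ U, aw G w y ≤ ∑ w ∈ U, ∑ y ∈ U, aw G w y :=
      Finset.sum_le_sum_of_subset_of_nonneg hSU fun w _ _ =>
        Finset.sum_nonneg fun y _ => aw_nonneg _ _ _
    linarith
  obtain ⟨z, hzU, hz⟩ := U.exists_max_image x ⟨v, hSU hvS⟩
  have hzu : z ≠ u := by simpa [hU] using hzU
  have hM : ∀ y, y ≠ u → x y ≤ x z := fun y hy => hz y (by simp [hU, hy])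
  have h1 : ρ * x z ≤ 1 + 75 * x z := by
    rw [← he, adjOp_aw, hsplit, hu]
    have h2 : ∑ y ∈ U, aw G z y * x y ≤ x z * ∑ y ∈ U, aw G z y := by
      rw [Finset.mul_sum]
      refine Finset.sum_le_sum fun y hy => ?_
      rw [mul_comm]
      exact mul_le_mul_of_nonneg_right (hz y hy) (aw_nonneg _ _ _)
    have h3 := hd1 z hzu
    have h4 := aw_le_one G z u
    have h5 : x z * ∑ y ∈ U, aw G z y ≤ x z * 75 :=
      mul_le_mul_of_nonneg_left (by linarith) (hx z)
    linarith
  have h2 := hSx v hvS _ hM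
  have h3 := hd1 v hvu
  have h4 : x z * ∑ y ∈ U, aw G v y ≤ x z * 75 :=
    mul_le_mul_of_nonneg_left (by linarith) (hx z)
  nlinarith [hx z]

theorem join_none {W : Type*} (H : SimpleGraph W) (v : W) : (joinK1 H).Adj none (some v) := by
  simp [joinK1]

theorem join_some {W : Type*} (H : SimpleGraph W) (v w : W) :
    (joinK1 H).Adj (some v) (some w) ↔ H.Adj v w := by
  simp only [joinK1, SimpleGraph.fromRel_adj]
  constructor
  · rintro ⟨_, (h | ⟨a, b, ha, hb, hab⟩) | (h | ⟨a, b, ha, hb, hab⟩)⟩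
    · simp at h
    · simp only [Option.some.injEq] at ha hb; subst ha; subst hb; exact hab
    · simp at h
    · simp only [Option.some.injEq] at ha hb; subst ha; subst hb; exact hab.symm
  · intro h
    exact ⟨fun e => h.ne (Option.some.inj e), Or.inl (Or.inr ⟨v, w, rfl, rfl, h⟩)⟩

theorem adjOp_none {W : Type*} [Fintype W] (H : SimpleGraph W) (z : Option W → ℝ) :
    adjOp (joinK1 H) z none = ∑ v, z (some v) := by
  unfold adjOp
  rw [Fintype.sum_option]
  simp [join_none]

theorem adjOp_some {W : Type*} [Fintype W] (H : SimpleGraph W) (z : Option W → ℝ) (v : W) :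
    adjOp (joinK1 H) z (some v) = z none + ∑ w, if H.Adj v w then z (some w) else 0 := by
  unfold adjOp
  rw [Fintype.sum_option]
  simp [join_some, (join_none H v).symm]

theorem join_lower {W : Type*} [Fintype W] (H : SimpleGraph W) :
    Real.sqrt (Fintype.card W) ≤ specRad (joinK1 H) := by
  obtain ⟨h, -⟩ := specRad_spec (joinK1 H)
  set s := Real.sqrt (Fintype.card W) with hs
  have hs2 : s ^ 2 = Fintype.card W := Real.sq_sqrt (by positivity)
  have hs0 : 0 ≤ s := Real.sqrt_nonneg _
  rcases hs0.eq_or_lt with h0 | hpos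
  · rw [← h0]
    have := h (fun v => if v = none then 1 else 0)
    have e1 : bil (joinK1 H) (fun v => if v = none then 1 else 0) (fun v => if v = none then 1 else 0) = 0 := by
      unfold bil
      rw [Fintype.sum_option, adjOp_none]
      simp
    rw [e1, Fintype.sum_option] at this
    simpa using this
  · have := h (fun v => if v = none then s else 1)
    have e1 : 2 * s * (Fintype.card W) ≤ bil (joinK1 H) (fun v => if v = none then s else 1) (fun v => if v = none then s else 1) := by
      unfold bil
      rw [Fintype.sum_option, adjOp_none]
      have : ∑ i : W, s ≤ ∑ i : W, 1 * adjOp (joinK1 H) (fun v => if v = none then s else 1) (some i) := by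
        refine Finset.sum_le_sum fun i _ => ?_
        rw [adjOp_some, one_mul]
        simp only [if_true]
        have : 0 ≤ ∑ w, (if H.Adj i w then (if (some w) = none then s else (1:ℝ)) else 0) := by
          refine Finset.sum_nonneg fun w _ => ?_
          split_ifs <;> simp_all
        linarith
      simp only [reduceCtorEq, if_true, if_false] at this ⊢
      simp only [Finset.sum_const, Finset.card_univ, nsmul_eq_mul, mul_one] at this ⊢
      linarith
    rw [Fintype.sum_option] at this
    simp only [reduceCtorEq, if_true, if_false, one_pow, Finset.sum_const, Finset.card_univ, nsmul_eq_mul, mul_one] at this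
    rw [← hs2] at this e1
    have hh : 2 * s * s ^ 2 ≤ specRad (joinK1 H) * (2 * s ^ 2) := by linarith
    have hp : 0 < 2 * s ^ 2 := by positivity
    nlinarith

/-- test values -/
noncomputable def gv (r : ℝ) (i : ℕ) : ℝ :=
  if i = 0 then 1/r + 4/r^2 + 8/r^3 else if i ≤ 4 then 1/r + 2/r^2 + 6/r^3 else 1/r

theorem f2_adj {m : ℕ} (i j : Fin m) : (f2PlusIsolated m).Adj i j ↔
    ((i.val = 0 ∧ 1 ≤ j.val ∧ j.val ≤ 4) ∨ (i.val = 1 ∧ j.val = 2) ∨ (i.val = 3 ∧ j.val = 4)) ∨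
    ((j.val = 0 ∧ 1 ≤ i.val ∧ i.val ≤ 4) ∨ (j.val = 1 ∧ i.val = 2) ∨ (j.val = 3 ∧ i.val = 4)) := by
  simp only [f2PlusIsolated, SimpleGraph.fromRel_adj]
  constructor
  · exact fun h => h.2
  · intro h
    refine ⟨fun e => ?_, h⟩
    subst e
    omega

theorem f2_sum (k : ℕ) (r : ℝ) (i : Fin (k + 5)) :
    ∑ j : Fin (k+5), (if (f2PlusIsolated (k+5)).Adj i j then gv r j.val else 0)
     = if i.val = 0 then 4 * gv r 1 else if i.val ≤ 4 then gv r 0 + gv r 1 else 0 := by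
  simp only [f2_adj]
  obtain ⟨i, hi⟩ := i
  simp only
  rw [Fin.sum_univ_eq_sum_range (fun j => if (i = 0 ∧ 1 ≤ j ∧ j ≤ 4 ∨ i = 1 ∧ j = 2 ∨ i = 3 ∧ j = 4) ∨ (j = 0 ∧ 1 ≤ i ∧ i ≤ 4 ∨ j = 1 ∧ i = 2 ∨ j = 3 ∧ i = 4) then gv r j else 0)]
  rw [Finset.sum_range_succ', Finset.sum_range_succ', Finset.sum_range_succ', Finset.sum_range_succ', Finset.sum_range_succ']
  have h0 : ∀ j, ¬ ((i = 0 ∧ 1 ≤ j+1+1+1+1+1 ∧ j+1+1+1+1+1 ≤ 4 ∨ i = 1 ∧ j+1+1+1+1+1 = 2 ∨ i = 3 ∧ j+1+1+1+1+1 = 4) ∨ (j+1+1+1+1+1 = 0 ∧ 1 ≤ i ∧ i ≤ 4 ∨ j+1+1+1+1+1 = 1 ∧ i = 2 ∨ j+1+1+1+1+1 = 3 ∧ i = 4)) := by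
    intro j; omega
  simp only [h0, if_false, Finset.sum_const_zero]
  have g2 : gv r 2 = gv r 1 := by simp [gv]
  have g3 : gv r 3 = gv r 1 := by simp [gv]
  have g4 : gv r 4 = gv r 1 := by simp [gv]
  by_cases h5 : 5 ≤ i
  · rw [if_neg (by omega), if_neg (by omega), if_neg (by omega), if_neg (by omega), if_neg (by omega), if_neg (by omega), if_neg (by omega)]
    simp
  · interval_cases i <;> simp [g2, g3, g4] <;> ring

theorem target_lower (k : ℕ) (r : ℝ) (hr : 0 < r)
    (h : r * (r^2 - (k+5)) < 12 + 32 / r) :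
    r < specRad (joinK1 (f2PlusIsolated (k + 5))) := by
  obtain ⟨hS, -⟩ := specRad_spec (joinK1 (f2PlusIsolated (k + 5)))
  set z : Option (Fin (k+5)) → ℝ := fun v => v.elim 1 (fun i => gv r i.val) with hz
  have hS' := hS z
  set T := joinK1 (f2PlusIsolated (k + 5)) with hT
  have hg : ∀ i, 0 ≤ gv r i := by
    intro i; unfold gv; split_ifs <;> positivity
  have hnone : r < adjOp T z none := by
    rw [adjOp_none]
    simp only [hz, Option.elim_some]
    rw [Fin.sum_univ_eq_sum_range (fun j => gv r j)]
    rw [Finset.sum_range_succ', Finset.sum_range_succ', Finset.sum_range_succ', Finset.sum_range_succ', Finset.sum_range_succ']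
    have : ∀ j, gv r (j+1+1+1+1+1) = 1 / r := by intro j; simp [gv]
    simp only [this]
    simp only [gv, Finset.sum_const, Finset.card_range, nsmul_eq_mul]
    norm_num
    have h2 : r * (r^2 - (k+5)) * r < (12 + 32 / r) * r := by gcongr
    have h3 : (12 + 32 / r) * r = 12 * r + 32 := by field_simp
    rw [h3] at h2
    have : r = r^4 / r^3 := by field_simp
    have e : (k:ℝ) * r⁻¹ + (r⁻¹ + 2 / r ^ 2 + 6 / r ^ 3) + (r⁻¹ + 2 / r ^ 2 + 6 / r ^ 3) + (r⁻¹ + 2 / r ^ 2 + 6 / r ^ 3) + (r⁻¹ + 2 / r ^ 2 + 6 / r ^ 3) + (r⁻¹ + 4 / r ^ 2 + 8 / r ^ 3) = ((k + 5) * r^2 + 12 * r + 32) / r^3 := by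
      field_simp; ring
    rw [e, lt_div_iff₀ (by positivity)]
    nlinarith
  have hsome : ∀ i, r * z (some i) ≤ adjOp T z (some i) := by
    intro i
    rw [adjOp_some]
    simp only [hz, Option.elim_some, Option.elim_none]
    rw [f2_sum]
    by_cases h0 : i.val = 0
    · rw [if_pos h0, h0]
      simp only [gv]
      norm_num
      have : r * (r⁻¹ + 4 / r ^ 2 + 8 / r ^ 3) = 1 + 4 * (r⁻¹ + 2 / r^2) := by field_simp; ring
      rw [this]
      have : 0 ≤ 6 / r^3 := by positivity
      linarith
    · rw [if_neg h0]
      by_cases h4 : i.val ≤ 4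
      · rw [if_pos h4]
        simp only [gv, h0, h4]
        norm_num
        have : r * (r⁻¹ + 2 / r ^ 2 + 6 / r ^ 3) = 1 + 2 * r⁻¹ + 6 / r^2 := by field_simp
        rw [this]
        have : 0 ≤ 8 / r^3 := by positivity
        have : 0 ≤ 6 / r^3 := by positivity
        have : 4 / r^2 + 2 / r^2 = 6 / r^2 := by ring
        linarith
      · rw [if_neg h4]
        simp only [gv, h0, h4]
        norm_num
        field_simp
        exact le_refl _
  have hb : r * ∑ v, z v ^ 2 < bil T z z := by
    unfold bil
    rw [Fintype.sum_option, Fintype.sum_option, mul_add, Finset.mul_sum]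
    have h1 : z none = 1 := rfl
    have : ∑ i, r * z (some i)^2 ≤ ∑ i, z (some i) * adjOp T z (some i) := by
      refine Finset.sum_le_sum fun i _ => ?_
      have := mul_le_mul_of_nonneg_left (hsome i) (show 0 ≤ z (some i) from hg _)
      nlinarith
    rw [h1]
    linarith
  have hpos : 0 ≤ ∑ v, z v ^ 2 := Finset.sum_nonneg fun v _ => sq_nonneg _
  by_contra hle
  push Not at hle
  have := mul_le_mul_of_nonneg_right hle hpos
  linarith

/-- degree outside of `u` -/
noncomputable def dg {V : Type*} [Fintype V] (G : SimpleGraph V) (u w : V) : ℝ :=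
  ∑ z ∈ Finset.univ.erase u, aw G w z

theorem upper {V : Type*} [Fintype V] [Nonempty V] {G : SimpleGraph V} (k : ℕ)
    (hk : Fintype.card V = k + 6) (r : ℝ) (hr : 215 ≤ r)
    (hT : specRad (joinK1 (f2PlusIsolated (k + 5))) ≤ r)
    (x : V → ℝ) (hx : ∀ v, 0 ≤ x v) (u : V) (hu : x u = 1)
    (he : ∀ v, adjOp G x v = r * x v) (hadj : ∀ v, v ≠ u → G.Adj u v)
    (h4 : ∀ v, v ≠ u → dg G u v ≤ 4)
    (hD : (∑ w ∈ Finset.univ.erase u, dg G u w ≤ 10 ∧ ∑ w ∈ Finset.univ.erase u, dg G u w ^ 2 ≤ 40) ∨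
      (∑ w ∈ Finset.univ.erase u, dg G u w ≤ 12 ∧ ∑ w ∈ Finset.univ.erase u, dg G u w ^ 2 ≤ 30)) :
    False := by
  set U := Finset.univ.erase u with hU
  have hcard : U.card = k + 5 := by
    rw [hU, Finset.card_erase_of_mem (Finset.mem_univ _), Finset.card_univ, hk]; rfl
  have hd0 : ∀ v, 0 ≤ dg G u v := fun v => Finset.sum_nonneg fun z _ => aw_nonneg G v z
  have hsplit : ∀ v, adjOp G x v = aw G v u + ∑ z ∈ U, aw G v z * x z := by
    intro v
    rw [adjOp_aw, ← Finset.add_sum_erase Finset.univ _ (Finset.mem_univ u), hu, mul_one]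
  have hau : ∀ v ∈ U, aw G v u = 1 := by
    intro v hv
    have := hadj v (Finset.ne_of_mem_erase hv)
    simp [aw, this.symm]
  have hv : ∀ v ∈ U, r * x v = 1 + ∑ z ∈ U, aw G v z * x z := by
    intro v hvU
    rw [← he, hsplit, hau v hvU]
  have hM : ∀ v ∈ U, x v ≤ 1 / (r - 4) := by
    have hne : U.Nonempty := Finset.card_pos.mp (by omega)
    obtain ⟨m, hm, hmax⟩ := Finset.exists_max_image U x hne
    have h1 : r * x m ≤ 1 + 4 * x m := by
      rw [hv m hm]
      have : ∑ z ∈ U, aw G m z * x z ≤ ∑ z ∈ U, aw G m z * x m :=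
        Finset.sum_le_sum fun z hz => mul_le_mul_of_nonneg_left (hmax z hz) (aw_nonneg _ _ _)
      rw [← Finset.sum_mul] at this
      have h5 := mul_le_mul_of_nonneg_right (h4 m (Finset.ne_of_mem_erase hm)) (hx m)
      unfold dg at h5
      linarith
    intro v hvU
    refine (hmax v hvU).trans ?_
    rw [le_div_iff₀ (by linarith)]
    linarith
  have hru : r = ∑ z ∈ U, x z := by
    have := he u
    rw [hsplit, hu, aw_self, zero_add, mul_one] at this
    rw [← this]
    refine Finset.sum_congr rfl fun z hz => ?_
    rw [aw_comm, hau z hz, one_mul]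
  have hr2 : r ^ 2 = (k + 5) + ∑ z ∈ U, dg G u z * x z := by
    have h1 : r ^ 2 = ∑ v ∈ U, r * x v := by
      rw [← Finset.mul_sum, ← hru]; ring
    rw [h1, Finset.sum_congr rfl hv, Finset.sum_add_distrib, Finset.sum_comm]
    congr 1
    · simp [hcard]
    · refine Finset.sum_congr rfl fun z _ => ?_
      rw [dg, Finset.sum_mul]
      refine Finset.sum_congr rfl fun w _ => ?_
      rw [aw_comm]
  have h3 : r * (r ^ 2 - (k + 5)) ≤ ∑ w ∈ U, dg G u w + (∑ w ∈ U, dg G u w ^ 2) * (1 / (r - 4)) := by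
    have : r * (r ^ 2 - (k + 5)) = ∑ z ∈ U, dg G u z * (r * x z) := by
      rw [hr2, add_sub_cancel_left, Finset.mul_sum]
      exact Finset.sum_congr rfl fun z _ => by ring
    rw [this, Finset.sum_mul, ← Finset.sum_add_distrib]
    refine Finset.sum_le_sum fun z hz => ?_
    rw [hv z hz]
    have : ∑ w ∈ U, aw G z w * x w ≤ dg G u z * (1 / (r - 4)) := by
      rw [dg, Finset.sum_mul]
      exact Finset.sum_le_sum fun w hw => mul_le_mul_of_nonneg_left (hM w hw) (aw_nonneg _ _ _)
    have := mul_le_mul_of_nonneg_left this (hd0 z)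
    nlinarith
  have hi : 0 < 1 / (r - 4) := by
    have : 0 < r - 4 := by linarith
    positivity
  refine absurd (target_lower k r (by linarith) (lt_of_le_of_lt h3 ?_)) (not_lt.mpr hT)
  rcases hD with ⟨h1, h2⟩ | ⟨h1, h2⟩
  · have h5 := mul_le_mul_of_nonneg_right h2 hi.le
    have h6 : 40 * (1 / (r - 4)) < 2 := by
      rw [mul_one_div, div_lt_iff₀ (by linarith)]; linarith
    have : 0 < 32 / r := by positivity
    linarith
  · have h5 := mul_le_mul_of_nonneg_right h2 hi.le
    have h6 : 30 * (1 / (r - 4)) < 32 / r := by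
      rw [mul_one_div, div_lt_div_iff₀ (by linarith) (by linarith)]; linarith
    linarith

/-- `E` is the list of edges of a cycle -/
def Cyc {V : Type*} (G : SimpleGraph V) (E : List (Sym2 V)) : Prop :=
  ∃ (v : V) (w : G.Walk v v), w.IsCycle ∧ w.edges = E

theorem Cyc.tri {V : Type*} {G : SimpleGraph V} {a b c : V} (h1 : G.Adj a b) (h2 : G.Adj b c)
    (h3 : G.Adj c a) : Cyc G [s(a, b), s(b, c), s(c, a)] := by
  refine ⟨a, .cons h1 (.cons h2 (.cons h3 .nil)), ?_, by simp⟩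
  have := h1.ne; have := h2.ne; have := h3.ne
  rw [SimpleGraph.Walk.cons_isCycle_iff]
  simp [SimpleGraph.Walk.cons_isPath_iff]
  grind

theorem Cyc.quad {V : Type*} {G : SimpleGraph V} {a b c d : V} (h1 : G.Adj a b) (h2 : G.Adj b c)
    (h3 : G.Adj c d) (h4 : G.Adj d a) (hac : a ≠ c) (hbd : b ≠ d) :
    Cyc G [s(a, b), s(b, c), s(c, d), s(d, a)] := by
  refine ⟨a, .cons h1 (.cons h2 (.cons h3 (.cons h4 .nil))), ?_, by simp⟩
  have := h1.ne; have := h2.ne; have := h3.ne; have := h4.ne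
  rw [SimpleGraph.Walk.cons_isCycle_iff]
  simp [SimpleGraph.Walk.cons_isPath_iff]
  grind

theorem three_cyc {V : Type*} {G : SimpleGraph V} (hG : ¬ HasEDC G 3) {E F K : List (Sym2 V)}
    (hE : Cyc G E) (hF : Cyc G F) (hK : Cyc G K) (h1 : ∀ e ∈ E, e ∉ F)
    (h2 : ∀ e ∈ E, e ∉ K) (h3 : ∀ e ∈ F, e ∉ K) : False := by
  obtain ⟨a, p, hp, rfl⟩ := hE
  obtain ⟨b, q, hq, rfl⟩ := hF
  obtain ⟨c, r, hr, rfl⟩ := hK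
  refine hG ⟨![⟨a, p⟩, ⟨b, q⟩, ⟨c, r⟩], fun i => ?_, fun i j hij => ?_⟩
  · fin_cases i
    · exact hp
    · exact hq
    · exact hr
  · fin_cases i <;> fin_cases j
    · exact absurd rfl hij
    · exact h1
    · exact h2
    · exact fun e he he' => h1 e he' he
    · exact absurd rfl hij
    · exact h3
    · exact fun e he he' => h2 e he' he
    · exact fun e he he' => h3 e he' he
    · exact absurd rfl hij

section pats
variable {V : Type*} {G : SimpleGraph V} {u : V}

theorem pat_match (hG : ¬ HasEDC G 3) (hu : ∀ v, v ≠ u → G.Adj u v) {a b c d e f : V}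
    (hn : [u, a, b, c, d, e, f].Nodup) (h1 : G.Adj a b) (h2 : G.Adj c d) (h3 : G.Adj e f) :
    False := by
  simp only [List.nodup_cons, List.mem_cons, List.not_mem_nil, not_or, or_false] at hn
  refine three_cyc hG (Cyc.tri (hu a (by grind)) h1 (hu b (by grind)).symm)
    (Cyc.tri (hu c (by grind)) h2 (hu d (by grind)).symm)
    (Cyc.tri (hu e (by grind)) h3 (hu f (by grind)).symm) ?_ ?_ ?_ <;> simp <;> grind

theorem pat_star (hG : ¬ HasEDC G 3) (hu : ∀ v, v ≠ u → G.Adj u v) {a b c d e f : V}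
    (hn : [u, a, b, c, d, e, f].Nodup) (h1 : G.Adj a b) (h2 : G.Adj a e) (h3 : G.Adj a f)
    (h4 : G.Adj c d) : False := by
  simp only [List.nodup_cons, List.mem_cons, List.not_mem_nil, not_or, or_false] at hn
  refine three_cyc hG (Cyc.tri (hu a (by grind)) h1 (hu b (by grind)).symm)
    (Cyc.tri (hu c (by grind)) h4 (hu d (by grind)).symm)
    (Cyc.quad (hu e (by grind)) h2.symm h3 (hu f (by grind)).symm (by grind) (by grind))
    ?_ ?_ ?_ <;> simp <;> grind

theorem pat_dstar (hG : ¬ HasEDC G 3) (hu : ∀ v, v ≠ u → G.Adj u v) {a b c d e f : V}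
    (hn : [u, a, b, c, d, e, f].Nodup) (h1 : G.Adj a b) (h2 : G.Adj a e) (h3 : G.Adj c d)
    (h4 : G.Adj c f) (h5 : G.Adj a c) : False := by
  simp only [List.nodup_cons, List.mem_cons, List.not_mem_nil, not_or, or_false] at hn
  refine three_cyc hG (Cyc.tri (hu a (by grind)) h5 (hu c (by grind)).symm)
    (Cyc.quad (hu b (by grind)) h1.symm h2 (hu e (by grind)).symm (by grind) (by grind))
    (Cyc.quad (hu d (by grind)) h3.symm h4 (hu f (by grind)).symm (by grind) (by grind))
    ?_ ?_ ?_ <;> simp <;> grind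

theorem pat_star5 (hG : ¬ HasEDC G 3) (hu : ∀ v, v ≠ u → G.Adj u v) {a b c d e f : V}
    (hn : [u, a, b, c, d, e, f].Nodup) (h1 : G.Adj a b) (h2 : G.Adj a c) (h3 : G.Adj a d)
    (h4 : G.Adj a e) (h5 : G.Adj a f) : False := by
  simp only [List.nodup_cons, List.mem_cons, List.not_mem_nil, not_or, or_false] at hn
  refine three_cyc hG (Cyc.tri (hu a (by grind)) h1 (hu b (by grind)).symm)
    (Cyc.quad (hu c (by grind)) h2.symm h3 (hu d (by grind)).symm (by grind) (by grind))
    (Cyc.quad (hu e (by grind)) h4.symm h5 (hu f (by grind)).symm (by grind) (by grind))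
    ?_ ?_ ?_ <;> simp <;> grind

theorem pat_bull (hG : ¬ HasEDC G 3) (hu : ∀ v, v ≠ u → G.Adj u v) {a b c d e : V}
    (hn : [u, a, b, c, d, e].Nodup) (h1 : G.Adj a b) (h2 : G.Adj a c) (h3 : G.Adj b c)
    (h4 : G.Adj a d) (h5 : G.Adj b e) : False := by
  simp only [List.nodup_cons, List.mem_cons, List.not_mem_nil, not_or, or_false] at hn
  refine three_cyc hG (Cyc.tri h1 h3 h2.symm)
    (Cyc.tri (hu a (by grind)) h4 (hu d (by grind)).symm)
    (Cyc.tri (hu b (by grind)) h5 (hu e (by grind)).symm)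
    ?_ ?_ ?_ <;> simp <;> grind

theorem pat_k4 (hG : ¬ HasEDC G 3) (hu : ∀ v, v ≠ u → G.Adj u v) {a b c d : V}
    (hn : [u, a, b, c, d].Nodup) (h1 : G.Adj a b) (h2 : G.Adj a c) (h3 : G.Adj b c)
    (h4 : G.Adj a d) (h5 : G.Adj b d) (h6 : G.Adj c d) : False := by
  simp only [List.nodup_cons, List.mem_cons, List.not_mem_nil, not_or, or_false] at hn
  refine three_cyc hG (Cyc.tri h1 h3 h2.symm)
    (Cyc.quad (hu a (by grind)) h4 h5.symm (hu b (by grind)).symm (by grind) (by grind))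
    (Cyc.tri (hu c (by grind)) h6 (hu d (by grind)).symm)
    ?_ ?_ ?_ <;> simp <;> grind
end pats

/-- bit code of a pair -/
def code (a b : Fin 5) : ℕ :=
  if a.val < b.val then b.val * (b.val - 1) / 2 + a.val else a.val * (a.val - 1) / 2 + b.val

def madj (m : ℕ) (a b : Fin 5) : Bool := (a != b) && m.testBit (code a b)

def mdeg (m : ℕ) (a : Fin 5) : ℕ :=
  (madj m a 0).toNat + (madj m a 1).toNat + (madj m a 2).toNat + (madj m a 3).toNat
    + (madj m a 4).toNat

def D1 (m : ℕ) : ℕ := mdeg m 0 + mdeg m 1 + mdeg m 2 + mdeg m 3 + mdeg m 4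
def D2 (m : ℕ) : ℕ :=
  mdeg m 0 ^ 2 + mdeg m 1 ^ 2 + mdeg m 2 ^ 2 + mdeg m 3 ^ 2 + mdeg m 4 ^ 2

def R5 : List (Fin 5) := [0, 1, 2, 3, 4]

def small (m : ℕ) : Bool :=
  (Nat.ble (D1 m) 10 && Nat.ble (D2 m) 40) || (Nat.ble (D1 m) 12 && Nat.ble (D2 m) 30)

def bullB (m : ℕ) : Bool :=
  R5.any fun a => R5.any fun b => madj m a b && R5.any fun c => madj m a c && (madj m b c &&
    R5.any fun d => madj m a d && ((b != d) && ((c != d) &&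
    R5.any fun e => madj m b e && ((a != e) && ((c != e) && (d != e))))))

def k4B (m : ℕ) : Bool :=
  R5.any fun a => R5.any fun b => madj m a b && R5.any fun c => madj m a c && (madj m b c &&
    R5.any fun d => madj m a d && (madj m b d && madj m c d))

def f2B (m : ℕ) : Bool :=
  R5.any fun a => R5.any fun b => madj m a b && R5.any fun c => madj m a c && (madj m b c &&
    R5.any fun d => madj m a d && ((b != d) && ((c != d) && (!(madj m b d) && (!(madj m c d) &&
    R5.any fun e => madj m a e && (madj m d e && ((b != e) && ((c != e) &&
      (!(madj m b e) && !(madj m c e))))))))))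

theorem chk : ∀ m < 1024, (small m || (bullB m || (k4B m || f2B m))) = true := by
  decide +kernel

/-- the structure of two far-apart parts -/
theorem two_parts {V : Type*} {G : SimpleGraph V} {u : V} (hG : ¬ HasEDC G 3)
    (hu : ∀ v, v ≠ u → G.Adj u v) {a b c d e f : V}
    (hn : [u, a, b, c, d, e, f].Nodup) (h1 : G.Adj a b) (h2 : G.Adj c d) (h3 : G.Adj a e)
    (h4 : G.Adj c f) (v w : V) (hv : v ≠ u) (hw : w ≠ u) (h : G.Adj v w) :
    (v = a ∧ (w = b ∨ w = e)) ∨ (v = b ∧ (w = a ∨ w = e)) ∨ (v = e ∧ (w = a ∨ w = b)) ∨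
    (v = c ∧ (w = d ∨ w = f)) ∨ (v = d ∧ (w = c ∨ w = f)) ∨ (v = f ∧ (w = c ∨ w = d)) := by
  have key : ∀ v w, v ≠ u → w ≠ u → G.Adj v w → v = a ∨ v = b ∨ v = c ∨ v = d ∨ v = e ∨ v = f := by
    intro v w hv hw h
    by_contra hne
    simp only [not_or] at hne
    have hvw := h.ne
    have hy : w = a ∨ w = b ∨ w = c ∨ w = d := by
      by_contra hw'
      simp only [not_or] at hw'
      exact pat_match hG hu (a := a) (b := b) (c := c) (d := d) (e := v) (f := w) (by simp at hn ⊢; grind) h1 h2 h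
    rcases hy with rfl | rfl | rfl | rfl
    · exact pat_star hG hu (a := w) (b := b) (c := c) (d := d) (e := e) (f := v) (by simp at hn ⊢; grind) h1 h3 h.symm h2
    · exact pat_match hG hu (a := w) (b := v) (c := c) (d := d) (e := a) (f := e) (by simp at hn ⊢; grind) h.symm h2 h3
    · exact pat_star hG hu (a := w) (b := d) (c := a) (d := b) (e := f) (f := v) (by simp at hn ⊢; grind) h2 h4 h.symm h1
    · exact pat_match hG hu (a := w) (b := v) (c := c) (d := f) (e := a) (f := b) (by simp at hn ⊢; grind) h.symm h4 h1
  have cross : ∀ v w, (v = a ∨ v = b ∨ v = e) → (w = c ∨ w = d ∨ w = f) → G.Adj v w → False := by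
    rintro v w (rfl | rfl | rfl) (rfl | rfl | rfl) h
    · exact pat_dstar hG hu (a := v) (b := b) (c := w) (d := d) (e := e) (f := f) (by simp at hn ⊢; grind) h1 h3 h2 h4 h
    · exact pat_star hG hu (a := v) (b := b) (c := c) (d := f) (e := e) (f := w) (by simp at hn ⊢; grind) h1 h3 h h4
    · exact pat_star hG hu (a := v) (b := b) (c := c) (d := d) (e := e) (f := w) (by simp at hn ⊢; grind) h1 h3 h h2
    · exact pat_star hG hu (a := w) (b := d) (c := a) (d := e) (e := f) (f := v) (by simp at hn ⊢; grind) h2 h4 h.symm h3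
    · exact pat_match hG hu (a := v) (b := w) (c := a) (d := e) (e := c) (f := f) (by simp at hn ⊢; grind) h h3 h4
    · exact pat_match hG hu (a := v) (b := w) (c := a) (d := e) (e := c) (f := d) (by simp at hn ⊢; grind) h h3 h2
    · exact pat_star hG hu (a := w) (b := d) (c := a) (d := b) (e := f) (f := v) (by simp at hn ⊢; grind) h2 h4 h.symm h1
    · exact pat_match hG hu (a := v) (b := w) (c := a) (d := b) (e := c) (f := f) (by simp at hn ⊢; grind) h h1 h4
    · exact pat_match hG hu (a := v) (b := w) (c := a) (d := b) (e := c) (f := d) (by simp at hn ⊢; grind) h h1 h2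
  have k1 := key v w hv hw h
  have k2 := key w v hw hv h.symm
  have c1 := cross v w
  have c2 := cross w v
  have hvw := h.ne
  have hs := h.symm
  rcases k1 with rfl | rfl | rfl | rfl | rfl | rfl <;> rcases k2 with rfl | rfl | rfl | rfl | rfl | rfl <;>
    simp_all

theorem dg_le {V : Type*} [Fintype V] {G : SimpleGraph V} {u w : V} (F : Finset V)
    (h : ∀ z, z ≠ u → G.Adj w z → z ∈ F) : dg G u w ≤ F.card := by
  unfold dg
  calc ∑ z ∈ Finset.univ.erase u, aw G w z ≤ ∑ z ∈ Finset.univ.erase u, if z ∈ F then (1:ℝ) else 0 := by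
        refine Finset.sum_le_sum fun z hz => ?_
        unfold aw
        by_cases hzz : G.Adj w z
        · simp [hzz, h z (Finset.ne_of_mem_erase hz) hzz]
        · simp only [hzz, if_false]; split_ifs <;> norm_num
    _ ≤ ∑ z, if z ∈ F then (1:ℝ) else 0 := by
        refine Finset.sum_le_sum_of_subset_of_nonneg (Finset.subset_univ _) fun z _ _ => ?_
        split_ifs <;> norm_num
    _ = F.card := by simp

theorem two_parts_deg {V : Type*} [Fintype V] {G : SimpleGraph V} {u : V} (hG : ¬ HasEDC G 3)
    (hu : ∀ v, v ≠ u → G.Adj u v) {a b c d e f : V}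
    (hn : [u, a, b, c, d, e, f].Nodup) (h1 : G.Adj a b) (h2 : G.Adj c d) (h3 : G.Adj a e)
    (h4 : G.Adj c f) :
    (∀ v, v ≠ u → dg G u v ≤ 4) ∧ ∑ w ∈ Finset.univ.erase u, dg G u w ≤ 12 ∧
      ∑ w ∈ Finset.univ.erase u, dg G u w ^ 2 ≤ 30 := by
  have hp := two_parts hG hu hn h1 h2 h3 h4
  have hd0 : ∀ v, 0 ≤ dg G u v := fun v => Finset.sum_nonneg fun z _ => aw_nonneg G v z
  have h2' : ∀ v, v ≠ u → dg G u v ≤ 2 := by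
    intro v hv
    have : ∃ y z : V, ∀ w, w ≠ u → G.Adj v w → w ∈ ({y, z} : Finset V) := by
      by_cases hh : ∃ w, w ≠ u ∧ G.Adj v w
      · obtain ⟨w, hw, hvw⟩ := hh
        simp only [List.nodup_cons, List.mem_cons, List.not_mem_nil, not_or, or_false] at hn
        rcases hp v w hv hw hvw with h | h | h | h | h | h
        · exact ⟨b, e, fun w' hw' hvw' => by have := hp v w' hv hw' hvw'; simp only [Finset.mem_insert, Finset.mem_singleton]; grind⟩
        · exact ⟨a, e, fun w' hw' hvw' => by have := hp v w' hv hw' hvw'; simp only [Finset.mem_insert, Finset.mem_singleton]; grind⟩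
        · exact ⟨a, b, fun w' hw' hvw' => by have := hp v w' hv hw' hvw'; simp only [Finset.mem_insert, Finset.mem_singleton]; grind⟩
        · exact ⟨d, f, fun w' hw' hvw' => by have := hp v w' hv hw' hvw'; simp only [Finset.mem_insert, Finset.mem_singleton]; grind⟩
        · exact ⟨c, f, fun w' hw' hvw' => by have := hp v w' hv hw' hvw'; simp only [Finset.mem_insert, Finset.mem_singleton]; grind⟩
        · exact ⟨c, d, fun w' hw' hvw' => by have := hp v w' hv hw' hvw'; simp only [Finset.mem_insert, Finset.mem_singleton]; grind⟩
      · push Not at hh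
        exact ⟨a, a, fun w hw hvw => absurd hvw (hh w hw)⟩
    obtain ⟨y, z, hyz⟩ := this
    refine (dg_le _ hyz).trans ?_
    exact_mod_cast Finset.card_le_two
  set S : Finset V := {a, b, c, d, e, f} with hS
  have hS6 : (S.card : ℝ) ≤ 6 := by exact_mod_cast Finset.card_le_six
  have h0 : ∀ v, v ≠ u → v ∉ S → dg G u v = 0 := by
    intro v hv hvS
    refine le_antisymm ?_ (hd0 v)
    have := dg_le (G := G) (u := u) (w := v) ∅ (by
      intro z hz hvz
      exfalso
      have := hp v z hv hz hvz
      simp only [hS, Finset.mem_insert, Finset.mem_singleton, not_or] at hvS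
      grind)
    simpa using this
  refine ⟨fun v hv => (h2' v hv).trans (by norm_num), ?_, ?_⟩
  · calc ∑ w ∈ Finset.univ.erase u, dg G u w ≤ ∑ w ∈ Finset.univ.erase u, if w ∈ S then (2:ℝ) else 0 := by
          refine Finset.sum_le_sum fun z hz => ?_
          split_ifs with hzS
          · exact h2' z (Finset.ne_of_mem_erase hz)
          · exact (h0 z (Finset.ne_of_mem_erase hz) hzS).le
      _ ≤ ∑ w, if w ∈ S then (2:ℝ) else 0 := by
          refine Finset.sum_le_sum_of_subset_of_nonneg (Finset.subset_univ _) fun z _ _ => ?_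
          split_ifs <;> norm_num
      _ ≤ 12 := by simp; linarith
  · calc ∑ w ∈ Finset.univ.erase u, dg G u w ^ 2 ≤ ∑ w ∈ Finset.univ.erase u, if w ∈ S then (4:ℝ) else 0 := by
          refine Finset.sum_le_sum fun z hz => ?_
          split_ifs with hzS
          · have := h2' z (Finset.ne_of_mem_erase hz)
            have := hd0 z
            nlinarith
          · rw [h0 z (Finset.ne_of_mem_erase hz) hzS]; norm_num
      _ ≤ ∑ w, if w ∈ S then (4:ℝ) else 0 := by
          refine Finset.sum_le_sum_of_subset_of_nonneg (Finset.subset_univ _) fun z _ _ => ?_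
          split_ifs <;> norm_num
      _ ≤ 30 := by simp; linarith

set_option maxHeartbeats 1000000 in
/-- either few relevant vertices or small degrees -/
theorem struct {V : Type*} [Fintype V] {G : SimpleGraph V} {u : V} (hG : ¬ HasEDC G 3)
    (hu : ∀ v, v ≠ u → G.Adj u v) :
    ((Finset.univ.filter fun v => v ≠ u ∧ ∃ w, w ≠ u ∧ G.Adj v w).card ≤ 5) ∨
    ((∀ v, v ≠ u → dg G u v ≤ 4) ∧ ∑ w ∈ Finset.univ.erase u, dg G u w ≤ 12 ∧
      ∑ w ∈ Finset.univ.erase u, dg G u w ^ 2 ≤ 30) := by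
  set W := Finset.univ.filter fun v => v ≠ u ∧ ∃ w, w ≠ u ∧ G.Adj v w with hW
  by_cases hc : W.card ≤ 5
  · exact Or.inl hc
  right
  push Not at hc
  have hWm : ∀ v, v ∈ W ↔ v ≠ u ∧ ∃ w, w ≠ u ∧ G.Adj v w := by intro v; simp [hW]
  by_cases hdis : ∃ a b c d, [u, a, b, c, d].Nodup ∧ G.Adj a b ∧ G.Adj c d
  · obtain ⟨a, b, c, d, hn, hab, hcd⟩ := hdis
    have h2 : 1 < (W \ {a, b, c, d}).card := by
      have h1 := Finset.le_card_sdiff ({a, b, c, d} : Finset V) W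
      have h2 : ({a, b, c, d} : Finset V).card ≤ 4 := Finset.card_le_four
      omega
    obtain ⟨e, he, f, hf, hef⟩ := Finset.one_lt_card.mp h2
    rw [Finset.mem_sdiff, hWm] at he hf
    simp only [Finset.mem_insert, Finset.mem_singleton, not_or] at he hf
    obtain ⟨⟨heu, y, hyu, hey⟩, he'⟩ := he
    obtain ⟨⟨hfu, z, hzu, hfz⟩, hf'⟩ := hf
    have hy : ∀ e y, e ≠ u → y ≠ u → G.Adj e y → (¬ e = a ∧ ¬ e = b ∧ ¬ e = c ∧ ¬ e = d) →
        y = a ∨ y = b ∨ y = c ∨ y = d := by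
      intro e y heu hyu hey he'
      by_contra hw'
      simp only [not_or] at hw'
      have := hey.ne
      exact pat_match hG hu (a := a) (b := b) (c := c) (d := d) (e := e) (f := y) (by simp at hn ⊢; grind) hab hcd hey
    have m1 := fun x y (hx : G.Adj e x) (hy : G.Adj f y) (hn) => pat_match hG hu (a := e) (b := x) (c := f) (d := y) (e := c) (f := d) hn hx hy hcd
    have m2 := fun x y (hx : G.Adj e x) (hy : G.Adj f y) (hn) => pat_match hG hu (a := e) (b := x) (c := f) (d := y) (e := a) (f := b) hn hx hy hab
    rcases hy e y heu hyu hey he' with rfl | rfl | rfl | rfl <;>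
      rcases hy f z hfu hzu hfz hf' with rfl | rfl | rfl | rfl
    · exact (pat_star hG hu (a := z) (b := b) (c := c) (d := d) (e := e) (f := f) (by simp at hn ⊢; grind) hab hey.symm hfz.symm hcd).elim
    · exact (m1 _ _ hey hfz (by simp at hn ⊢; grind)).elim
    · exact two_parts_deg hG hu (a := y) (b := b) (c := z) (d := d) (e := e) (f := f) (by simp at hn ⊢; grind) hab hcd hey.symm hfz.symm
    · exact two_parts_deg hG hu (a := y) (b := b) (c := z) (d := c) (e := e) (f := f) (by simp at hn ⊢; grind) hab hcd.symm hey.symm hfz.symm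
    · exact (m1 _ _ hey hfz (by simp at hn ⊢; grind)).elim
    · exact (pat_star hG hu (a := z) (b := a) (c := c) (d := d) (e := e) (f := f) (by simp at hn ⊢; grind) hab.symm hey.symm hfz.symm hcd).elim
    · exact two_parts_deg hG hu (a := y) (b := a) (c := z) (d := d) (e := e) (f := f) (by simp at hn ⊢; grind) hab.symm hcd hey.symm hfz.symm
    · exact two_parts_deg hG hu (a := y) (b := a) (c := z) (d := c) (e := e) (f := f) (by simp at hn ⊢; grind) hab.symm hcd.symm hey.symm hfz.symm
    · exact two_parts_deg hG hu (a := y) (b := d) (c := z) (d := b) (e := e) (f := f) (by simp at hn ⊢; grind) hcd hab hey.symm hfz.symm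
    · exact two_parts_deg hG hu (a := y) (b := d) (c := z) (d := a) (e := e) (f := f) (by simp at hn ⊢; grind) hcd hab.symm hey.symm hfz.symm
    · exact (pat_star hG hu (a := z) (b := d) (c := a) (d := b) (e := e) (f := f) (by simp at hn ⊢; grind) hcd hey.symm hfz.symm hab).elim
    · exact (m2 _ _ hey hfz (by simp at hn ⊢; grind)).elim
    · exact two_parts_deg hG hu (a := y) (b := c) (c := z) (d := b) (e := e) (f := f) (by simp at hn ⊢; grind) hcd.symm hab hey.symm hfz.symm
    · exact two_parts_deg hG hu (a := y) (b := c) (c := z) (d := a) (e := e) (f := f) (by simp at hn ⊢; grind) hcd.symm hab.symm hey.symm hfz.symm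
    · exact (m2 _ _ hey hfz (by simp at hn ⊢; grind)).elim
    · exact (pat_star hG hu (a := z) (b := c) (c := a) (d := b) (e := e) (f := f) (by simp at hn ⊢; grind) hcd.symm hey.symm hfz.symm hab).elim
  · exfalso
    push Not at hdis
    obtain ⟨a, ha⟩ : W.Nonempty := Finset.card_pos.mp (by omega)
    rw [hWm] at ha
    obtain ⟨hau, b, hbu, hab⟩ := ha
    have hne := hab.ne
    have h4 : 3 < (W \ {a, b}).card := by
      have h1 := Finset.le_card_sdiff ({a, b} : Finset V) W
      have h2 : ({a, b} : Finset V).card ≤ 2 := Finset.card_le_two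
      omega
    obtain ⟨S, hS, hS4⟩ := Finset.exists_subset_card_eq (show 4 ≤ (W \ {a, b}).card from h4)
    obtain ⟨c, d, e, f, h1, h2, h3, h4, h5, h6, rfl⟩ := Finset.card_eq_four.mp hS4
    have hq : ∀ x ∈ ({c, d, e, f} : Finset V), x ≠ u ∧ x ≠ a ∧ x ≠ b ∧ (G.Adj a x ∨ G.Adj b x) := by
      intro x hx
      have := hS hx
      rw [Finset.mem_sdiff, hWm] at this
      simp only [Finset.mem_insert, Finset.mem_singleton, not_or] at this
      obtain ⟨⟨hxu, y, hyu, hxy⟩, hxa, hxb⟩ := this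
      refine ⟨hxu, hxa, hxb, ?_⟩
      by_contra hno
      simp only [not_or] at hno
      have h1 : y ≠ a := by rintro rfl; exact hno.1 hxy.symm
      have h2 : y ≠ b := by rintro rfl; exact hno.2 hxy.symm
      have := hxy.ne
      exact hdis a b x y (by simp; grind) hab hxy
    have hx : ∀ x ∈ ({c, d, e, f} : Finset V), ∀ y ∈ ({c, d, e, f} : Finset V), x ≠ y → G.Adj a x → G.Adj b y → False := by
      intro x hx y hy hxy h1 h2
      have := hq x hx
      have := hq y hy
      exact hdis a x b y (by simp; grind) h1 h2
    have qc := hq c (by simp)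
    have qd := hq d (by simp)
    have qe := hq e (by simp)
    have qf := hq f (by simp)
    have xcd := hx c (by simp) d (by simp) h1
    have xdc := hx d (by simp) c (by simp) h1.symm
    have xce := hx c (by simp) e (by simp) h2
    have xec := hx e (by simp) c (by simp) h2.symm
    have xcf := hx c (by simp) f (by simp) h3
    have xfc := hx f (by simp) c (by simp) h3.symm
    have hall : (G.Adj a c ∧ G.Adj a d ∧ G.Adj a e ∧ G.Adj a f) ∨ (G.Adj b c ∧ G.Adj b d ∧ G.Adj b e ∧ G.Adj b f) := by
      rcases qc.2.2.2 with hc | hc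
      · exact Or.inl ⟨hc, qd.2.2.2.resolve_right (xcd hc), qe.2.2.2.resolve_right (xce hc),
          qf.2.2.2.resolve_right (xcf hc)⟩
      · exact Or.inr ⟨hc, qd.2.2.2.resolve_left (fun h => xdc h hc),
          qe.2.2.2.resolve_left (fun h => xec h hc), qf.2.2.2.resolve_left (fun h => xfc h hc)⟩
    rcases hall with ⟨k1, k2, k3, k4⟩ | ⟨k1, k2, k3, k4⟩
    · exact pat_star5 hG hu (a := a) (b := b) (c := c) (d := d) (e := e) (f := f) (by simp; grind) hab k1 k2 k3 k4
    · exact pat_star5 hG hu (a := b) (b := a) (c := c) (d := d) (e := e) (f := f) (by simp; grind) hab.symm k1 k2 k3 k4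

theorem exists_bits (b : Fin 10 → Prop) :
    ∃ m < 1024, ∀ t : Fin 10, m.testBit t.val = true ↔ b t := by
  refine ⟨Nat.ofBits (fun t : Fin 10 => decide (b t)), ?_, ?_⟩
  · have := Nat.ofBits_lt_two_pow (fun t : Fin 10 => decide (b t))
    norm_num at this ⊢
    exact this
  · intro t
    rw [Nat.testBit_ofBits_lt _ _ t.2]
    simp

theorem exists_mask {V : Type*} (G : SimpleGraph V) (f : Fin 5 → V) :
    ∃ m < 1024, ∀ i j, madj m i j = true ↔ G.Adj (f i) (f j) := by
  obtain ⟨m, hm, h⟩ := exists_bits (fun t : Fin 10 => G.Adj (f ((![0,0,1,0,1,2,0,1,2,3] : Fin 10 → Fin 5) t))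
    (f ((![1,2,2,3,3,3,4,4,4,4] : Fin 10 → Fin 5) t)))
  refine ⟨m, hm, ?_⟩
  have hlt : ∀ i j : Fin 5, i < j → (madj m i j = true ↔ G.Adj (f i) (f j)) := by
    intro i j hij
    unfold madj
    rw [Bool.and_eq_true, bne_iff_ne, and_iff_right hij.ne]
    fin_cases i <;> fin_cases j <;> first
      | exact absurd hij (by decide)
      | exact h 0
      | exact h 1
      | exact h 2
      | exact h 3
      | exact h 4
      | exact h 5
      | exact h 6
      | exact h 7
      | exact h 8
      | exact h 9
  have hsymm : ∀ i j, madj m i j = madj m j i := by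
    have : ∀ i j, code i j = code j i := by decide
    intro i j
    unfold madj
    rw [this, bne_comm]
  intro i j
  rcases lt_trichotomy i j with hij | rfl | hij
  · exact hlt i j hij
  · simp [madj]
  · rw [hsymm, hlt j i hij, G.adj_comm]

theorem dg_mask {V : Type*} [Fintype V] {G : SimpleGraph V} {u : V} (f : Fin 5 → V)
    (hf : Function.Injective f) (hfu : ∀ i, f i ≠ u)
    (hc : ∀ v w, v ≠ u → w ≠ u → G.Adj v w → v ∈ Set.range f) (F : V → ℝ)
    (hF : ∀ v, v ≠ u → v ∉ Set.range f → F v = 0) :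
    ∑ w ∈ Finset.univ.erase u, F w = ∑ i, F (f i) := by
  rw [← Finset.sum_image (s := Finset.univ) (g := f) (f := F) (fun a _ b _ h => hf h)]
  symm
  apply Finset.sum_subset
  · intro v hv
    obtain ⟨i, -, rfl⟩ := Finset.mem_image.mp hv
    simp [hfu i]
  · intro v hv hv'
    refine hF v (Finset.ne_of_mem_erase hv) ?_
    rintro ⟨i, rfl⟩
    exact hv' (Finset.mem_image_of_mem _ (Finset.mem_univ _))

theorem five_case {V : Type*} [Fintype V] {G : SimpleGraph V} {u : V} (hG : ¬ HasEDC G 3)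
    (hu : ∀ v, v ≠ u → G.Adj u v) (f : Fin 5 → V)
    (hf : Function.Injective f) (hfu : ∀ i, f i ≠ u)
    (hc : ∀ v w, v ≠ u → w ≠ u → G.Adj v w → v ∈ Set.range f) :
    ((∀ v, v ≠ u → dg G u v ≤ 4) ∧
      ((∑ w ∈ Finset.univ.erase u, dg G u w ≤ 10 ∧ ∑ w ∈ Finset.univ.erase u, dg G u w ^ 2 ≤ 40) ∨
      (∑ w ∈ Finset.univ.erase u, dg G u w ≤ 12 ∧ ∑ w ∈ Finset.univ.erase u, dg G u w ^ 2 ≤ 30))) ∨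
    ∃ a b c d e : Fin 5, [a, b, c, d, e].Nodup ∧ G.Adj (f a) (f b) ∧ G.Adj (f a) (f c) ∧
      G.Adj (f a) (f d) ∧ G.Adj (f a) (f e) ∧ G.Adj (f b) (f c) ∧ G.Adj (f d) (f e) ∧
      ¬ G.Adj (f b) (f d) ∧ ¬ G.Adj (f b) (f e) ∧ ¬ G.Adj (f c) (f d) ∧ ¬ G.Adj (f c) (f e) := by
  obtain ⟨m, hm, hadj⟩ := exists_mask G f
  have hne : ∀ {i j}, G.Adj (f i) (f j) → i ≠ j := by
    rintro i j h rfl; exact h.ne rfl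
  have hch := chk m hm
  rw [Bool.or_eq_true, Bool.or_eq_true, Bool.or_eq_true] at hch
  rcases hch with h | h | h | h
  · left
    have hz : ∀ v, v ≠ u → v ∉ Set.range f → dg G u v = 0 := by
      intro v hv hvr
      unfold dg
      refine Finset.sum_eq_zero fun z hz => ?_
      unfold aw
      rw [if_neg]
      exact fun h => hvr (hc v z hv (Finset.ne_of_mem_erase hz) h)
    have haw : ∀ i j, aw G (f i) (f j) = ((madj m i j).toNat : ℝ) := by
      intro i j
      unfold aw
      by_cases hij : G.Adj (f i) (f j)
      · rw [if_pos hij, (hadj i j).mpr hij]; simp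
      · have : madj m i j = false := by
          rw [← Bool.not_eq_true, hadj]; exact hij
        rw [if_neg hij, this]; simp
    have hd : ∀ i, dg G u (f i) = (mdeg m i : ℝ) := by
      intro i
      unfold dg
      rw [dg_mask f hf hfu hc]
      · rw [Fin.sum_univ_five]
        simp only [haw, mdeg]
        push_cast
        rfl
      · intro v hv hvr
        unfold aw
        rw [if_neg]
        exact fun h => hvr (hc v (f i) hv (hfu i) h.symm)
    have e1 : ∑ w ∈ Finset.univ.erase u, dg G u w = (D1 m : ℝ) := by
      rw [dg_mask f hf hfu hc _ hz, Fin.sum_univ_five]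
      simp only [hd, D1]
      push_cast
      rfl
    have e2 : ∑ w ∈ Finset.univ.erase u, dg G u w ^ 2 = (D2 m : ℝ) := by
      rw [dg_mask f hf hfu hc _ (fun v hv hvr => by rw [hz v hv hvr]; norm_num), Fin.sum_univ_five]
      simp only [hd, D2]
      push_cast
      rfl
    refine ⟨?_, ?_⟩
    · intro v hv
      by_cases hvr : v ∈ Set.range f
      · obtain ⟨i, rfl⟩ := hvr
        have : dg G u (f i) ≤ ((Finset.univ.image f).erase (f i)).card := by
          refine dg_le _ fun z hz hiz => ?_
          obtain ⟨j, rfl⟩ := hc z (f i) hz hv hiz.symm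
          exact Finset.mem_erase.mpr ⟨hiz.ne.symm, Finset.mem_image_of_mem _ (Finset.mem_univ _)⟩
        rw [Finset.card_erase_of_mem (Finset.mem_image_of_mem _ (Finset.mem_univ _)),
          Finset.card_image_of_injective _ hf] at this
        norm_num at this
        exact this
      · rw [hz v hv hvr]; norm_num
    · rw [e1, e2]
      unfold small at h
      rw [Bool.or_eq_true, Bool.and_eq_true, Bool.and_eq_true, Nat.ble_eq, Nat.ble_eq, Nat.ble_eq, Nat.ble_eq] at h
      rcases h with ⟨h1, h2⟩ | ⟨h1, h2⟩
      · left; exact ⟨by exact_mod_cast h1, by exact_mod_cast h2⟩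
      · right; exact ⟨by exact_mod_cast h1, by exact_mod_cast h2⟩
  · exfalso
    simp only [bullB, List.any_eq_true, Bool.and_eq_true, bne_iff_ne, hadj] at h
    obtain ⟨a, -, b, -, hab, c, -, hac, hbc, d, -, had, hbd, hcd, e, -, hbe, hae, hce, hde⟩ := h
    have n1 := hne hab
    have n2 := hne hac
    have n3 := hne hbc
    have n4 := hne had
    have n5 := hne hbe
    refine pat_bull hG hu ?_ hab hac hbc had hbe
    have := fun i => (hfu i).symm
    simp [hf.eq_iff, *]
  · exfalso
    simp only [k4B, List.any_eq_true, Bool.and_eq_true, hadj] at h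
    obtain ⟨a, -, b, -, hab, c, -, hac, hbc, d, -, had, hbd, hcd⟩ := h
    have n1 := hne hab
    have n2 := hne hac
    have n3 := hne hbc
    have n4 := hne had
    have n5 := hne hbd
    have n6 := hne hcd
    refine pat_k4 hG hu ?_ hab hac hbc had hbd hcd
    have := fun i => (hfu i).symm
    simp [hf.eq_iff, *]
  · right
    simp only [f2B, List.any_eq_true, Bool.and_eq_true, bne_iff_ne, Bool.not_eq_true', ← Bool.not_eq_true, hadj] at h
    obtain ⟨a, -, b, -, hab, c, -, hac, hbc, d, -, had, hbd, hcd, hbd', hcd', e, -, hae, hde, hbe, hce, hbe', hce'⟩ := h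
    refine ⟨a, b, c, d, e, ?_, hab, hac, had, hae, hbc, hde, hbd', hbe', hcd', hce'⟩
    have n1 := hne hab
    have n2 := hne hac
    have n3 := hne hbc
    have n4 := hne had
    have n5 := hne hae
    have n6 := hne hde
    simp [*]

theorem build_iso {V : Type*} [Fintype V] {G : SimpleGraph V} {u : V} (k : ℕ)
    (hk : Fintype.card V = k + 6)
    (hu : ∀ v, v ≠ u → G.Adj u v) (g : Fin 5 → V)
    (hg : Function.Injective g) (hgu : ∀ i, g i ≠ u)
    (hc : ∀ v w, v ≠ u → w ≠ u → G.Adj v w → v ∈ Set.range g)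
    (hp : ∀ i j : Fin 5, G.Adj (g i) (g j) ↔
      ((i.val = 0 ∧ 1 ≤ j.val ∧ j.val ≤ 4) ∨ (i.val = 1 ∧ j.val = 2) ∨ (i.val = 3 ∧ j.val = 4)) ∨
    ((j.val = 0 ∧ 1 ≤ i.val ∧ i.val ≤ 4) ∨ (j.val = 1 ∧ i.val = 2) ∨ (j.val = 3 ∧ i.val = 4))) :
    Nonempty (G ≃g joinK1 (f2PlusIsolated (k + 5))) := by
  set p : Option (Fin (k + 5)) → V := fun v => v.elim u (fun i => if h : i.val < 5 then g ⟨i.val, h⟩ else u) with hpdef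
  set s : Finset (Option (Fin (k + 5))) := Finset.univ.filter fun v => v.elim True (fun i => i.val < 5) with hs
  have hcard : Fintype.card (Option (Fin (k + 5))) = (Finset.univ : Finset V).card := by
    simp [hk]
  have hpn : p none = u := rfl
  have hps : ∀ i : Fin (k+5), ∀ h : i.val < 5, p (some i) = g ⟨i.val, h⟩ := by
    intro i h; simp [hpdef, h]
  have hinj : Set.InjOn p s := by
    intro v hv w hw hvw
    have hv' : v.elim True (fun i => i.val < 5) := by simpa [hs] using hv
    have hw' : w.elim True (fun i => i.val < 5) := by simpa [hs] using hw
    rcases v with _ | i <;> rcases w with _ | j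
    · rfl
    · simp only [Option.elim_some] at hw'
      rw [hpn, hps j hw'] at hvw
      exact absurd hvw.symm (hgu _)
    · simp only [Option.elim_some] at hv'
      rw [hpn, hps i hv'] at hvw
      exact absurd hvw (hgu _)
    · simp only [Option.elim_some] at hv' hw'
      rw [hps i hv', hps j hw'] at hvw
      have := hg hvw
      simp only [Fin.mk.injEq] at this
      rw [Fin.ext this]
  obtain ⟨e, he⟩ := Finset.exists_equiv_extend_of_card_eq hcard (Finset.subset_univ (s.image p)) hinj
  have hen : (e none : V) = u := by rw [he none (by simp [hs]), hpn]
  have hes : ∀ i : Fin (k+5), ∀ h : i.val < 5, (e (some i) : V) = g ⟨i.val, h⟩ := by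
    intro i h
    rw [he (some i) (by simp [hs, h]), hps i h]
  have heinj : ∀ x y, (e x : V) = e y → x = y := fun x y h => e.injective (Subtype.ext h)
  have heu : ∀ i, (e (some i) : V) ≠ u := by
    intro i h
    rw [← hen] at h
    exact absurd (heinj _ _ h) (by simp)
  have hbig : ∀ i : Fin (k+5), ¬ i.val < 5 → (e (some i) : V) ∉ Set.range g := by
    rintro i hi ⟨j, hj⟩
    have h1 := hes ⟨j.val, by omega⟩ j.2
    have : (e (some i) : V) = e (some ⟨j.val, by omega⟩) := by rw [h1, ← hj]
    have := heinj _ _ this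
    simp only [Option.some.injEq] at this
    rw [this] at hi
    exact hi j.2
  set E : Option (Fin (k + 5)) ≃ V := e.trans (Equiv.subtypeUnivEquiv (by simp)) with hE
  have hEe : ∀ x, E x = (e x : V) := fun x => rfl
  refine ⟨RelIso.symm ⟨E, ?_⟩⟩
  intro x y
  rw [hEe, hEe]
  rcases x with _ | i <;> rcases y with _ | j
  · simp
  · rw [hen]
    exact iff_of_true (hu _ (heu j)) (join_none _ _)
  · rw [hen]
    exact iff_of_true (hu _ (heu i)).symm (join_none _ _).symm
  · rw [join_some, f2_adj]
    by_cases hi : i.val < 5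
    · by_cases hj : j.val < 5
      · rw [hes i hi, hes j hj, hp]
      · refine iff_of_false (fun h => hbig j hj (hc _ _ (heu j) (heu i) h.symm)) (by omega)
    · refine iff_of_false (fun h => hbig i hi (hc _ _ (heu i) (heu j) h)) (by omega)

theorem main_max {V : Type*} [Fintype V] [Nonempty V] {G : SimpleGraph V} (k : ℕ)
    (hk : Fintype.card V = k + 6) (hk2 : 46656 ≤ k + 6) (hG : ¬ HasEDC G 3)
    (hmax : ∀ G' : SimpleGraph V, ¬ HasEDC G' 3 → specRad G' ≤ specRad G)
    (hT : specRad (joinK1 (f2PlusIsolated (k + 5))) ≤ specRad G) :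
    Nonempty (G ≃g joinK1 (f2PlusIsolated (k + 5))) := by
  have hlow : Real.sqrt (k + 5) ≤ specRad G := by
    have := join_lower (f2PlusIsolated (k + 5))
    simp only [Fintype.card_fin] at this
    push_cast at this
    linarith
  have hkr : (46656 : ℝ) ≤ k + 6 := by exact_mod_cast hk2
  have hρ : 215 ≤ specRad G := by
    refine le_trans ?_ hlow
    apply Real.le_sqrt_of_sq_le
    linarith
  have hn : (Fintype.card V : ℝ) ≤ specRad G ^ 2 + 1 := by
    rw [hk]
    have h1 : Real.sqrt (k + 5) ^ 2 = k + 5 := Real.sq_sqrt (by positivity)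
    have h2 := pow_le_pow_left₀ (Real.sqrt_nonneg _) hlow 2
    push_cast
    linarith
  obtain ⟨-, y, hy0, hyn, hye⟩ := specRad_spec G
  obtain ⟨u, hu⟩ := Finite.exists_max y
  have hyu : 0 < y u := by
    obtain ⟨v, hv⟩ := Function.ne_iff.mp hy0
    exact lt_of_lt_of_le (lt_of_le_of_ne (hyn v) (Ne.symm hv)) (hu v)
  set x : V → ℝ := fun v => y v / y u with hx
  have hx0 : ∀ v, 0 ≤ x v := fun v => div_nonneg (hyn v) hyu.le
  have hx1 : ∀ v, x v ≤ 1 := fun v => (div_le_one hyu).mpr (hu v)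
  have hxu : x u = 1 := div_self hyu.ne'
  have hxe : ∀ v, adjOp G x v = specRad G * x v := by
    intro v
    rw [hx]
    simp only
    rw [← mul_div_assoc, ← hye v, adjOp_aw, adjOp_aw, Finset.sum_div]
    exact Finset.sum_congr rfl fun w _ => by ring
  have hadj : ∀ v, v ≠ u → G.Adj u v := fun v hv =>
    dominate hG hmax x hx0 hx1 u hxu hxe hρ hn v hv
  have hup := upper k hk (specRad G) hρ hT x hx0 u hxu hxe hadj
  rcases struct hG hadj with hc | ⟨h4, h12⟩
  · set W := Finset.univ.filter fun v => v ≠ u ∧ ∃ w, w ≠ u ∧ G.Adj v w with hW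
    have hWs : W ⊆ Finset.univ.erase u := by
      intro v hv
      simp only [hW, Finset.mem_filter] at hv
      simp [hv.2.1]
    have hUc : (Finset.univ.erase u).card = k + 5 := by
      rw [Finset.card_erase_of_mem (Finset.mem_univ _), Finset.card_univ, hk]; rfl
    obtain ⟨S, hWS, hSU, hS5⟩ := Finset.exists_subsuperset_card_eq hWs hc (show 5 ≤ _ by omega)
    set f : Fin 5 → V := fun i => ((S.equivFinOfCardEq hS5).symm i : V) with hf
    have hfinj : Function.Injective f := fun i j h =>
      (S.equivFinOfCardEq hS5).symm.injective (Subtype.ext h)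
    have hfu : ∀ i, f i ≠ u := fun i =>
      Finset.ne_of_mem_erase (hSU ((S.equivFinOfCardEq hS5).symm i).2)
    have hcov : ∀ v w, v ≠ u → w ≠ u → G.Adj v w → v ∈ Set.range f := by
      intro v w hv hw hvw
      have hvS : v ∈ S := hWS (by simp only [hW, Finset.mem_filter]; exact ⟨Finset.mem_univ _, hv, w, hw, hvw⟩)
      exact ⟨S.equivFinOfCardEq hS5 ⟨v, hvS⟩, by simp [hf]⟩
    rcases five_case hG hadj f hfinj hfu hcov with ⟨h4, hD⟩ | ⟨a, b, c, d, e, hn, h1, h2, h3, h4, h5, h6, n1, n2, n3, n4⟩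
    · exact (hup h4 hD).elim
    · have hti : Function.Injective ![a, b, c, d, e] := by
        have := (List.nodup_ofFn (f := ![a, b, c, d, e])).mp (by simpa [List.ofFn_succ] using hn)
        exact this
      refine build_iso k hk hadj (f ∘ ![a, b, c, d, e]) (hfinj.comp hti) (fun i => hfu _) ?_ ?_
      · intro v w hv hw hvw
        obtain ⟨i, rfl⟩ := hcov v w hv hw hvw
        obtain ⟨j, rfl⟩ := Finite.surjective_of_injective hti i
        exact ⟨j, rfl⟩
      · intro i j
        have n1' : ¬ G.Adj (f d) (f b) := fun h => n1 (G.adj_symm h)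
        have n2' : ¬ G.Adj (f e) (f b) := fun h => n2 (G.adj_symm h)
        have n3' : ¬ G.Adj (f d) (f c) := fun h => n3 (G.adj_symm h)
        have n4' : ¬ G.Adj (f e) (f c) := fun h => n4 (G.adj_symm h)
        clear_value f
        clear hf
        fin_cases i <;> fin_cases j <;> simp [n1, n2, n3, n4, n1', n2', n3', n4', h1, h2, h3, h4, h5, h6, h1.symm, h2.symm, h3.symm, h4.symm, h5.symm, h6.symm]
  · exact (hup h4 (Or.inr h12)).elim

theorem final_aux {V : Type*} [Fintype V] [Nonempty V] {G : SimpleGraph V} (k : ℕ)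
    (hk : Fintype.card V = k + 6) (hk2 : 46656 ≤ k + 6) (hG : ¬ HasEDC G 3)
    (hT : specRad (joinK1 (f2PlusIsolated (k + 5))) ≤ specRad G) :
    Nonempty (G ≃g joinK1 (f2PlusIsolated (k + 5))) := by
  obtain ⟨G₀, h0, hmax⟩ := Set.exists_max_image {G' : SimpleGraph V | ¬ HasEDC G' 3} specRad
    (Set.toFinite _) ⟨G, hG⟩
  have h1 : specRad G ≤ specRad G₀ := hmax G hG
  obtain ⟨i⟩ := main_max k hk hk2 h0 hmax (hT.trans h1)
  have h2 := specRad_iso i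
  refine main_max k hk hk2 hG (fun G' hG' => ?_) hT
  exact (hmax G' hG').trans (h2.le.trans hT)

theorem spectral_extremal_k3 (n : ℕ) (hn : 46656 ≤ n) {V : Type*} [Fintype V]
    (hV : Fintype.card V = n) (G : SimpleGraph V) (hG : phi G ≤ 2) :
    specRad G ≤ specRad (joinK1 (f2PlusIsolated (n - 1))) ∧
    (specRad G = specRad (joinK1 (f2PlusIsolated (n - 1))) ↔
      Nonempty (G ≃g joinK1 (f2PlusIsolated (n - 1)))) := by
  obtain ⟨k, rfl⟩ : ∃ k, n = k + 6 := ⟨n - 6, by omega⟩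
  have e : k + 6 - 1 = k + 5 := rfl
  rw [e]
  have : Nonempty V := Fintype.card_pos_iff.mp (by omega)
  have hG3 := not_hasEDC_of_phi hG
  have key := final_aux k hV hn hG3
  refine ⟨?_, fun h => key h.ge, fun ⟨i⟩ => specRad_iso i⟩
  by_contra hlt
  push Not at hlt
  obtain ⟨i⟩ := key hlt.le
  exact hlt.ne' (specRad_iso i)

end PaperEDC
end

section
/- For every integer k ≥ 2, the join of a single vertex with the complete bipartite graph K_{2,2k−3} satisfies φ(K1∇K_{2,2k−3}) = k−1; that is, K1∇K_{2,2k−3} contains k−1 pairwise edge-disjoint cycles but not k. -/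
open scoped Classical

namespace PaperEDC

lemma adj_iff {n : ℕ} (x y : Option (Fin 2 ⊕ Fin n)) :
    (joinK1 (completeBipartiteGraph (Fin 2) (Fin n))).Adj x y ↔
      (x = none ∧ y ≠ none) ∨ (y = none ∧ x ≠ none) ∨
      (∃ i j, x = some (Sum.inl i) ∧ y = some (Sum.inr j)) ∨
      (∃ i j, x = some (Sum.inr j) ∧ y = some (Sum.inl i)) := by
  rcases x with _ | (x | x) <;> rcases y with _ | (y | y) <;>
    simp [joinK1, SimpleGraph.fromRel_adj, -Fin.exists_fin_two]

lemma two_nbrs {V : Type*} {G : SimpleGraph V} {v x : V} (p : G.Walk v v) (hp : p.IsCycle)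
    (hx : x ∈ p.support) : ∃ y z, y ≠ z ∧ s(x, y) ∈ p.edges ∧ s(x, z) ∈ p.edges := by
  have h := hp.ncard_neighborSet_toSubgraph_eq_two hx
  obtain ⟨y, z, hyz, h⟩ := Set.ncard_eq_two.mp h
  refine ⟨y, z, hyz, ?_, ?_⟩
  · have : y ∈ p.toSubgraph.neighborSet x := by rw [h]; simp
    simpa [SimpleGraph.Subgraph.mem_neighborSet, SimpleGraph.Walk.adj_toSubgraph_iff_mem_edges] using this
  · have : z ∈ p.toSubgraph.neighborSet x := by rw [h]; simp
    simpa [SimpleGraph.Subgraph.mem_neighborSet, SimpleGraph.Walk.adj_toSubgraph_iff_mem_edges] using this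

/-- Tokens used by a cycle. -/
noncomputable def tok {n : ℕ} {v : Option (Fin 2 ⊕ Fin n)}
    (p : (joinK1 (completeBipartiteGraph (Fin 2) (Fin n))).Walk v v) : Finset (Fin 2 ⊕ Fin n) :=
  Finset.univ.filter fun t =>
    (∃ i, t = Sum.inl i ∧ s(some (Sum.inl i), none) ∈ p.edges) ∨
    (∃ j, t = Sum.inr j ∧ some (Sum.inr j) ∈ p.support)

lemma nbr_inr {n : ℕ} {j : Fin n} {y : Option (Fin 2 ⊕ Fin n)}
    (h : (joinK1 (completeBipartiteGraph (Fin 2) (Fin n))).Adj (some (Sum.inr j)) y) :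
    y = none ∨ y = some (Sum.inl 0) ∨ y = some (Sum.inl 1) := by
  rw [adj_iff] at h
  rcases y with _ | (y | y)
  · simp
  · fin_cases y <;> simp
  · simp at h

lemma exists_left {n : ℕ} {v : Option (Fin 2 ⊕ Fin n)}
    (p : (joinK1 (completeBipartiteGraph (Fin 2) (Fin n))).Walk v v) (hp : p.IsCycle) :
    ∃ i, some (Sum.inl i) ∈ p.support := by
  have key : ∀ j : Fin n, some (Sum.inr j) ∈ p.support → ∃ i, some (Sum.inl i) ∈ p.support := by
    intro j hj
    obtain ⟨y, z, hyz, hy, hz⟩ := two_nbrs p hp hj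
    have hy' := nbr_inr (p.adj_of_mem_edges hy)
    have hz' := nbr_inr (p.adj_of_mem_edges hz)
    have hy2 := p.snd_mem_support_of_mem_edges hy
    have hz2 := p.snd_mem_support_of_mem_edges hz
    rcases hy' with rfl | rfl | rfl
    · rcases hz' with rfl | rfl | rfl
      · exact absurd rfl hyz
      · exact ⟨_, hz2⟩
      · exact ⟨_, hz2⟩
    · exact ⟨_, hy2⟩
    · exact ⟨_, hy2⟩
  have hv := p.start_mem_support
  obtain ⟨y, z, hyz, hy, hz⟩ := two_nbrs p hp hv
  have hy1 := p.adj_of_mem_edges hy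
  have hy2 := p.snd_mem_support_of_mem_edges hy
  rcases v with _ | (v | v)
  · rcases y with _ | (y | y)
    · exact absurd hy1 (by simp)
    · exact ⟨_, hy2⟩
    · exact key _ hy2
  · exact ⟨_, hv⟩
  · exact key _ hv

lemma tok_card {n : ℕ} {v : Option (Fin 2 ⊕ Fin n)}
    (p : (joinK1 (completeBipartiteGraph (Fin 2) (Fin n))).Walk v v) (hp : p.IsCycle) :
    2 ≤ (tok p).card := by
  obtain ⟨i, hi⟩ := exists_left p hp
  obtain ⟨y, z, hyz, hy, hz⟩ := two_nbrs p hp hi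
  have key : ∀ y, s(some (Sum.inl i), y) ∈ p.edges →
      (y.getD (Sum.inl i)) ∈ tok p ∧ (y = none ∨ ∃ j, y = some (Sum.inr j)) := by
    intro y hy
    have hy1 := p.adj_of_mem_edges hy
    have hy2 := p.snd_mem_support_of_mem_edges hy
    rw [adj_iff] at hy1
    rcases y with _ | (y | y)
    · simp [tok, hy, -Fin.exists_fin_two]
    · simp at hy1
    · simp [tok, hy2]
  obtain ⟨hy1, hy2⟩ := key y hy
  obtain ⟨hz1, hz2⟩ := key z hz
  refine Finset.one_lt_card.mpr ⟨_, hy1, _, hz1, ?_⟩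
  rcases hy2 with rfl | ⟨j, rfl⟩ <;> rcases hz2 with rfl | ⟨j', rfl⟩ <;> simp_all

lemma upper_s13 {n m : ℕ} (h : HasEDC (joinK1 (completeBipartiteGraph (Fin 2) (Fin n))) m) :
    2 * m ≤ n + 2 := by
  obtain ⟨c, hc, hd⟩ := h
  have hdis : ∀ i ∈ (Finset.univ : Finset (Fin m)), ∀ j ∈ (Finset.univ : Finset (Fin m)), i ≠ j →
      Disjoint (tok (c i).2) (tok (c j).2) := by
    intro i _ j _ hij
    rw [Finset.disjoint_left]
    intro t ht ht'
    simp only [tok, Finset.mem_filter, Finset.mem_univ, true_and] at ht ht'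
    rcases t with t | t
    · simp [-Fin.exists_fin_two] at ht ht'
      exact hd i j hij _ ht ht'
    · simp [-Fin.exists_fin_two] at ht ht'
      obtain ⟨y, z, hyz, hy, hz⟩ := two_nbrs _ (hc i) ht
      obtain ⟨y', z', hyz', hy', hz'⟩ := two_nbrs _ (hc j) ht'
      have h1 := nbr_inr ((c i).2.adj_of_mem_edges hy)
      have h2 := nbr_inr ((c i).2.adj_of_mem_edges hz)
      have h3 := nbr_inr ((c j).2.adj_of_mem_edges hy')
      have h4 := nbr_inr ((c j).2.adj_of_mem_edges hz')
      have d := hd i j hij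
      have n1 : y ≠ y' := by rintro rfl; exact d _ hy hy'
      have n2 : y ≠ z' := by rintro rfl; exact d _ hy hz'
      have n3 : z ≠ y' := by rintro rfl; exact d _ hz hy'
      have n4 : z ≠ z' := by rintro rfl; exact d _ hz hz'
      clear hy hz hy' hz'
      grind
  have h1 := Finset.card_biUnion hdis
  have h2 : ∑ i : Fin m, 2 ≤ ∑ i : Fin m, (tok (c i).2).card :=
    Finset.sum_le_sum fun i _ => tok_card _ (hc i)
  have h3 := Finset.card_le_univ (Finset.univ.biUnion fun i => tok (c i).2)
  simp at h2 h3
  omega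

lemma lower (k : ℕ) (hk : 2 ≤ k) :
    HasEDC (joinK1 (completeBipartiteGraph (Fin 2) (Fin (2 * k - 3)))) (k - 1) := by
  have key : ∀ i : Fin (k - 1),
      ∃ c : Σ v, (joinK1 (completeBipartiteGraph (Fin 2) (Fin (2 * k - 3)))).Walk v v,
        c.2.IsCycle ∧ ∀ e ∈ c.2.edges,
          (∀ j : Fin (2 * k - 3), some (Sum.inr j) ∈ e → (j.val + 1) / 2 = i.val) ∧
          ((∀ j : Fin (2 * k - 3), some (Sum.inr j) ∉ e) → i.val = 0) := by
    rintro ⟨i, hi⟩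
    by_cases h0 : i = 0
    · subst h0
      have a1 : (joinK1 (completeBipartiteGraph (Fin 2) (Fin (2 * k - 3)))).Adj
        none (some (Sum.inl 0)) := by simp [adj_iff]
      have a2 : (joinK1 (completeBipartiteGraph (Fin 2) (Fin (2 * k - 3)))).Adj
        (some (Sum.inl 0)) (some (Sum.inr ⟨0, by omega⟩)) := by simp [adj_iff]
      have a3 : (joinK1 (completeBipartiteGraph (Fin 2) (Fin (2 * k - 3)))).Adj
        (some (Sum.inr ⟨0, by omega⟩)) none := by simp [adj_iff]
      refine ⟨⟨none, .cons a1 (.cons a2 (.cons a3 .nil))⟩, ?_, ?_⟩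
      · simp [SimpleGraph.Walk.cons_isCycle_iff]
      · simp
    · have a1 : (joinK1 (completeBipartiteGraph (Fin 2) (Fin (2 * k - 3)))).Adj
        (some (Sum.inl 0)) (some (Sum.inr ⟨2 * i - 1, by omega⟩)) := by simp [adj_iff]
      have a2 : (joinK1 (completeBipartiteGraph (Fin 2) (Fin (2 * k - 3)))).Adj
        (some (Sum.inr ⟨2 * i - 1, by omega⟩)) (some (Sum.inl 1)) := by simp [adj_iff]
      have a3 : (joinK1 (completeBipartiteGraph (Fin 2) (Fin (2 * k - 3)))).Adj
        (some (Sum.inl 1)) (some (Sum.inr ⟨2 * i, by omega⟩)) := by simp [adj_iff]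
      have a4 : (joinK1 (completeBipartiteGraph (Fin 2) (Fin (2 * k - 3)))).Adj
        (some (Sum.inr ⟨2 * i, by omega⟩)) (some (Sum.inl 0)) := by simp [adj_iff]
      have e1 : (2 * i - 1 + 1) / 2 = i := by omega
      have e2 : (2 * i + 1) / 2 = i := by omega
      have e3 : 2 * i - 1 ≠ 2 * i := by omega
      refine ⟨⟨_, .cons a1 (.cons a2 (.cons a3 (.cons a4 .nil)))⟩, ?_, ?_⟩
      · simp [SimpleGraph.Walk.cons_isCycle_iff, e3, e3.symm]
      · simp [e1, e2]
  choose c hc hq using key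
  refine ⟨c, hc, fun i j hij e he he' => hij ?_⟩
  obtain ⟨h1, h2⟩ := hq i e he
  obtain ⟨h3, h4⟩ := hq j e he'
  apply Fin.ext
  by_cases h : ∃ t : Fin (2 * k - 3), some (Sum.inr t) ∈ e
  · obtain ⟨t, ht⟩ := h
    rw [← h1 t ht, ← h3 t ht]
  · push Not at h
    rw [h2 h, h4 h]

/-- For `k ≥ 2`, `φ(K₁ ∇ K_{2,2k-3}) = k - 1`: it contains `k-1` pairwise edge-disjoint
cycles but not `k`. -/
theorem phi_joinK1_completeBipartite (k : ℕ) (hk : 2 ≤ k) :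
    phi (joinK1 (completeBipartiteGraph (Fin 2) (Fin (2 * k - 3)))) = k - 1 ∧
    HasEDC (joinK1 (completeBipartiteGraph (Fin 2) (Fin (2 * k - 3)))) (k - 1) ∧
    ¬ HasEDC (joinK1 (completeBipartiteGraph (Fin 2) (Fin (2 * k - 3)))) k := by
  refine ⟨?_, lower k hk, fun h => by have := upper_s13 h; omega⟩
  apply IsGreatest.csSup_eq
  refine ⟨lower k hk, fun m hm => ?_⟩
  have := upper_s13 hm
  omega

end PaperEDC
end

section
/- For every integer k ≥ 4 and every n ≥ 2k, the graph K1∇(K_{2,2k−3} ∪ (n−2k)K₁), obtained by joining a new vertex to the disjoint union of K_{2,2k−3} and n−2k isolated vertices, is a simple graph on n vertices with a dominating vertex, with exactly n+4k−7 edges, and containing no k pairwise edge-disjoint cycles; in particular, it has more than n+3k−4 edges. -/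
open scoped Classical

namespace PaperEDC

/-- The disjoint union `K_{2,2k-3} ∪ (n-2k)K₁`. -/
def completeBipartitePlusIsolated (k n : ℕ) :
    SimpleGraph ((Fin 2 ⊕ Fin (2 * k - 3)) ⊕ Fin (n - 2 * k)) :=
  SimpleGraph.fromRel fun a b =>
    ∃ x y, a = Sum.inl (Sum.inl x) ∧ b = Sum.inl (Sum.inr y)

abbrev GG (k n : ℕ) := joinK1 (completeBipartitePlusIsolated k n)

abbrev VV (k n : ℕ) := (Fin 2 ⊕ Fin (2 * k - 3)) ⊕ Fin (n - 2 * k)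

lemma gg_none_some (k n : ℕ) (v : VV k n) : (GG k n).Adj none (some v) := by
  simp [joinK1]

lemma gg_some_some (k n : ℕ) (u v : VV k n) :
    (GG k n).Adj (some u) (some v) ↔
      (∃ x y, u = Sum.inl (Sum.inl x) ∧ v = Sum.inl (Sum.inr y)) ∨
      (∃ x y, v = Sum.inl (Sum.inl x) ∧ u = Sum.inl (Sum.inr y)) := by
  rcases u with (u | u) | u <;> rcases v with (v | v) | v <;>
    simp [joinK1, completeBipartitePlusIsolated] <;> omega

def va {k n : ℕ} (x : Fin 2) : Option (VV k n) := some (Sum.inl (Sum.inl x))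
def vb {k n : ℕ} (y : Fin (2 * k - 3)) : Option (VV k n) := some (Sum.inl (Sum.inr y))
def vi {k n : ℕ} (y : Fin (n - 2 * k)) : Option (VV k n) := some (Sum.inr y)

lemma adj_a {k n : ℕ} {x : Fin 2} {v} (h : (GG k n).Adj (va x) v) :
    v = none ∨ ∃ y, v = vb y := by
  rcases v with _ | v
  · simp
  · have := (gg_some_some k n _ _).1 h
    simp [vb] at this ⊢
    exact this

lemma adj_b {k n : ℕ} {x : Fin (2 * k - 3)} {v} (h : (GG k n).Adj (vb x) v) :
    v = none ∨ v = va 0 ∨ v = va 1 := by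
  rcases v with _ | v
  · simp
  · have := (gg_some_some k n _ _).1 h
    rcases this with ⟨x, y, h1, h2⟩ | ⟨i, y, rfl, h2⟩
    · simp at h1
    · fin_cases i <;> simp [va]

lemma adj_i {k n : ℕ} {x : Fin (n - 2 * k)} {v} (h : (GG k n).Adj (vi x) v) :
    v = none := by
  rcases v with _ | v
  · simp
  · have := (gg_some_some k n _ _).1 h
    simp at this

lemma vcases {k n : ℕ} (v : Option (VV k n)) :
    v = none ∨ (∃ x, v = va x) ∨ (∃ y, v = vb y) ∨ ∃ z, v = vi z := by
  rcases v with _ | ((x | y) | z) <;> simp [va, vb, vi]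

lemma cyc_other {V : Type*} {G : SimpleGraph V} {u : V} (w : G.Walk u u) (hw : w.IsCycle)
    {a b : V} (h : w.toSubgraph.Adj a b) : ∃ c, c ≠ b ∧ w.toSubgraph.Adj a c := by
  have h2 := hw.ncard_neighborSet_toSubgraph_eq_two
    (w.mem_verts_toSubgraph.1 h.fst_mem)
  obtain ⟨c, hc, hne⟩ := Set.exists_ne_of_one_lt_ncard (by omega : 1 < (w.toSubgraph.neighborSet a).ncard) b
  exact ⟨c, hne, hc⟩

lemma ecard_GG (k n : ℕ) (hk : 4 ≤ k) (hn : 2 * k ≤ n) : ecard (GG k n) = n + 4 * k - 7 := by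
  let f : VV k n ⊕ (Fin 2 × Fin (2 * k - 3)) → (GG k n).edgeSet := fun t => match t with
    | Sum.inl v => ⟨s(none, some v), gg_none_some k n v⟩
    | Sum.inr p => ⟨s(va p.1, vb p.2), (gg_some_some k n _ _).2 (Or.inl ⟨p.1, p.2, rfl, rfl⟩)⟩
  have hf : Function.Bijective f := by
    constructor
    · rintro (u | ⟨x, y⟩) (v | ⟨z, w⟩) h
      all_goals
        have h' := congrArg Subtype.val h
        simpa [f, va, vb] using h'
    · rintro ⟨e, he⟩
      induction e using Sym2.ind with
      | _ u v =>
        have h : (GG k n).Adj u v := he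
        rcases u with _ | u <;> rcases v with _ | v
        · exact absurd h (SimpleGraph.irrefl _)
        · exact ⟨Sum.inl v, rfl⟩
        · exact ⟨Sum.inl u, Subtype.ext Sym2.eq_swap⟩
        · rcases (gg_some_some k n _ _).1 h with ⟨x, y, rfl, rfl⟩ | ⟨x, y, rfl, rfl⟩
          · exact ⟨Sum.inr (x, y), rfl⟩
          · exact ⟨Sum.inr (x, y), Subtype.ext Sym2.eq_swap⟩
  have := Nat.card_congr (Equiv.ofBijective f hf)
  unfold ecard
  rw [← this]
  simp
  omega

lemma two_le {k n : ℕ} {u} (w : (GG k n).Walk u u) (hw : w.IsCycle) :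
    ∃ s t : Fin (2 * k - 3) ⊕ Fin 2, s ≠ t ∧
      ∀ r, r = s ∨ r = t → Sum.elim (fun y => ∃ v, w.toSubgraph.Adj (vb y) v)
        (fun x => w.toSubgraph.Adj none (va x)) r := by
  by_cases h : ∃ x, w.toSubgraph.Adj none (va x)
  · obtain ⟨x, hx⟩ := h
    obtain ⟨c, hc, hac⟩ := cyc_other w hw hx.symm
    rcases adj_a hac.adj_sub with rfl | ⟨y, rfl⟩
    · exact absurd rfl hc
    · refine ⟨Sum.inl y, Sum.inr x, by simp, ?_⟩
      rintro r (rfl | rfl)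
      · exact ⟨_, hac.symm⟩
      · exact hx
  · have key : ∀ y v, w.toSubgraph.Adj (vb y) v → ∃ x, w.toSubgraph.Adj (vb y) (va x) := by
      intro y v hv
      obtain ⟨c, hc, hac⟩ := cyc_other w hw hv
      rcases adj_b hv.adj_sub with rfl | rfl | rfl
      · rcases adj_b hac.adj_sub with rfl | rfl | rfl
        · exact absurd rfl hc
        · exact ⟨_, hac⟩
        · exact ⟨_, hac⟩
      · exact ⟨_, hv⟩
      · exact ⟨_, hv⟩
    have hb : ∃ y v, w.toSubgraph.Adj (vb y) v := by
      obtain ⟨u', v, hv⟩ : ∃ u' v, w.toSubgraph.Adj u' v := by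
        have h2 := hw.ncard_neighborSet_toSubgraph_eq_two w.start_mem_support
        obtain ⟨c, hc⟩ := Set.nonempty_of_ncard_ne_zero
          (by omega : (w.toSubgraph.neighborSet u).ncard ≠ 0)
        exact ⟨u, c, hc⟩
      have hi : ∀ z v, ¬ w.toSubgraph.Adj (vi z) v := by
        intro z v hv
        obtain ⟨c, hc, hac⟩ := cyc_other w hw hv
        exact hc ((adj_i hac.adj_sub).trans (adj_i hv.adj_sub).symm)
      rcases vcases u' with hu | ⟨x, hu⟩ | ⟨y, hu⟩ | ⟨z, hu⟩
      · rw [hu] at hv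
        rcases vcases v with rfl | ⟨x, rfl⟩ | ⟨y, rfl⟩ | ⟨z, rfl⟩
        · exact absurd hv.adj_sub (SimpleGraph.irrefl _)
        · exact absurd ⟨x, hv⟩ h
        · exact ⟨y, _, hv.symm⟩
        · exact absurd hv.symm (hi _ _)
      · rw [hu] at hv
        rcases adj_a hv.adj_sub with rfl | ⟨y, rfl⟩
        · exact absurd ⟨x, hv.symm⟩ h
        · exact ⟨y, _, hv.symm⟩
      · exact ⟨y, v, hu ▸ hv⟩
      · exact absurd (hu ▸ hv) (hi z v)
    obtain ⟨y, v, hv⟩ := hb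
    obtain ⟨x, hx⟩ := key y v hv
    obtain ⟨c, hc, hac⟩ := cyc_other w hw hx.symm
    rcases adj_a hac.adj_sub with rfl | ⟨y', rfl⟩
    · exact absurd ⟨x, hac.symm⟩ h
    · refine ⟨Sum.inl y, Sum.inl y', ?_, ?_⟩
      · intro he
        apply hc
        rw [Sum.inl.inj he]
      · rintro r (rfl | rfl)
        · exact ⟨_, hv⟩
        · exact ⟨_, hac.symm⟩

lemma no_EDC (k n : ℕ) (hk : 4 ≤ k) : ¬ HasEDC (GG k n) k := by
  rintro ⟨c, hc, hd⟩
  have hd' : ∀ i j, i ≠ j → ∀ a b, (c i).2.toSubgraph.Adj a b → ¬ (c j).2.toSubgraph.Adj a b := by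
    intro i j hij a b h1 h2
    rw [SimpleGraph.Walk.adj_toSubgraph_iff_mem_edges] at h1 h2
    exact hd i j hij _ h1 h2
  choose s t hst hr using fun i => two_le (c i).2 (hc i)
  have huniq : ∀ i j (r : Fin (2 * k - 3) ⊕ Fin 2), (r = s i ∨ r = t i) →
      (r = s j ∨ r = t j) → i = j := by
    intro i j r hi hj
    by_contra hij
    have h1 := hr i r hi
    have h2 := hr j r hj
    rcases r with y | x
    · obtain ⟨v, hv⟩ := h1
      obtain ⟨v', hv'⟩ := h2
      obtain ⟨d, hne, hvd⟩ := cyc_other _ (hc i) hv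
      obtain ⟨d', hne', hvd'⟩ := cyc_other _ (hc j) hv'
      have e1 : v ≠ v' := fun e => hd' i j hij _ _ hv (e ▸ hv')
      have e2 : v ≠ d' := fun e => hd' i j hij _ _ hv (e ▸ hvd')
      have e3 : d ≠ v' := fun e => hd' i j hij _ _ hvd (e ▸ hv')
      have e4 : d ≠ d' := fun e => hd' i j hij _ _ hvd (e ▸ hvd')
      have a1 := adj_b hv.adj_sub
      have a2 := adj_b hv'.adj_sub
      have a3 := adj_b hvd.adj_sub
      have a4 := adj_b hvd'.adj_sub
      grind
    · exact hd' i j hij _ _ h1 h2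
  let f : Fin k × Bool → Fin (2 * k - 3) ⊕ Fin 2 := fun p => if p.2 then s p.1 else t p.1
  have hf : Function.Injective f := by
    rintro ⟨i, a⟩ ⟨j, b⟩ h
    have hij : i = j := by
      apply huniq i j (f (i, a))
      · cases a <;> simp [f]
      · rw [h]; cases b <;> simp [f]
    subst hij
    have := hst i
    have h2 := this.symm
    cases a <;> cases b
    · rfl
    · exact absurd h (by simpa [f] using h2)
    · exact absurd h (by simpa [f] using this)
    · rfl
  have := Fintype.card_le_of_injective f hf
  simp at this
  omega

/-- For `k ≥ 4` and `n ≥ 2k`, the graph `K₁ ∇ (K_{2,2k-3} ∪ (n-2k)K₁)` has `n` vertices,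
a dominating vertex, exactly `n + 4k - 7` edges, and contains no `k` pairwise
edge-disjoint cycles; in particular it has more than `n + 3k - 4` edges. -/
theorem joinK1_completeBipartitePlus_props (k n : ℕ) (hk : 4 ≤ k) (hn : 2 * k ≤ n) :
    Fintype.card (Option ((Fin 2 ⊕ Fin (2 * k - 3)) ⊕ Fin (n - 2 * k))) = n ∧
    (∃ u, ∀ v, v ≠ u → (joinK1 (completeBipartitePlusIsolated k n)).Adj u v) ∧
    ecard (joinK1 (completeBipartitePlusIsolated k n)) = n + 4 * k - 7 ∧
    ¬ HasEDC (joinK1 (completeBipartitePlusIsolated k n)) k ∧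
    n + 3 * k - 4 < ecard (joinK1 (completeBipartitePlusIsolated k n)) := by
  have he : ecard (joinK1 (completeBipartitePlusIsolated k n)) = n + 4 * k - 7 :=
    ecard_GG k n hk hn
  refine ⟨?_, ⟨none, ?_⟩, he, no_EDC k n hk, ?_⟩
  · simp
    omega
  · intro v hv
    rcases v with _ | v
    · exact absurd rfl hv
    · exact gg_none_some k n v
  · rw [he]
    omega

end PaperEDC
end

section
/- Let d ≥ 2 and g ≥ 3 be integers and let H be a d-regular simple graph whose girth equals g. Then φ(K1∇H) · d · g ≤ e(H) · (d + g − 1); equivalently, φ(K1∇H) ≤ e(H)(1/d + 1/g − 1/(dg)). -/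
open scoped Classical

namespace PaperEDC

/-- inclusion of `H` -/
def incl {V : Type*} (H : SimpleGraph V) : H →g joinK1 H where
  toFun := some
  map_rel' := by
    intro a b h
    simp only [joinK1, SimpleGraph.fromRel_adj]
    exact ⟨by simpa using h.ne, Or.inl (Or.inr ⟨a, b, rfl, rfl, h⟩)⟩

theorem adj_some {V : Type*} (H : SimpleGraph V) (a b : V) :
    (joinK1 H).Adj (some a) (some b) ↔ H.Adj a b := by
  constructor
  · intro h
    simp only [joinK1, SimpleGraph.fromRel_adj] at h
    obtain ⟨_, h | h⟩ := h
    · obtain h | ⟨u, v, h1, h2, h⟩ := h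
      · simp at h
      · cases h1; cases h2; exact h
    · obtain h | ⟨u, v, h1, h2, h⟩ := h
      · simp at h
      · cases h1; cases h2; exact h.symm
  · intro h
    exact (incl H).map_adj h

theorem lift_walk {V : Type*} (H : SimpleGraph V) {a b : Option V} (w : (joinK1 H).Walk a b)
    (hw : none ∉ w.support) : ∀ u v (ha : some u = a) (hb : some v = b),
      ∃ p : H.Walk u v, (p.map (incl H)).copy ha hb = w := by
  induction w with
  | nil =>
    intro u v ha hb
    subst ha
    cases hb
    exact ⟨SimpleGraph.Walk.nil, rfl⟩
  | @cons x y z h p ih =>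
    intro u v ha hb
    subst ha
    subst hb
    rw [SimpleGraph.Walk.support_cons, List.mem_cons, not_or] at hw
    rcases y with _ | y
    · exact absurd p.start_mem_support hw.2
    · obtain ⟨q, hq⟩ := ih hw.2 y v rfl rfl
      refine ⟨SimpleGraph.Walk.cons ((adj_some H u y).1 h) q, ?_⟩
      change q.map (incl H) = p at hq
      subst hq
      rfl

theorem cycle_count {V : Type*} [Fintype V] (g : ℕ) (hg : 3 ≤ g) (H : SimpleGraph V)
    (hgirth : H.girth = g) (x : Option V) (w : (joinK1 H).Walk x x) (hw : w.IsCycle) :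
    2 * g ≤ (g - 1) * (w.edges.toFinset ∩
        Finset.univ.image (fun v : V => s((none : Option V), some v))).card
      + 2 * (w.edges.toFinset ∩ H.edgeFinset.image (Sym2.map some)).card := by
  by_cases hn : none ∈ w.support
  · have hw' := hw.rotate hn
    have he : (w.rotate _ hn).edges.toFinset = w.edges.toFinset := by
      ext e
      simp only [List.mem_toFinset]
      exact (w.rotate_edges _ hn).perm.mem_iff
    rw [← he]
    generalize w.rotate _ hn = c at hw'
    have hA : 2 ≤ (c.edges.toFinset ∩
        Finset.univ.image (fun v : V => s((none : Option V), some v))).card := by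
      have hs := hw'.snd_ne_penultimate
      have h1 := c.adj_snd hw'.not_nil
      have h2 := c.adj_penultimate hw'.not_nil
      have m1 : s(none, c.snd) ∈ c.edges := c.mk_start_snd_mem_edges hw'.not_nil
      have m2 : s(c.penultimate, none) ∈ c.edges := c.mk_penultimate_end_mem_edges hw'.not_nil
      generalize c.snd = a at *
      generalize c.penultimate = b at *
      rcases a with _ | a
      · exact absurd h1 ((joinK1 H).irrefl)
      rcases b with _ | b
      · exact absurd h2 ((joinK1 H).irrefl)
      have : ({s(none, some a), s(none, some b)} : Finset (Sym2 (Option V))).card = 2 := by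
        apply Finset.card_pair
        intro h
        apply hs
        simpa using h
      rw [← this]
      apply Finset.card_le_card
      intro e he
      simp only [Finset.mem_insert, Finset.mem_singleton] at he
      rcases he with rfl | rfl
      · simpa using m1
      · rw [Sym2.eq_swap] at m2
        simpa using m2
    have hB : 1 ≤ (c.edges.toFinset ∩ H.edgeFinset.image (Sym2.map some)).card := by
      apply Finset.card_pos.2
      rcases c with _ | ⟨h, p⟩
      · exact absurd hw' (by simp)
      rename_i a
      rcases a with _ | a
      · exact absurd h ((joinK1 H).irrefl)
      rcases p with _ | ⟨h', q⟩
      rename_i b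
      rcases b with _ | b
      · have := hw'.edges_nodup
        simp [Sym2.eq_swap] at this
      · refine ⟨s(some a, some b), ?_⟩
        rw [adj_some] at h'
        simp only [Finset.mem_inter, Finset.mem_image, List.mem_toFinset]
        refine ⟨by simp, s(a, b), by simpa using h', rfl⟩
    obtain ⟨k, rfl⟩ : ∃ k, g = k + 1 := ⟨g - 1, by omega⟩
    have := Nat.mul_le_mul_left k hA
    simp only [Nat.add_sub_cancel]
    omega
  · rcases x with _ | x
    · exact absurd w.start_mem_support hn
    obtain ⟨p, hp⟩ := lift_walk H w hn x x rfl rfl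
    change p.map (incl H) = w at hp
    have hpc : p.IsCycle := by
      refine (SimpleGraph.Walk.isCycle_map_iff_of_injective (f := incl H)
        (Option.some_injective V)).1 ?_
      exact hp ▸ hw
    have hle : g ≤ p.length := hgirth ▸ hpc.girth_le_length
    have hlen : w.length = p.length :=
      (congrArg SimpleGraph.Walk.length hp).symm.trans (SimpleGraph.Walk.length_map _ _)
    have hedges : w.edges = p.edges.map (Sym2.map some) :=
      (congrArg SimpleGraph.Walk.edges hp).symm.trans (SimpleGraph.Walk.edges_map _ _)
    have : w.edges.toFinset ∩ H.edgeFinset.image (Sym2.map some) = w.edges.toFinset := by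
      apply Finset.inter_eq_left.2
      intro e he
      rw [List.mem_toFinset, hedges, List.mem_map] at he
      obtain ⟨e', he', rfl⟩ := he
      refine Finset.mem_image.2 ⟨e', ?_, rfl⟩
      rw [SimpleGraph.mem_edgeFinset]
      exact p.edges_subset_edgeSet he'
    rw [this, List.toFinset_card_of_nodup hw.edges_nodup, SimpleGraph.Walk.length_edges, hlen]
    omega

theorem edc_bound {V : Type*} [Fintype V] (d g : ℕ) (hd : 2 ≤ d)
    (hg : 3 ≤ g) (H : SimpleGraph V) (hreg : ∀ v : V, Nat.card (H.neighborSet v) = d)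
    (hgirth : H.girth = g) (m : ℕ) (hm : HasEDC (joinK1 H) m) :
    m * d * g ≤ ecard H * (d + g - 1) := by
  obtain ⟨c, hc, hdis⟩ := hm
  have key : ∀ S : Finset (Sym2 (Option V)),
      ∑ i, ((c i).2.edges.toFinset ∩ S).card ≤ S.card := by
    intro S
    rw [← Finset.card_biUnion]
    · apply Finset.card_le_card
      intro e he
      simp only [Finset.mem_biUnion, Finset.mem_inter] at he
      obtain ⟨_, _, _, h⟩ := he
      exact h
    · intro i _ j _ hij
      rw [Function.onFun, Finset.disjoint_left]
      intro e h1 h2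
      simp only [Finset.mem_inter, List.mem_toFinset] at h1 h2
      exact hdis i j hij e h1.1 h2.1
  have hsum := Finset.sum_le_sum (s := Finset.univ) fun i _ =>
    cycle_count g hg H hgirth (c i).1 (c i).2 (hc i)
  rw [Finset.sum_add_distrib, ← Finset.mul_sum, ← Finset.mul_sum, ← Finset.mul_sum] at hsum
  simp only [Finset.sum_const, Finset.card_univ, Fintype.card_fin, smul_eq_mul] at hsum
  have hA := (key (Finset.univ.image (fun v : V => s((none : Option V), some v)))).trans
    Finset.card_image_le
  have hB := (key (H.edgeFinset.image (Sym2.map some))).trans Finset.card_image_le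
  have hE : ecard H = H.edgeFinset.card := by
    rw [ecard, Nat.card_eq_fintype_card, SimpleGraph.edgeFinset_card]
  have hdeg : Fintype.card V * d = 2 * ecard H := by
    rw [hE, ← SimpleGraph.sum_degrees_eq_twice_card_edges]
    have : ∀ v, H.degree v = d := fun v => by
      rw [← hreg v, Nat.card_eq_fintype_card, SimpleGraph.card_neighborSet_eq_degree]
    simp [this]
  rw [← hE] at hB
  rw [Finset.card_univ] at hA
  obtain ⟨k, rfl⟩ : ∃ k, g = k + 1 := ⟨g - 1, by omega⟩
  simp only [Nat.add_sub_cancel] at hsum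
  have h1 : 2 * (m * (k + 1)) ≤ k * Fintype.card V + 2 * ecard H := by
    refine hsum.trans ?_
    gcongr
  have h2 := Nat.mul_le_mul_right d h1
  have h3 : d + (k + 1) - 1 = d + k := by omega
  rw [h3]
  nlinarith

/-- If `H` is `d`-regular (`d ≥ 2`) with girth `g` (`g ≥ 3`), then
`φ(K₁ ∇ H) · d · g ≤ e(H) · (d + g - 1)`. -/
theorem phi_joinK1_regular_girth {V : Type*} [Fintype V] (d g : ℕ) (hd : 2 ≤ d)
    (hg : 3 ≤ g) (H : SimpleGraph V) (hreg : ∀ v : V, Nat.card (H.neighborSet v) = d)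
    (hgirth : H.girth = (g : ℕ∞)) :
    phi (joinK1 H) * d * g ≤ ecard H * (d + g - 1) := by
  have hgi : H.girth = g := by exact_mod_cast hgirth
  by_cases hb : BddAbove {m | HasEDC (joinK1 H) m}
  · have hne : {m | HasEDC (joinK1 H) m}.Nonempty :=
      ⟨0, fun i => i.elim0, fun i => i.elim0, fun i => i.elim0⟩
    exact edc_bound d g hd hg H hreg hgi _ (Nat.sSup_mem hne hb)
  · have : phi (joinK1 H) = 0 := by
      unfold phi
      rw [csSup_of_not_bddAbove hb]
      simp
    simp [this]

end PaperEDC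
end

section
/- Let G be a simple graph on n vertices with a dominating vertex u* such that G contains no 3 pairwise edge-disjoint cycles (φ(G) ≤ 2). Then e(G − u*) ≤ 6, and hence e(G) ≤ n+5. -/
open scoped Classical

namespace PaperEDC

open SimpleGraph

def IsC {V : Type*} (G : SimpleGraph V) (l : List (Sym2 V)) : Prop :=
  ∃ (v : V) (w : G.Walk v v), w.IsCycle ∧ w.edges = l

lemma isC3 {V : Type*} {G : SimpleGraph V} {a b c : V} (h1 : G.Adj a b) (h2 : G.Adj b c)
    (h3 : G.Adj c a) : IsC G [s(a,b), s(b,c), s(c,a)] := by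
  refine ⟨a, .cons h1 (.cons h2 (.cons h3 .nil)), ?_, by simp⟩
  have := h1.ne; have := h2.ne; have := h3.ne
  rw [Walk.cons_isCycle_iff]
  simp [Walk.cons_isPath_iff]
  grind

lemma isC4 {V : Type*} {G : SimpleGraph V} {a b c d : V} (h1 : G.Adj a b) (h2 : G.Adj b c)
    (h3 : G.Adj c d) (h4 : G.Adj d a) (hac : a ≠ c) (hbd : b ≠ d) :
    IsC G [s(a,b), s(b,c), s(c,d), s(d,a)] := by
  refine ⟨a, .cons h1 (.cons h2 (.cons h3 (.cons h4 .nil))), ?_, by simp⟩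
  have := h1.ne; have := h2.ne; have := h3.ne; have := h4.ne
  rw [Walk.cons_isCycle_iff]
  simp [Walk.cons_isPath_iff]
  grind

lemma hasEDC3 {V : Type*} {G : SimpleGraph V} {l1 l2 l3 : List (Sym2 V)} (h1 : IsC G l1)
    (h2 : IsC G l2) (h3 : IsC G l3) (h12 : l1.Disjoint l2) (h13 : l1.Disjoint l3)
    (h23 : l2.Disjoint l3) : HasEDC G 3 := by
  obtain ⟨v1, w1, c1, rfl⟩ := h1
  obtain ⟨v2, w2, c2, rfl⟩ := h2
  obtain ⟨v3, w3, c3, rfl⟩ := h3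
  refine ⟨![⟨v1, w1⟩, ⟨v2, w2⟩, ⟨v3, w3⟩], ?_, ?_⟩
  · intro i; fin_cases i <;> simpa
  · intro i j hij e he he'
    fin_cases i <;> fin_cases j <;> simp at hij he he'
    · exact h12 he he'
    · exact h13 he he'
    · exact h12 he' he
    · exact h23 he he'
    · exact h13 he' he
    · exact h23 he' he

lemma not3 {V : Type*} [Fintype V] {G : SimpleGraph V} (hG : phi G ≤ 2) : ¬ HasEDC G 3 := by
  intro h
  have : BddAbove {m | HasEDC G m} := by
    refine ⟨Fintype.card (Sym2 V), ?_⟩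
    rintro m ⟨c, hc, hd⟩
    have hne : ∀ i, ∃ e, e ∈ (c i).2.edges := by
      intro i
      apply List.exists_mem_of_ne_nil
      intro h0
      have := (hc i).three_le_length
      rw [← Walk.length_edges, h0] at this
      simp at this
    choose f hf using hne
    have hinj : Function.Injective f := by
      intro i j hij
      by_contra hne
      exact hd i j hne _ (hf i) (hij ▸ hf j)
    simpa using Fintype.card_le_of_injective f hinj
  have := le_csSup this h
  unfold phi at hG
  omega

section
variable {V : Type*} {G : SimpleGraph V} {u : V}

/-- three disjoint edges -/
lemma pat1 (hu : ∀ v, v ≠ u → G.Adj u v) (hG : ¬ HasEDC G 3) {a b c d e f : V}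
    (hn : [u,a,b,c,d,e,f].Nodup) (h1 : G.Adj a b) (h2 : G.Adj c d) (h3 : G.Adj e f) : False := by
  simp at hn
  apply hG
  refine hasEDC3 (isC3 (hu a ?_) h1 (hu b ?_).symm) (isC3 (hu c ?_) h2 (hu d ?_).symm)
    (isC3 (hu e ?_) h3 (hu f ?_).symm) ?_ ?_ ?_
  all_goals (simp; grind)

/-- claw and an edge -/
lemma pat2 (hu : ∀ v, v ≠ u → G.Adj u v) (hG : ¬ HasEDC G 3) {a p q r e f : V}
    (hn : [u,a,p,q,r,e,f].Nodup) (h1 : G.Adj a p) (h2 : G.Adj a q) (h3 : G.Adj a r)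
    (h4 : G.Adj e f) : False := by
  simp at hn
  apply hG
  refine hasEDC3 (isC4 (hu p ?_) h1.symm h2 (hu q ?_).symm ?_ ?_) (isC3 (hu a ?_) h3 (hu r ?_).symm)
    (isC3 (hu e ?_) h4 (hu f ?_).symm) ?_ ?_ ?_
  all_goals (simp; grind)

/-- star with five leaves -/
lemma pat3 (hu : ∀ v, v ≠ u → G.Adj u v) (hG : ¬ HasEDC G 3) {a p q r e f : V}
    (hn : [u,a,p,q,r,e,f].Nodup) (h1 : G.Adj a p) (h2 : G.Adj a q) (h3 : G.Adj a r)
    (h4 : G.Adj a e) (h5 : G.Adj a f) : False := by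
  simp at hn
  apply hG
  refine hasEDC3 (isC4 (hu p ?_) h1.symm h2 (hu q ?_).symm ?_ ?_) (isC3 (hu a ?_) h3 (hu r ?_).symm)
    (isC4 (hu e ?_) h4.symm h5 (hu f ?_).symm ?_ ?_) ?_ ?_ ?_
  all_goals (simp; grind)
end

def prs : List (Fin 6 × Fin 6) :=
  [(0, 1), (0, 2), (0, 3), (0, 4), (1, 2), (1, 3), (1, 4), (2, 3), (2, 4), (3, 4)]

abbrev Tri := Fin 6 × Fin 6 × Fin 6

def tb : List (Tri × Tri × Tri) := [
((0, 1, 2), (0, 3, 5), (1, 4, 5)),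
((0, 1, 3), (0, 4, 5), (2, 3, 5)),
((0, 1, 5), (0, 2, 4), (3, 4, 5)),
((0, 2, 5), (1, 2, 3), (3, 4, 5)),
((0, 3, 5), (1, 3, 4), (2, 4, 5)),
((0, 4, 5), (1, 2, 4), (2, 3, 5)),
((0, 1, 2), (1, 3, 5), (2, 4, 5)),
((0, 1, 4), (1, 2, 5), (3, 4, 5)),
((0, 2, 5), (0, 3, 4), (1, 4, 5)),
((0, 3, 5), (1, 2, 5), (2, 3, 4)),
((0, 1, 5), (1, 3, 4), (2, 3, 5)),
((0, 2, 3), (1, 3, 5), (2, 4, 5)),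
((0, 1, 4), (0, 3, 5), (2, 4, 5)),
((0, 1, 2), (0, 4, 5), (2, 3, 5)),
((0, 2, 5), (1, 4, 5), (2, 3, 4)),
((0, 3, 5), (1, 2, 3), (1, 4, 5)),
((0, 1, 3), (0, 4, 5), (1, 2, 5)),
((0, 2, 4), (0, 3, 5), (1, 2, 5)),
((0, 1, 4), (0, 2, 5), (1, 3, 5)),
((0, 1, 5), (1, 2, 3), (2, 4, 5)),
((0, 2, 4), (1, 2, 5), (1, 3, 4))]

def te (t : Tri) : List (Fin 6 × Fin 6) := [(t.1, t.2.1), (t.2.1, t.2.2), (t.1, t.2.2)]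

lemma tb_cover : ∀ a ∈ prs, ∀ b ∈ prs, ∀ c ∈ prs, ∃ t ∈ tb,
    ∀ x ∈ te t.1 ++ te t.2.1 ++ te t.2.2, x ≠ a ∧ x ≠ b ∧ x ≠ c := by
  have h : (prs.all fun a => prs.all fun b => prs.all fun c => tb.any fun t =>
    (te t.1 ++ te t.2.1 ++ te t.2.2).all fun x => x != a && (x != b && x != c)) = true := by
    decide +kernel
  simpa only [List.all_eq_true, List.any_eq_true, Bool.and_eq_true, bne_iff_ne] using h

lemma tb_wf : ∀ t ∈ tb, (∀ x ∈ te t.1 ++ te t.2.1 ++ te t.2.2, x ∈ prs ∨ (x.2 = 5 ∧ x.1 ≠ 5)) ∧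
    (∀ x ∈ te t.1, ∀ y ∈ te t.2.1, x ≠ y ∧ x ≠ y.swap) ∧
    (∀ x ∈ te t.1, ∀ y ∈ te t.2.2, x ≠ y ∧ x ≠ y.swap) ∧
    (∀ x ∈ te t.2.1, ∀ y ∈ te t.2.2, x ≠ y ∧ x ≠ y.swap) := by
  have h : (tb.all fun t =>
    ((te t.1 ++ te t.2.1 ++ te t.2.2).all fun x => prs.contains x || (x.2 == 5 && x.1 != 5)) &&
    (((te t.1).all fun x => (te t.2.1).all fun y => x != y && x != y.swap) &&
    (((te t.1).all fun x => (te t.2.2).all fun y => x != y && x != y.swap) &&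
    ((te t.2.1).all fun x => (te t.2.2).all fun y => x != y && x != y.swap)))) = true := by
    decide +kernel
  simpa only [List.all_eq_true, List.contains_iff_mem, Bool.or_eq_true, Bool.and_eq_true,
    bne_iff_ne, beq_iff_eq] using h

lemma fiveCore {V : Type*} {G : SimpleGraph V} {u : V}
    (hu : ∀ v, v ≠ u → G.Adj u v) (hG : ¬ HasEDC G 3) (w : Fin 6 → V)
    (hw : Function.Injective w) (hw5 : w 5 = u) (a b c : Fin 6 × Fin 6) (ha : a ∈ prs)
    (hb : b ∈ prs) (hc : c ∈ prs)
    (hadj : ∀ x ∈ prs, x ≠ a → x ≠ b → x ≠ c → G.Adj (w x.1) (w x.2)) : False := by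
  obtain ⟨t, ht, hcov⟩ := tb_cover a ha b hb c hc
  obtain ⟨h0, h12, h13, h23⟩ := tb_wf t ht
  have key : ∀ x ∈ te t.1 ++ te t.2.1 ++ te t.2.2, G.Adj (w x.1) (w x.2) := by
    intro x hx
    rcases h0 x hx with h | ⟨h, h'⟩
    · exact hadj x h (hcov x hx).1 (hcov x hx).2.1 (hcov x hx).2.2
    · rw [h, hw5]
      exact (hu _ (by rw [← hw5]; exact fun h => h' (hw h))).symm
  have mk : ∀ s : Tri, (∀ x ∈ te s, G.Adj (w x.1) (w x.2)) →
      IsC G [s(w s.1, w s.2.1), s(w s.2.1, w s.2.2), s(w s.2.2, w s.1)] := by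
    intro s hs
    simp [te] at hs
    exact isC3 hs.1 hs.2.1 hs.2.2.symm
  have dj : ∀ s r : Tri, (∀ x ∈ te s, ∀ y ∈ te r, x ≠ y ∧ x ≠ y.swap) →
      List.Disjoint [s(w s.1, w s.2.1), s(w s.2.1, w s.2.2), s(w s.2.2, w s.1)]
        [s(w r.1, w r.2.1), s(w r.2.1, w r.2.2), s(w r.2.2, w r.1)] := by
    rintro ⟨s1, s2, s3⟩ ⟨r1, r2, r3⟩ h
    simp [te] at h
    simp [hw.eq_iff]
    grind
  exact hG (hasEDC3 (mk _ fun x hx => key x (by simp [hx])) (mk _ fun x hx => key x (by simp [hx]))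
    (mk _ fun x hx => key x (by simp [hx])) (dj _ _ h12) (dj _ _ h13) (dj _ _ h23))

lemma five {V : Type*} [Fintype V] {G : SimpleGraph V} {u : V}
    (hu : ∀ v, v ≠ u → G.Adj u v) (hG : ¬ HasEDC G 3) (w : Fin 6 → V)
    (hw : Function.Injective w) (hw5 : w 5 = u) (E : Finset (Sym2 V)) (hE : 7 ≤ E.card)
    (hEG : ∀ x y, s(x, y) ∈ E → G.Adj x y)
    (hEw : ∀ x y, s(x, y) ∈ E → x ≠ y ∧ (∃ i, i ≠ 5 ∧ w i = x) ∧ (∃ i, i ≠ 5 ∧ w i = y)) : False := by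
  let F := prs.toFinset.filter fun x => s(w x.1, w x.2) ∈ E
  let M := prs.toFinset.filter fun x => ¬ s(w x.1, w x.2) ∈ E
  have hP : prs.toFinset.card = 10 := by
    rw [List.toFinset_card_of_nodup]
    · rfl
    · simp [prs]
  have hsum : F.card + M.card = 10 := by rw [← hP]; exact Finset.card_filter_add_card_filter_not _
  have hall : ∀ i j : Fin 6, i ≠ 5 → j ≠ 5 → i ≠ j → (i, j) ∈ prs ∨ (j, i) ∈ prs := by
    intro i j
    fin_cases i <;> fin_cases j <;> simp [prs]
  have hFE : E.card ≤ F.card := by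
    refine (Finset.card_le_card ?_).trans
      (Finset.card_image_le (s := F) (f := fun x => s(w x.1, w x.2)))
    intro e he
    induction e with | _ x y
    obtain ⟨hne, ⟨i, hi, rfl⟩, ⟨j, hj, rfl⟩⟩ := hEw x y he
    rcases hall i j hi hj (fun h => hne (by rw [h])) with h | h
    · exact Finset.mem_image.2 ⟨(i, j), by simp [F, h, he], rfl⟩
    · refine Finset.mem_image.2 ⟨(j, i), ?_, Sym2.eq_swap⟩
      rw [Sym2.eq_swap] at he
      simp [F, h, he]
  obtain ⟨N, hMN, hNP, hN⟩ := Finset.exists_subsuperset_card_eq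
    (s := M) (t := prs.toFinset) (n := 3) (Finset.filter_subset _ _) (by omega) (by omega)
  obtain ⟨a, b, c, -, -, -, rfl⟩ := Finset.card_eq_three.1 hN
  refine fiveCore hu hG w hw hw5 a b c (by simpa using hNP (by simp : a ∈ _))
    (by simpa using hNP (by simp : b ∈ _)) (by simpa using hNP (by simp : c ∈ _)) ?_
  intro x hx h1 h2 h3
  apply hEG
  by_contra hx'
  have : x ∈ M := by simp [M, hx, hx']
  simpa [h1, h2, h3] using hMN this

/-- five vertices -/
lemma pat5 {V : Type*} [Fintype V] {G : SimpleGraph V} {u : V}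
    (hu : ∀ v, v ≠ u → G.Adj u v) (hG : ¬ HasEDC G 3) {a b c d e : V}
    (hn : [u,a,b,c,d,e].Nodup) (E : Finset (Sym2 V)) (hE : 7 ≤ E.card)
    (hEG : ∀ x y, s(x, y) ∈ E → G.Adj x y)
    (hEw : ∀ x y, s(x, y) ∈ E → x ∈ [a,b,c,d,e]) : False := by
  have h6 : ∀ x ∈ [a,b,c,d,e], ∃ i : Fin 6, i ≠ 5 ∧ ![a,b,c,d,e,u] i = x := by
    intro x hx
    simp at hx
    rcases hx with rfl | rfl | rfl | rfl | rfl
    · exact ⟨0, by decide, rfl⟩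
    · exact ⟨1, by decide, rfl⟩
    · exact ⟨2, by decide, rfl⟩
    · exact ⟨3, by decide, rfl⟩
    · exact ⟨4, by decide, rfl⟩
  refine five hu hG ![a,b,c,d,e,u] ?_ rfl E hE hEG ?_
  · simp at hn
    intro i j hij
    fin_cases i <;> fin_cases j <;> simp at hij ⊢ <;> grind
  · intro x y h
    exact ⟨(hEG x y h).ne, h6 x (hEw x y h), h6 y (hEw y x (by rwa [Sym2.eq_swap]))⟩

set_option maxHeartbeats 4000000 in
lemma main {V : Type*} [Fintype V] {G : SimpleGraph V} {u : V}
    (hu : ∀ v, v ≠ u → G.Adj u v) (hG : ¬ HasEDC G 3) (H : SimpleGraph V)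
    (hH : ∀ x y, H.Adj x y ↔ G.Adj x y ∧ x ≠ u ∧ y ≠ u) : H.edgeFinset.card ≤ 6 := by
  by_contra hcon
  have hE : 7 ≤ H.edgeFinset.card := by omega
  have hle : ∀ x y, H.Adj x y → G.Adj x y := fun x y h => ((hH x y).1 h).1
  have hnu : ∀ x y, H.Adj x y → x ≠ u := fun x y h => ((hH x y).1 h).2.1
  have hsymm : ∀ x y, H.Adj x y → H.Adj y x := fun x y h => h.symm
  have hne : ∀ x y, H.Adj x y → x ≠ y := fun x y h => h.ne
  have p1 : ∀ a b c d e f, H.Adj a b → H.Adj c d → H.Adj e f → [a,b,c,d,e,f].Nodup → False := by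
    intro a b c d e f h1 h2 h3 hn
    refine pat1 hu hG (List.nodup_cons.2 ⟨?_, hn⟩) (hle _ _ h1) (hle _ _ h2) (hle _ _ h3)
    simp; grind
  have p2 : ∀ a p q r e f, H.Adj a p → H.Adj a q → H.Adj a r → H.Adj e f →
      [a,p,q,r,e,f].Nodup → False := by
    intro a b c d e f h1 h2 h3 h4 hn
    refine pat2 hu hG (List.nodup_cons.2 ⟨?_, hn⟩) (hle _ _ h1) (hle _ _ h2) (hle _ _ h3) (hle _ _ h4)
    simp; grind
  have p5 : ∀ a b c d e, [u,a,b,c,d,e].Nodup → ∃ x y, H.Adj x y ∧ x ∉ [a,b,c,d,e] := by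
    intro a b c d e hn
    by_contra! h
    exact pat5 hu hG hn H.edgeFinset hE (fun x y h => hle x y (by simpa using h))
      (fun x y h' => h x y (by simpa using h'))
  -- degree at most four
  have d4 : ∀ a, H.degree a ≤ 4 := by
    intro a
    by_contra! hd
    obtain ⟨s, hs, hs5⟩ := Finset.exists_subset_card_eq (s := H.neighborFinset a) (n := 5) hd
    obtain ⟨p, q, r, e, f, h⟩ : ∃ p q r e f, s = {p,q,r,e,f} ∧ [p,q,r,e,f].Nodup := by
      have hl := s.length_toList
      rw [hs5] at hl
      have hn := s.nodup_toList
      have ht := s.toList_toFinset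
      match hs : s.toList, hl with
      | [p,q,r,e,f], _ =>
        rw [hs] at hn ht
        exact ⟨p,q,r,e,f, by rw [← ht]; simp, hn⟩
    obtain ⟨rfl, hn⟩ := h
    have hA : ∀ x ∈ ({p,q,r,e,f} : Finset V), H.Adj a x := fun x hx => by simpa using hs hx
    simp at hA
    obtain ⟨h1, h2, h3, h4, h5⟩ := hA
    refine pat3 hu hG (a := a) (p := p) (q := q) (r := r) (e := e) (f := f) ?_
      (hle _ _ h1) (hle _ _ h2) (hle _ _ h3) (hle _ _ h4) (hle _ _ h5)
    simp at hn ⊢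
    grind
  -- degree at most three
  have d3 : ∀ a, H.degree a ≤ 3 := by
    intro a
    by_contra! hd
    have hd4 : (H.neighborFinset a).card = 4 := by
      have := d4 a
      rw [card_neighborFinset_eq_degree]; omega
    obtain ⟨p, q, r, s, h1, h2, h3, h4, h5, h6, hs⟩ := Finset.card_eq_four.1 hd4
    have hA : ∀ x, H.Adj a x ↔ x = p ∨ x = q ∨ x = r ∨ x = s := by
      intro x; rw [← mem_neighborFinset, hs]; simp
    have e1 := (hA p).2 (by simp)
    have e2 := (hA q).2 (by simp)
    have e3 := (hA r).2 (by simp)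
    have e4 := (hA s).2 (by simp)
    obtain ⟨x, y, hxy, hx⟩ := p5 a p q r s (by simp; grind)
    simp at hx
    have hya : y ≠ a := by
      rintro rfl
      have := (hA x).1 hxy.symm
      tauto
    have := hne _ _ hxy
    have := hne _ _ e1
    have := hne _ _ e2
    have := hne _ _ e3
    have := hne _ _ e4
    by_cases y = p
    · exact p2 a q r s x y e2 e3 e4 hxy (by simp; grind)
    by_cases y = q
    · exact p2 a p r s x y e1 e3 e4 hxy (by simp; grind)
    by_cases y = r
    · exact p2 a p q s x y e1 e2 e4 hxy (by simp; grind)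
    · exact p2 a p q r x y e1 e2 e3 hxy (by simp; grind)
  -- degree at most two
  have d2 : ∀ a, H.degree a ≤ 2 := by
    intro a
    by_contra! hd
    have hd3 : (H.neighborFinset a).card = 3 := by
      have := d3 a
      rw [card_neighborFinset_eq_degree]; omega
    obtain ⟨p, q, r, hpq, hpr, hqr, hs⟩ := Finset.card_eq_three.1 hd3
    have hA : ∀ x, H.Adj a x ↔ x = p ∨ x = q ∨ x = r := by
      intro x; rw [← mem_neighborFinset, hs]; simp
    -- an outside edge from one of the neighbours
    have core : ∀ p q r : V, p ≠ q → p ≠ r → q ≠ r → (∀ x, H.Adj a x ↔ x = p ∨ x = q ∨ x = r) →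
        ∀ x, x ∉ [a,p,q,r] → H.Adj p x → False := by
      intro p q r hpq hpr hqr hA x hx hpx
      simp at hx
      have e1 := (hA p).2 (by simp)
      have e2 := (hA q).2 (by simp)
      have e3 := (hA r).2 (by simp)
      have := hne _ _ e1
      have := hne _ _ e2
      have := hne _ _ e3
      have hout : ∀ s t, H.Adj s t → s ∉ [a,p,q,r] → t = p ∨ t = q ∨ t = r := by
        intro s t hst hs
        by_contra! ht
        simp at hs
        have hta : t ≠ a := by
          rintro rfl
          have := (hA s).1 hst.symm
          tauto
        exact p2 a p q r s t e1 e2 e3 hst (by have := hne _ _ hst; simp; grind)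
      obtain ⟨y, z, hyz, hy⟩ := p5 a p q r x (by simp; grind)
      simp at hy
      have nq : ∀ x y, x ∉ [a,p,q,r] → y ∉ [a,p,q,r] → x ≠ y → H.Adj p x → H.Adj q y → False := by
        intro x y hx hy hxy h1 h2
        simp at hx hy
        exact p1 p x q y a r h1 h2 e3 (by simp; grind)
      have nr : ∀ x y, x ∉ [a,p,q,r] → y ∉ [a,p,q,r] → x ≠ y → H.Adj p x → H.Adj r y → False := by
        intro x y hx hy hxy h1 h2
        simp at hx hy
        exact p1 p x r y a q h1 h2 e2 (by simp; grind)
      have hx' : x ∉ [a,p,q,r] := by simp; grind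
      have hy' : y ∉ [a,p,q,r] := by simp; grind
      have hpy : H.Adj p y := by
        rcases hout y z hyz hy' with rfl | rfl | rfl
        · exact hyz.symm
        · exact (nq x y hx' hy' (by grind) hpx hyz.symm).elim
        · exact (nr x y hx' hy' (by grind) hpx hyz.symm).elim
      have hpN : ∀ z, H.Adj p z → z = a ∨ z = x ∨ z = y := by
        intro z hz
        by_contra! hz'
        have : ({a, x, y, z} : Finset V).card ≤ (H.neighborFinset p).card := by
          apply Finset.card_le_card
          intro t ht
          simp at ht
          rw [mem_neighborFinset]
          rcases ht with rfl | rfl | rfl | rfl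
          exacts [e1.symm, hpx, hpy, hz]
        rw [Finset.card_eq_of_equiv_fin (n := 4) ?_] at this
        · rw [card_neighborFinset_eq_degree] at this
          have := d3 p
          omega
        · apply Finset.equivFinOfCardEq
          rw [Finset.card_eq_four]
          exact ⟨a, x, y, z, by grind, by grind, by grind, by grind, by grind, by grind, rfl⟩
      have hqN : ∀ z, H.Adj q z → z = a ∨ z = r := by
        intro z hz
        by_contra! hz'
        have hzp : z ≠ p := by
          rintro rfl
          have := hpN q hz.symm
          grind
        have hz'' : z ∉ [a,p,q,r] := by have := hne _ _ hz; simp; grind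
        by_cases hzx : z = x
        · exact nq y z hy' hz'' (by grind) hpy hz
        · exact nq x z hx' hz'' (by grind) hpx hz
      have hrN : ∀ z, H.Adj r z → z = a ∨ z = q := by
        intro z hz
        by_contra! hz'
        have hzp : z ≠ p := by
          rintro rfl
          have := hpN r hz.symm
          grind
        have hz'' : z ∉ [a,p,q,r] := by have := hne _ _ hz; simp; grind
        by_cases hzx : z = x
        · exact nr y z hy' hz'' (by grind) hpy hz
        · exact nr x z hx' hz'' (by grind) hpx hz
      have hsub : H.edgeFinset ⊆ {s(a,p), s(a,q), s(a,r), s(p,x), s(p,y), s(q,r)} := by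
        have h1 : ∀ s t, H.Adj s t → s ∈ [a,p,q,r] →
            s(s,t) ∈ ({s(a,p), s(a,q), s(a,r), s(p,x), s(p,y), s(q,r)} : Finset (Sym2 V)) := by
          intro s t hst hs
          simp at hs
          rcases hs with rfl | rfl | rfl | rfl
          · rcases (hA t).1 hst with rfl | rfl | rfl <;> simp
          · rcases hpN t hst with rfl | rfl | rfl <;> simp
          · rcases hqN t hst with rfl | rfl <;> simp
          · rcases hrN t hst with rfl | rfl <;> simp
        intro e he
        induction e with | _ s t
        have hst : H.Adj s t := by simpa using he
        by_cases hs : s ∈ [a,p,q,r]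
        · exact h1 s t hst hs
        · rw [Sym2.eq_swap (a := s)]
          refine h1 t s hst.symm ?_
          have := hout s t hst hs
          simp; tauto
      have := (Finset.card_le_card hsub).trans Finset.card_le_six
      omega
    have hout : ∀ x, x ∉ [a,p,q,r] → ¬ H.Adj p x ∧ ¬ H.Adj q x ∧ ¬ H.Adj r x := by
      intro x hx
      refine ⟨core p q r hpq hpr hqr hA x hx, core q p r hpq.symm hqr hpr ?_ x ?_,
        core r p q hpr.symm hqr.symm hpq ?_ x ?_⟩
      · intro x; rw [hA]; tauto
      · simp at hx ⊢; tauto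
      · intro x; rw [hA]; tauto
      · simp at hx ⊢; tauto
    have e1 := (hA p).2 (by simp)
    have e2 := (hA q).2 (by simp)
    have e3 := (hA r).2 (by simp)
    have hsub : H.edgeFinset ⊆ {s(a,p), s(a,q), s(a,r), s(p,q), s(p,r), s(q,r)} := by
      intro e he
      induction e with | _ s t
      have hst : H.Adj s t := by simpa using he
      have key : ∀ s t, H.Adj s t → s ∉ [a,p,q,r] → False := by
        intro s t hst hs
        have ho := hout s hs
        have ht : t ≠ a := by
          rintro rfl
          have := (hA s).1 hst.symm
          simp at hs; tauto
        have := hne _ _ e1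
        have := hne _ _ e2
        have := hne _ _ e3
        have := hne _ _ hst
        have := hsymm _ _ hst
        exact p2 a p q r s t e1 e2 e3 hst (by simp at hs ⊢; grind)
      have hs : s ∈ [a,p,q,r] := by by_contra h; exact key _ _ hst h
      have ht : t ∈ [a,p,q,r] := by by_contra h; exact key _ _ hst.symm h
      have := hne _ _ hst
      clear hout key e1 e2 e3 hst p1 p2 p5 core hA he
      simp at hs ht
      rcases hs with rfl | rfl | rfl | rfl <;> rcases ht with rfl | rfl | rfl | rfl <;>
        simp at this ⊢
    have := (Finset.card_le_card hsub).trans Finset.card_le_six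
    omega
  -- greedy matching
  have hinc : ∀ a b, H.Adj a b → (H.incidenceFinset a ∪ H.incidenceFinset b).card ≤ 3 := by
    intro a b hab
    have h1 := Finset.card_union_add_card_inter (H.incidenceFinset a) (H.incidenceFinset b)
    have h2 : 0 < (H.incidenceFinset a ∩ H.incidenceFinset b).card := by
      refine Finset.card_pos.2 ⟨s(a,b), ?_⟩
      simp [mk'_mem_incidenceSet_iff, hab]
    rw [card_incidenceFinset_eq_degree, card_incidenceFinset_eq_degree] at h1
    have := d2 a
    have := d2 b
    omega
  have ex : ∀ S : Finset (Sym2 V), S.card ≤ 6 → ∃ a b, H.Adj a b ∧ s(a,b) ∉ S := by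
    intro S hS
    by_contra! h
    have : H.edgeFinset ⊆ S := by
      intro e he
      induction e with | _ s t
      exact h s t (by simpa using he)
    have := Finset.card_le_card this
    omega
  obtain ⟨a, b, hab, -⟩ := ex ∅ (by simp)
  have i1 := hinc a b hab
  obtain ⟨c, d, hcd, h1⟩ := ex _ (i1.trans (by norm_num))
  have i2 := hinc c d hcd
  obtain ⟨e, f, hef, h2⟩ := ex ((H.incidenceFinset a ∪ H.incidenceFinset b) ∪
    (H.incidenceFinset c ∪ H.incidenceFinset d)) ((Finset.card_union_le _ _).trans (by omega))
  simp [mk'_mem_incidenceSet_iff, hcd, hef] at h1 h2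
  exact p1 a b c d e f hab hcd hef
    (by have := hne _ _ hab; have := hne _ _ hcd; have := hne _ _ hef; simp; grind)

/-- If `G` is an `n`-vertex graph with a dominating vertex `u*` and without `3` pairwise
edge-disjoint cycles, then `e(G - u*) ≤ 6` and hence `e(G) ≤ n + 5`. -/
theorem edge_bound_k3 {V : Type*} [Fintype V] (G : SimpleGraph V) (u : V)
    (hu : ∀ v, v ≠ u → G.Adj u v) (hG : phi G ≤ 2) :
    ecard (G.induce ({u}ᶜ : Set V)) ≤ 6 ∧ ecard G ≤ Fintype.card V + 5 := by
  have hm := main hu (not3 hG) (G.deleteIncidenceSet u) (fun x y => deleteIncidenceSet_adj)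
  have e0 : ∀ {W : Type _} (K : SimpleGraph W) [Fintype K.edgeSet],
      K.edgeFinset.card = ecard K := by
    intro W K _
    rw [ecard, Nat.card_eq_fintype_card, ← edgeFinset_card]
  have h1 := card_edgeFinset_induce_compl_singleton G u
  have h2 := card_edgeFinset_deleteIncidenceSet G u
  have h3 : G.degree u < Fintype.card V := G.degree_lt_card_verts u
  rw [e0] at hm
  rw [e0, e0] at h1 h2
  constructor <;> omega
end PaperEDC
end
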